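/- arXiv:2109.14177 — 5 statements merged into one kernel-verified Lean document; each statement's English description precedes it below -/
import Mathlib

section
/- There exist absolute constants c > 0 and C > 0 such that for every finite set P ⊂ ℝ² with |P| ≥ 2, the set Λ(P) of dot products determined by P satisfies |Λ(P)| ≥ c · |P|^{2/3 + 1/3057} / (log |P|)^C. -/
/-!
Write `N = #P` and `M` for the number of dot products. The proof gives the stronger bound
`M ≥ c * N ^ (325 / 487)` without logarithmic loss.

*Rich lines.* By the crossing lemma (Székely's method, `incidence_bound`), a set of `D` pairwise
non-parallel normal vectors and `n` points whose dot products lie in `M` values satisfies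
`D * n ≪ M ^ 2`. Hence most points of `P` lie on lines through the origin containing at least
`h ≈ N ^ 2 / M ^ 2` points (`rich_slopes`). A line through the origin has at most `M` points, so there
are at least about `N / M` rich lines, and a positive proportion have slopes of one sign; let
`0 < x_0 < ... < x_m` be the absolute values of these slopes.

*Multiplicative structure.* If `A x` is the set of first coordinates on the line of slope `x`, then
`(1 + x * y) * A x * A y` is contained in the set of dot products. With `K = M / h`, Ruzsa's covering
lemma and the Plünnecke–Ruzsa inequality in the multiplicative group of the reals give weights
`f x` for which all `(1 + x * y) * f x * f y` lie in a set `Φ` with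
`#(Φ ^ 4 / Φ ^ 4) ≤ K ^ 80 * M` (`covering`).

*Expansion.* The cross ratios formed from the numbers `1 + x_i * x_j` for consecutive indices are
quotients of neighbouring points of a monotone grid of size about `m ^ 2`. Filling the gaps of that
grid with smaller cross ratios produces at least a constant times `m ^ (5/2)` distinct quotients
(`superquadratic_growth`), because Möbius rigidity keeps the multiplicity of each cross ratio value at
`O(m ^ (3/2))`. The weights `f` cancel in these quotients up to a common factor, so
`m ^ (5/2) ≪ K ^ 80 * M` (`slopes_bound`); inserting `m ≫ N / M` and `K ≪ M ^ 3 / N ^ 2` yields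
`N ^ 325 ≪ M ^ 487`.
-/

open Finset Pointwise

/-- The set of dot products determined by a finite point set `P ⊆ ℝ²`. -/
noncomputable def dotProdSet (P : Finset (ℝ × ℝ)) : Finset ℝ :=
  Finset.image₂ (fun p q : ℝ × ℝ => p.1 * q.1 + p.2 * q.2) P P

/-! ### Plane straight-line graphs -/

/-- Slope of the segment `e`, given as the pair of its left and right endpoint. -/
noncomputable def slopeOf (e : (ℝ × ℝ) × (ℝ × ℝ)) : ℝ := (e.2.2 - e.1.2) / (e.2.1 - e.1.1)

/-- Height at abscissa `x` of the line spanned by the segment `e`. -/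
noncomputable def lineAt (e : (ℝ × ℝ) × (ℝ × ℝ)) (x : ℝ) : ℝ :=
  e.1.2 + slopeOf e * (x - e.1.1)

/-- Distinct segments `e`, `f` share a point interior to both (overlapping segments count as
crossing). -/
def Crosses (e f : (ℝ × ℝ) × (ℝ × ℝ)) : Prop :=
  e ≠ f ∧ ∃ x, e.1.1 < x ∧ x < e.2.1 ∧ f.1.1 < x ∧ x < f.2.1 ∧ lineAt e x = lineAt f x

/-- `E` is a set of non-vertical segments, oriented from left to right, with endpoints in `V` and
no point of `V` in their interiors: a straight-line drawing of a graph. -/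
structure IsGeomGraph (V : Finset (ℝ × ℝ)) (E : Finset ((ℝ × ℝ) × (ℝ × ℝ))) : Prop where
  left_mem : ∀ e ∈ E, e.1 ∈ V
  right_mem : ∀ e ∈ E, e.2 ∈ V
  lt : ∀ e ∈ E, e.1.1 < e.2.1
  not_through : ∀ e ∈ E, ∀ w ∈ V, e.1.1 < w.1 → w.1 < e.2.1 → lineAt e w.1 ≠ w.2

lemma lineAt_left (e : (ℝ × ℝ) × (ℝ × ℝ)) : lineAt e e.1.1 = e.1.2 := by
  simp [lineAt]

lemma lineAt_right {e : (ℝ × ℝ) × (ℝ × ℝ)} (h : e.1.1 < e.2.1) : lineAt e e.2.1 = e.2.2 := by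
  have : e.2.1 - e.1.1 ≠ 0 := by linarith
  simp only [lineAt, slopeOf]
  field_simp
  ring

lemma lineAt_eq_of_right {e : (ℝ × ℝ) × (ℝ × ℝ)} (h : e.1.1 < e.2.1) (x : ℝ) :
    lineAt e x = e.2.2 + slopeOf e * (x - e.2.1) := by
  have h1 := lineAt_right h
  simp only [lineAt] at h1 ⊢
  linear_combination h1

lemma exists_meet {e f : (ℝ × ℝ) × (ℝ × ℝ)} {p q : ℝ} (hpq : p < q)
    (h : (lineAt e p - lineAt f p) * (lineAt e q - lineAt f q) < 0) :
    ∃ x, p < x ∧ x < q ∧ lineAt e x = lineAt f x := by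
  have key : ∀ e f : (ℝ × ℝ) × (ℝ × ℝ), lineAt e p < lineAt f p → lineAt f q < lineAt e q →
      ∃ x, p < x ∧ x < q ∧ lineAt e x = lineAt f x := by
    intro e f h1 h2
    have hc : ContinuousOn (fun x => lineAt e x - lineAt f x) (Set.Icc p q) := by
      unfold lineAt; fun_prop
    obtain ⟨x, hx, hx0⟩ := intermediate_value_Ioo hpq.le hc
      (show (0 : ℝ) ∈ Set.Ioo _ _ from ⟨by linarith, by linarith⟩)
    exact ⟨x, hx.1, hx.2, by simpa [sub_eq_zero] using hx0⟩
  rcases mul_neg_iff.1 h with ⟨h1, h2⟩ | ⟨h1, h2⟩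
  · obtain ⟨x, a, b, c⟩ := key f e (by linarith) (by linarith)
    exact ⟨x, a, b, c.symm⟩
  · exact key e f (by linarith) (by linarith)

/-- Two non-crossing edges keep their vertical order over a common range of abscissae. -/
lemma no_swap {E : Finset ((ℝ × ℝ) × (ℝ × ℝ))} (hN : ∀ e ∈ E, ∀ f ∈ E, ¬ Crosses e f)
    {e f : (ℝ × ℝ) × (ℝ × ℝ)} (he : e ∈ E) (hf : f ∈ E) {p q : ℝ} (hpq : p < q)
    (h1 : e.1.1 ≤ p) (h2 : f.1.1 ≤ p) (h3 : q ≤ e.2.1) (h4 : q ≤ f.2.1) :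
    0 ≤ (lineAt e p - lineAt f p) * (lineAt e q - lineAt f q) := by
  by_contra hcon
  push Not at hcon
  obtain ⟨x, a, b, c⟩ := exists_meet hpq hcon
  refine hN e he f hf ⟨?_, x, by linarith, by linarith, by linarith, by linarith, c⟩
  rintro rfl
  simp at hcon

/-- The point `w` lies strictly above the interior of `e`, and no edge of `E` passes strictly between
the two over the abscissa of `w`. -/
def Sees (E : Finset ((ℝ × ℝ) × (ℝ × ℝ))) (w : ℝ × ℝ) (e : (ℝ × ℝ) × (ℝ × ℝ)) : Prop :=
  e.1.1 < w.1 ∧ w.1 < e.2.1 ∧ lineAt e w.1 < w.2 ∧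
    ∀ f ∈ E, f.1.1 ≤ w.1 → w.1 ≤ f.2.1 → lineAt e w.1 < lineAt f w.1 → w.2 ≤ lineAt f w.1

/-- In a non-crossing drawing each edge `e` has the largest slope at its left endpoint, or the
smallest slope at its right endpoint, or is seen by some vertex. If the first two
fail, then `e` together with the next steeper edge `e₁` at its left endpoint bounds a wedge that
contains a vertex, and the leftmost (then lowest) vertex of that wedge sees `e`. -/
lemma edge_trichotomy {V : Finset (ℝ × ℝ)} {E : Finset ((ℝ × ℝ) × (ℝ × ℝ))}
    (hG : IsGeomGraph V E) (hN : ∀ e ∈ E, ∀ f ∈ E, ¬ Crosses e f)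
    {e : (ℝ × ℝ) × (ℝ × ℝ)} (he : e ∈ E) :
    (∀ f ∈ E, f.1 = e.1 → slopeOf f ≤ slopeOf e) ∨
    (∀ f ∈ E, f.2 = e.2 → slopeOf e ≤ slopeOf f) ∨ ∃ w ∈ V, Sees E w e := by
  classical
  by_contra hcon
  push Not at hcon
  obtain ⟨⟨f₀, hf₀, hf₀1, hf₀s⟩, ⟨e₂, he₂, he₂v, he₂s⟩, hns⟩ := hcon
  obtain ⟨e₁, he₁, hmin⟩ := Finset.exists_min_image
    (E.filter (fun f => f.1 = e.1 ∧ slopeOf e < slopeOf f)) slopeOf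
    ⟨f₀, by simp [hf₀, hf₀1, hf₀s]⟩
  simp only [Finset.mem_filter] at he₁ hmin
  obtain ⟨he₁, he₁u, he₁s⟩ := he₁
  have hlt := hG.lt e he
  have hlt₁ := hG.lt e₁ he₁
  have hlt₂ := hG.lt e₂ he₂
  have c1 : ∀ x, lineAt e₁ x - lineAt e x = (slopeOf e₁ - slopeOf e) * (x - e.1.1) := by
    intro x; simp only [lineAt, he₁u]; ring
  have c2 : ∀ x, lineAt e₂ x - lineAt e x = (slopeOf e - slopeOf e₂) * (e.2.1 - x) := by
    intro x; rw [lineAt_eq_of_right hlt, lineAt_eq_of_right hlt₂, he₂v]; ring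
  have c1' : ∀ x, e.1.1 < x → lineAt e x < lineAt e₁ x := by
    intro x hx
    have := c1 x
    have : 0 < (slopeOf e₁ - slopeOf e) * (x - e.1.1) := mul_pos (by linarith) (by linarith)
    linarith
  have c2' : ∀ x, x < e.2.1 → lineAt e x < lineAt e₂ x := by
    intro x hx
    have := c2 x
    have : 0 < (slopeOf e - slopeOf e₂) * (e.2.1 - x) := mul_pos (by linarith) (by linarith)
    linarith
  have c1u : lineAt e₁ e.1.1 = lineAt e e.1.1 := by have := c1 e.1.1; simp at this; linarith
  have c2v : lineAt e₂ e.2.1 = lineAt e e.2.1 := by have := c2 e.2.1; simp at this; linarith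
  set R := V.filter (fun w => e.1.1 < w.1 ∧ w.1 < e.2.1 ∧ w.1 ≤ e₁.2.1 ∧
    lineAt e w.1 < w.2 ∧ w.2 ≤ lineAt e₁ w.1) with hR
  have hRne : R.Nonempty := by
    by_cases hcase : e₁.2.1 < e.2.1
    · refine ⟨e₁.2, ?_⟩
      have : e.1.1 < e₁.2.1 := by rw [← he₁u]; exact hlt₁
      simp only [hR, Finset.mem_filter]
      refine ⟨hG.right_mem _ he₁, this, hcase, le_refl _, ?_, ?_⟩
      · have := c1' _ this
        rwa [lineAt_right hlt₁] at this
      · rw [lineAt_right hlt₁]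
    · push Not at hcase
      have hz : e₂.1.1 < e.2.1 := by rw [← he₂v]; exact hlt₂
      have h1v := c1' e.2.1 hlt
      have hzu : e.1.1 < e₂.1.1 := by
        by_contra hz'
        push Not at hz'
        have h := no_swap hN he₁ he₂ hlt (by rw [he₁u]) hz' hcase (by rw [he₂v])
        have h3 := c2' e.1.1 hlt
        have : (lineAt e₁ e.1.1 - lineAt e₂ e.1.1) * (lineAt e₁ e.2.1 - lineAt e₂ e.2.1) < 0 :=
          mul_neg_of_neg_of_pos (by linarith) (by linarith)
        linarith
      refine ⟨e₂.1, ?_⟩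
      simp only [hR, Finset.mem_filter]
      refine ⟨hG.left_mem _ he₂, hzu, hz, by linarith, ?_, ?_⟩
      · have := c2' _ hz
        rwa [lineAt_left] at this
      · by_contra hz'
        push Not at hz'
        have h := no_swap hN he₁ he₂ hz (by rw [he₁u]; linarith) le_rfl hcase (by rw [he₂v])
        have : (lineAt e₁ e₂.1.1 - lineAt e₂ e₂.1.1) * (lineAt e₁ e.2.1 - lineAt e₂ e.2.1) < 0 :=
          mul_neg_of_neg_of_pos (by rw [lineAt_left e₂]; linarith) (by linarith)
        linarith
  obtain ⟨w, hwR, hwmin⟩ := Finset.exists_min_image R (fun w => toLex w) hRne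
  have hwR' := hwR
  simp only [hR, Finset.mem_filter] at hwR'
  obtain ⟨hwV, hw1, hw2, hw3, hw4, hw5⟩ := hwR'
  refine hns w hwV ⟨hw1, hw2, hw4, ?_⟩
  intro f hf hfl hfr hef
  by_contra hfw
  push Not at hfw
  have hfe₁ : lineAt f w.1 < lineAt e₁ w.1 := by linarith
  rcases lt_or_ge e.1.1 f.1.1 with ha | ha
  · -- the left endpoint of `f` would be a smaller element of `R`
    have haR : f.1 ∈ R := by
      simp only [hR, Finset.mem_filter]
      refine ⟨hG.left_mem _ hf, ha, by linarith, by linarith, ?_, ?_⟩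
      · have hne := hG.not_through e he f.1 (hG.left_mem _ hf) ha (by linarith)
        rcases lt_or_gt_of_ne hne with h | h
        · exact h
        · exfalso
          have hfw' : f.1.1 < w.1 := by
            rcases hfl.lt_or_eq with h' | h'
            · exact h'
            · rw [← h', lineAt_left] at hef; linarith
          have h6 := no_swap hN hf he hfw' le_rfl ha.le hfr hw2.le
          have : (lineAt f f.1.1 - lineAt e f.1.1) * (lineAt f w.1 - lineAt e w.1) < 0 :=
            mul_neg_of_neg_of_pos (by rw [lineAt_left f]; linarith) (by linarith)
          linarith
      · by_contra h
        push Not at h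
        have hfw' : f.1.1 < w.1 := by
          rcases hfl.lt_or_eq with h' | h'
          · exact h'
          · rw [← h', lineAt_left] at hfe₁; linarith
        have h6 := no_swap hN hf he₁ hfw' le_rfl (by rw [he₁u]; exact ha.le) hfr hw3
        have : (lineAt f f.1.1 - lineAt e₁ f.1.1) * (lineAt f w.1 - lineAt e₁ w.1) < 0 :=
          mul_neg_of_pos_of_neg (by rw [lineAt_left f]; linarith) (by linarith)
        linarith
    have h7 := hwmin _ haR
    rw [Prod.Lex.toLex_le_toLex] at h7
    rcases h7 with h7 | ⟨h7, h8⟩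
    · linarith
    · rw [h7, lineAt_left] at hfw; linarith
  · have hfu : lineAt f e.1.1 = e.1.2 := by
      rcases lt_trichotomy (lineAt f e.1.1) e.1.2 with h | h | h
      · have h6 := no_swap hN hf he hw1 ha le_rfl hfr hw2.le
        have : (lineAt f e.1.1 - lineAt e e.1.1) * (lineAt f w.1 - lineAt e w.1) < 0 :=
          mul_neg_of_neg_of_pos (by rw [lineAt_left e]; linarith) (by linarith)
        linarith
      · exact h
      · have h6 := no_swap hN hf he₁ hw1 ha (by rw [he₁u]) hfr hw3
        have : (lineAt f e.1.1 - lineAt e₁ e.1.1) * (lineAt f w.1 - lineAt e₁ w.1) < 0 :=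
          mul_neg_of_pos_of_neg (by rw [c1u, lineAt_left e]; linarith) (by linarith)
        linarith
    rcases ha.lt_or_eq with ha | ha
    · exact hG.not_through f hf e.1 (hG.left_mem _ he) ha (by linarith) hfu
    · have hfe : f.1 = e.1 := by
        refine Prod.ext ha ?_
        rw [← ha, lineAt_left] at hfu
        exact hfu
      have hpos : 0 < w.1 - e.1.1 := by linarith
      have s1 : slopeOf e < slopeOf f := by
        simp only [lineAt, hfe] at hef
        nlinarith
      have s2 : slopeOf f < slopeOf e₁ := by
        simp only [lineAt, hfe, he₁u] at hfe₁
        nlinarith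
      have := hmin f ⟨hf, hfe, s1⟩
      linarith

/-- Linear bound for plane straight-line graphs, without Euler's formula: each of the three
alternatives of `edge_trichotomy` is met by at most one edge per vertex. -/
theorem card_le_of_noncrossing {V : Finset (ℝ × ℝ)} {E : Finset ((ℝ × ℝ) × (ℝ × ℝ))}
    (hG : IsGeomGraph V E) (hN : ∀ e ∈ E, ∀ f ∈ E, ¬ Crosses e f) : #E ≤ 3 * #V := by
  classical
  set E₁ := E.filter (fun e => ∀ f ∈ E, f.1 = e.1 → slopeOf f ≤ slopeOf e)
  set E₂ := E.filter (fun e => ∀ f ∈ E, f.2 = e.2 → slopeOf e ≤ slopeOf f)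
  set E₃ := E.filter (fun e => ∃ w ∈ V, Sees E w e)
  have hsub : E ⊆ E₁ ∪ E₂ ∪ E₃ := by
    intro e he
    rcases edge_trichotomy hG hN he with h | h | h
    · exact Finset.mem_union_left _ (Finset.mem_union_left _ (Finset.mem_filter.2 ⟨he, h⟩))
    · exact Finset.mem_union_left _ (Finset.mem_union_right _ (Finset.mem_filter.2 ⟨he, h⟩))
    · exact Finset.mem_union_right _ (Finset.mem_filter.2 ⟨he, h⟩)
  have h1 : #E₁ ≤ #V := by
    refine Finset.card_le_card_of_injOn (fun e => e.1) ?_ ?_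
    · intro e he
      exact hG.left_mem e (Finset.mem_filter.1 he).1
    · intro e he f hf hef
      simp only at hef
      obtain ⟨he, he'⟩ := Finset.mem_filter.1 he
      obtain ⟨hf, hf'⟩ := Finset.mem_filter.1 hf
      by_contra hne
      have hs : slopeOf e = slopeOf f := le_antisymm (hf' e he hef) (he' f hf hef.symm)
      have l1 := hG.lt e he
      have l2 := hG.lt f hf
      rw [hef] at l1
      obtain ⟨x, hx1, hx2⟩ := exists_between (lt_min l1 l2)
      rw [lt_min_iff] at hx2
      exact hN e he f hf ⟨hne, x, by rw [hef]; exact hx1, hx2.1, hx1, hx2.2, by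
        simp only [lineAt, hef, hs]⟩
  have h2 : #E₂ ≤ #V := by
    refine Finset.card_le_card_of_injOn (fun e => e.2) ?_ ?_
    · intro e he
      exact hG.right_mem e (Finset.mem_filter.1 he).1
    · intro e he f hf hef
      simp only at hef
      obtain ⟨he, he'⟩ := Finset.mem_filter.1 he
      obtain ⟨hf, hf'⟩ := Finset.mem_filter.1 hf
      by_contra hne
      have hs : slopeOf e = slopeOf f := le_antisymm (he' f hf hef.symm) (hf' e he hef)
      have l1 := hG.lt e he
      have l2 := hG.lt f hf
      have l1' := l1
      rw [hef] at l1
      obtain ⟨x, hx1, hx2⟩ := exists_between (max_lt l1 l2)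
      rw [max_lt_iff] at hx1
      refine hN e he f hf ⟨hne, x, hx1.1, by rw [hef]; exact hx2, hx1.2, hx2, ?_⟩
      rw [lineAt_eq_of_right l1', lineAt_eq_of_right l2, hef, hs]
  have h3 : #E₃ ≤ #V := by
    have : ∀ e ∈ E₃, ∃ w ∈ V, Sees E w e := fun e he => (Finset.mem_filter.1 he).2
    choose! g hg using this
    refine Finset.card_le_card_of_injOn g (fun e he => (hg e he).1) ?_
    intro e he f hf hef
    by_contra hne
    obtain ⟨-, a1, a2, a3, a4⟩ := hg e he
    obtain ⟨-, b1, b2, b3, b4⟩ := hg f hf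
    have he := (Finset.mem_filter.1 he).1
    have hf := (Finset.mem_filter.1 hf).1
    rw [← hef] at b1 b2 b3 b4
    rcases lt_trichotomy (lineAt e (g e).1) (lineAt f (g e).1) with h | h | h
    · have := a4 f hf b1.le b2.le h; linarith
    · exact hN e he f hf ⟨hne, _, a1, a2, b1, b2, h⟩
    · have := b4 e he a1.le a2.le h; linarith
  have := Finset.card_le_card hsub
  have := Finset.card_union_le (E₁ ∪ E₂) E₃
  have := Finset.card_union_le E₁ E₂
  omega

/-! ### The crossing lemma -/

open Classical in
/-- Ordered pairs of crossing edges. -/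
noncomputable def crossPairs (E : Finset ((ℝ × ℝ) × (ℝ × ℝ))) :
    Finset (((ℝ × ℝ) × (ℝ × ℝ)) × ((ℝ × ℝ) × (ℝ × ℝ))) :=
  (E ×ˢ E).filter (fun p => Crosses p.1 p.2)

lemma Crosses.symm {e f : (ℝ × ℝ) × (ℝ × ℝ)} (h : Crosses e f) : Crosses f e := by
  obtain ⟨h, x, a, b, c, d, e⟩ := h
  exact ⟨h.symm, x, c, d, a, b, e.symm⟩

lemma IsGeomGraph.mono {V : Finset (ℝ × ℝ)} {E F : Finset ((ℝ × ℝ) × (ℝ × ℝ))}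
    (hG : IsGeomGraph V E) (h : F ⊆ E) : IsGeomGraph V F :=
  ⟨fun e he => hG.1 e (h he), fun e he => hG.2 e (h he), fun e he => hG.3 e (h he),
    fun e he => hG.4 e (h he)⟩

/-- A maximal non-crossing subset of the edges has at most `3 * #V` elements, and every other edge
crosses one of them. -/
lemma card_le_add_crossPairs {V : Finset (ℝ × ℝ)} {E : Finset ((ℝ × ℝ) × (ℝ × ℝ))}
    (hG : IsGeomGraph V E) : #E ≤ 3 * #V + #(crossPairs E) := by
  classical
  obtain ⟨F, hF, hmax⟩ := Finset.exists_max_image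
    (E.powerset.filter (fun F => ∀ e ∈ F, ∀ f ∈ F, ¬ Crosses e f)) Finset.card
    ⟨∅, by simp⟩
  simp only [Finset.mem_filter, Finset.mem_powerset] at hF hmax
  have hFc := card_le_of_noncrossing (hG.mono hF.1) hF.2
  have hex : ∀ e ∈ E \ F, ∃ f ∈ F, Crosses e f := by
    intro e he
    by_contra hcon
    push Not at hcon
    obtain ⟨heE, heF⟩ := Finset.mem_sdiff.1 he
    have := hmax (insert e F) ⟨Finset.insert_subset heE hF.1, by
      intro a ha b hb hab
      rcases Finset.mem_insert.1 ha with ha' | ha' <;>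
        rcases Finset.mem_insert.1 hb with hb' | hb'
      · exact hab.1 (ha'.trans hb'.symm)
      · exact hcon b hb' (ha' ▸ hab)
      · exact hcon a ha' (hb' ▸ hab.symm)
      · exact hF.2 a ha' b hb' hab⟩
    rw [Finset.card_insert_of_notMem heF] at this
    omega
  choose! g hg using hex
  have h2 : #(E \ F) ≤ #(crossPairs E) := by
    refine Finset.card_le_card_of_injOn (fun e => (e, g e)) ?_ ?_
    · intro e he
      simp only [crossPairs, Finset.coe_filter, Finset.mem_product, Set.mem_ofPred_eq]
      exact ⟨⟨(Finset.mem_sdiff.1 he).1, hF.1 (hg e he).1⟩, (hg e he).2⟩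
    · intro e _ f _ h
      exact (Prod.ext_iff.1 h).1
  have := Finset.card_sdiff_add_card_eq_card hF.1
  omega

/-- Crossing edges have four distinct endpoints; this uses that no edge passes through a vertex. -/
lemma Crosses.disjoint_ends {V : Finset (ℝ × ℝ)} {E : Finset ((ℝ × ℝ) × (ℝ × ℝ))}
    (hG : IsGeomGraph V E) {e f : (ℝ × ℝ) × (ℝ × ℝ)} (he : e ∈ E) (hf : f ∈ E)
    (h : Crosses e f) : e.1 ≠ f.1 ∧ e.1 ≠ f.2 ∧ e.2 ≠ f.1 ∧ e.2 ≠ f.2 := by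
  obtain ⟨hne, x, h1, h2, h3, h4, h5⟩ := h
  have le := hG.lt e he
  have lf := hG.lt f hf
  refine ⟨?_, ?_, ?_, ?_⟩
  · intro h
    have hs : slopeOf e = slopeOf f := by
      simp only [lineAt, h] at h5
      have : x - f.1.1 ≠ 0 := by linarith
      exact mul_right_cancel₀ this (by linarith)
    have hl : ∀ y, lineAt e y = lineAt f y := by intro y; simp only [lineAt, h, hs]
    rcases lt_trichotomy e.2.1 f.2.1 with h6 | h6 | h6
    · refine hG.not_through f hf e.2 (hG.right_mem _ he) (by linarith) h6 ?_
      rw [← hl, lineAt_right le]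
    · refine hne (Prod.ext h (Prod.ext h6 ?_))
      rw [← lineAt_right le, ← lineAt_right lf, hl, h6]
    · refine hG.not_through e he f.2 (hG.right_mem _ hf) (by linarith) h6 ?_
      rw [hl, lineAt_right lf]
  · intro h; rw [h] at h1; linarith
  · intro h; rw [h] at h2; linarith
  · intro h
    have hs : slopeOf e = slopeOf f := by
      rw [lineAt_eq_of_right le, lineAt_eq_of_right lf, h] at h5
      have : x - f.2.1 ≠ 0 := by linarith
      exact mul_right_cancel₀ this (by linarith)
    have hl : ∀ y, lineAt e y = lineAt f y := by
      intro y; rw [lineAt_eq_of_right le, lineAt_eq_of_right lf, h, hs]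
    rcases lt_trichotomy e.1.1 f.1.1 with h6 | h6 | h6
    · refine hG.not_through e he f.1 (hG.left_mem _ hf) h6 (by linarith) ?_
      rw [hl, lineAt_left]
    · refine hne (Prod.ext (Prod.ext h6 ?_) h)
      rw [← lineAt_left e, ← lineAt_left f, hl, h6]
    · refine hG.not_through f hf e.1 (hG.left_mem _ he) h6 (by linarith) ?_
      rw [← hl, lineAt_left]

/-- The colour `0` plays the role of being sampled, with probability `1 / (q + 1)`: this counts the
colourings in which all of `A` is sampled. -/
lemma card_colorings {ι : Type*} [Fintype ι] [DecidableEq ι] (q : ℕ) (A : Finset ι) :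
    #{χ : ι → Fin (q + 1) | ∀ a ∈ A, χ a = 0} * (q + 1) ^ #A = (q + 1) ^ Fintype.card ι := by
  have h1 : ({χ : ι → Fin (q + 1) | ∀ a ∈ A, χ a = 0} : Finset _) =
      Fintype.piFinset (fun i => if i ∈ A then {0} else univ) := by
    ext χ
    simp only [Finset.mem_filter, Finset.mem_univ, true_and, Fintype.mem_piFinset]
    refine forall_congr' fun i => ?_
    by_cases hi : i ∈ A <;> simp [hi]
  rw [h1, Fintype.card_piFinset]
  have h2 : ∀ i, #(if i ∈ A then ({0} : Finset (Fin (q + 1))) else univ) =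
      if i ∈ A then 1 else q + 1 := by
    intro i; split_ifs <;> simp
  simp only [h2]
  rw [Finset.prod_ite]
  simp only [Finset.prod_const_one, one_mul, Finset.prod_const]
  rw [← pow_add]
  congr 1
  have h3 : ({x | x ∉ A} : Finset ι) = Aᶜ := by ext; simp
  rw [h3, Finset.card_compl_add_card]

lemma sum_colorings {ι κ : Type*} [Fintype ι] [DecidableEq ι] (q k : ℕ) (I : Finset κ)
    (A : κ → Finset ι) (hA : ∀ i ∈ I, #(A i) = k) :
    (∑ χ : ι → Fin (q + 1), #{i ∈ I | ∀ a ∈ A i, χ a = 0}) * (q + 1) ^ k =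
      #I * (q + 1) ^ Fintype.card ι := by
  simp only [Finset.card_filter]
  rw [Finset.sum_comm, Finset.sum_mul, Finset.card_eq_sum_ones, Finset.sum_mul]
  refine Finset.sum_congr rfl fun i hi => ?_
  rw [← Finset.card_filter, ← hA i hi, card_colorings, one_mul]

/-- Average of `card_le_add_crossPairs` over all colourings of the vertices with `q + 1` colours,
applied to the subgraph induced by colour `0`. -/
theorem crossing_sampling {V : Finset (ℝ × ℝ)} {E : Finset ((ℝ × ℝ) × (ℝ × ℝ))}
    (hG : IsGeomGraph V E) (q : ℕ) :
    #E * (q + 1) ^ 2 ≤ 3 * #V * (q + 1) ^ 3 + #(crossPairs E) := by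
  classical
  let A₂ : (ℝ × ℝ) × (ℝ × ℝ) → Finset V := fun e => {v : V | v.1 = e.1 ∨ v.1 = e.2}
  let A₄ : ((ℝ × ℝ) × (ℝ × ℝ)) × ((ℝ × ℝ) × (ℝ × ℝ)) → Finset V :=
    fun p => A₂ p.1 ∪ A₂ p.2
  have hA₂ : ∀ e ∈ E, #(A₂ e) = 2 := by
    intro e he
    have : A₂ e = {⟨e.1, hG.left_mem e he⟩, ⟨e.2, hG.right_mem e he⟩} := by
      ext v; simp [A₂, Subtype.ext_iff]
    rw [this, Finset.card_pair]
    intro h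
    have := hG.lt e he
    rw [Subtype.mk.injEq] at h
    rw [h] at this
    exact lt_irrefl _ this
  have hA₄ : ∀ p ∈ crossPairs E, #(A₄ p) = 4 := by
    intro p hp
    simp only [crossPairs, Finset.mem_filter, Finset.mem_product] at hp
    obtain ⟨⟨h1, h2⟩, h3⟩ := hp
    obtain ⟨d1, d2, d3, d4⟩ := h3.disjoint_ends hG h1 h2
    rw [Finset.card_union_of_disjoint, hA₂ _ h1, hA₂ _ h2]
    rw [Finset.disjoint_left]
    intro v hv hv'
    simp only [A₂, Finset.mem_filter, Finset.mem_univ, true_and] at hv hv'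
    rcases hv with hv | hv <;> rcases hv' with hv' | hv' <;> rw [hv] at hv' <;> tauto
  have h1 := sum_colorings q 1 (univ : Finset V) (fun v => {v}) (by simp)
  have h2 := sum_colorings q 2 E A₂ hA₂
  have h4 := sum_colorings q 4 (crossPairs E) A₄ hA₄
  have key : ∀ χ : V → Fin (q + 1), #{e ∈ E | ∀ a ∈ A₂ e, χ a = 0} ≤
      3 * #{v ∈ (univ : Finset V) | ∀ a ∈ ({v} : Finset V), χ a = 0} +
        #{p ∈ crossPairs E | ∀ a ∈ A₄ p, χ a = 0} := by
    intro χ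
    set S : Finset (ℝ × ℝ) := ({v : V | χ v = 0} : Finset V).map (Function.Embedding.subtype _)
    set F := {e ∈ E | ∀ a ∈ A₂ e, χ a = 0}
    have hGS : IsGeomGraph S F := by
      refine ⟨?_, ?_, ?_, ?_⟩
      · intro e he
        obtain ⟨he, he'⟩ := Finset.mem_filter.1 he
        simp only [S, Finset.mem_map, Finset.mem_filter, Finset.mem_univ, true_and]
        exact ⟨⟨e.1, hG.left_mem e he⟩, he' _ (by simp [A₂]), rfl⟩
      · intro e he
        obtain ⟨he, he'⟩ := Finset.mem_filter.1 he
        simp only [S, Finset.mem_map, Finset.mem_filter, Finset.mem_univ, true_and]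
        exact ⟨⟨e.2, hG.right_mem e he⟩, he' _ (by simp [A₂]), rfl⟩
      · intro e he
        exact hG.lt e (Finset.mem_filter.1 he).1
      · intro e he w hw
        refine hG.not_through e (Finset.mem_filter.1 he).1 w ?_
        simp only [S, Finset.mem_map] at hw
        obtain ⟨a, -, rfl⟩ := hw
        exact a.2
    have h := card_le_add_crossPairs hGS
    have hS : #S = #{v ∈ (univ : Finset V) | ∀ a ∈ ({v} : Finset V), χ a = 0} := by
      rw [Finset.card_map]; simp
    have hC : crossPairs F ⊆ {p ∈ crossPairs E | ∀ a ∈ A₄ p, χ a = 0} := by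
      intro p hp
      simp only [crossPairs, Finset.mem_filter, Finset.mem_product, F] at hp ⊢
      refine ⟨⟨⟨hp.1.1.1, hp.1.2.1⟩, hp.2⟩, ?_⟩
      intro a ha
      rcases Finset.mem_union.1 ha with ha | ha
      · exact hp.1.1.2 a ha
      · exact hp.1.2.2 a ha
    have := Finset.card_le_card hC
    rw [← hS]
    omega
  have hsum := Finset.sum_le_sum fun χ (_ : χ ∈ (univ : Finset (V → Fin (q + 1)))) => key χ
  rw [Finset.sum_add_distrib, ← Finset.mul_sum] at hsum
  have hcard : #(univ : Finset V) = #V := by simp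
  rw [hcard] at h1
  generalize (∑ χ : V → Fin (q + 1), #{e ∈ E | ∀ a ∈ A₂ e, χ a = 0}) = s2 at *
  generalize (∑ χ : V → Fin (q + 1), #{v ∈ (univ : Finset V) | ∀ a ∈ ({v} : Finset V), χ a = 0}) =
    s1 at *
  generalize (∑ χ : V → Fin (q + 1), #{p ∈ crossPairs E | ∀ a ∈ A₄ p, χ a = 0}) = s4 at *
  have hpos : 0 < (q + 1) ^ Fintype.card V := by positivity
  refine Nat.le_of_mul_le_mul_right ?_ hpos
  calc #E * (q + 1) ^ 2 * (q + 1) ^ Fintype.card V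
      = s2 * (q + 1) ^ 4 := by
        rw [show (q + 1) ^ 4 = (q + 1) ^ 2 * (q + 1) ^ 2 by ring, ← mul_assoc, h2]; ring
    _ ≤ (3 * s1 + s4) * (q + 1) ^ 4 := Nat.mul_le_mul_right _ hsum
    _ = (3 * #V * (q + 1) ^ 3 + #(crossPairs E)) * (q + 1) ^ Fintype.card V := by
      rw [add_mul, add_mul, h4,
        show 3 * s1 * (q + 1) ^ 4 = 3 * (q + 1) ^ 3 * (s1 * (q + 1) ^ 1) by ring, h1]
      ring

/-- The crossing lemma for straight-line drawings, from `crossing_sampling` with `q + 1` close to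
`#E / (6 * #V)`. -/
theorem crossing_lemma {V : Finset (ℝ × ℝ)} {E : Finset ((ℝ × ℝ) × (ℝ × ℝ))}
    (hG : IsGeomGraph V E) (h : 6 * #V ≤ #E) (hV : 0 < #V) :
    (#E : ℝ) ^ 3 ≤ 288 * (#V : ℝ) ^ 2 * #(crossPairs E) := by
  set n : ℕ := #V
  set m : ℕ := #E
  obtain ⟨q, hq⟩ : ∃ q, m / (6 * n) = q + 1 :=
    Nat.exists_eq_succ_of_ne_zero (Nat.div_pos h (by omega)).ne'
  have hs := crossing_sampling hG q
  have h1 : (q + 1) * (6 * n) ≤ m := by rw [← hq]; exact Nat.div_mul_le_self _ _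
  have h2 : m < (q + 2) * (6 * n) := by
    have := Nat.lt_mul_div_succ m (show 0 < 6 * n by omega)
    rw [hq] at this; linarith
  have hs' : (m : ℝ) * (q + 1) ^ 2 ≤ 3 * n * (q + 1) ^ 3 + #(crossPairs E) := by exact_mod_cast hs
  have h1' : ((q : ℝ) + 1) * (6 * n) ≤ m := by exact_mod_cast h1
  have h2' : (m : ℝ) ≤ (q + 2) * (6 * n) := by exact_mod_cast h2.le
  have hq0 : (0 : ℝ) ≤ q := Nat.cast_nonneg q
  have hn : (0 : ℝ) < n := by exact_mod_cast hV
  have hm : (0 : ℝ) ≤ m := Nat.cast_nonneg m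
  have h3 : (m : ℝ) ≤ 12 * n * (q + 1) := by nlinarith
  have h4 : (m : ℝ) * (q + 1) ^ 2 ≤ 2 * #(crossPairs E) := by
    have : ((q : ℝ) + 1) ^ 2 * (((q : ℝ) + 1) * (6 * n)) ≤ ((q : ℝ) + 1) ^ 2 * m :=
      mul_le_mul_of_nonneg_left h1' (by positivity)
    nlinarith
  calc (m : ℝ) ^ 3 = (m : ℝ) * (m : ℝ) ^ 2 := by ring
    _ ≤ (m : ℝ) * (12 * (n : ℝ) * ((q : ℝ) + 1)) ^ 2 := by gcongr
    _ = 144 * (n : ℝ) ^ 2 * ((m : ℝ) * ((q : ℝ) + 1) ^ 2) := by ring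
    _ ≤ 144 * (n : ℝ) ^ 2 * (2 * (#(crossPairs E) : ℝ)) := by gcongr
    _ = _ := by ring

/-! ### Lines with few dot product values -/

/-- The dot product on the plane. -/
noncomputable def dot (v p : ℝ × ℝ) : ℝ := v.1 * p.1 + v.2 * p.2

open Classical in
/-- Pairs of points of `P` that are consecutive, from left to right, on a line
`{p | dot v p = const}` with normal `v ∈ V`. -/
noncomputable def consecEdges (V P : Finset (ℝ × ℝ)) : Finset ((ℝ × ℝ) × (ℝ × ℝ)) :=
  (P ×ˢ P).filter (fun e => e.1.1 < e.2.1 ∧ ∃ v ∈ V, dot v e.1 = dot v e.2 ∧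
    ∀ r ∈ P, dot v r = dot v e.1 → e.1.1 < r.1 → e.2.1 ≤ r.1)

lemma eq_of_dot_eq {v p q : ℝ × ℝ} (hv : v.2 ≠ 0) (h1 : p.1 = q.1) (h : dot v p = dot v q) :
    p = q := by
  refine Prod.ext h1 ?_
  simp only [dot, h1] at h
  exact mul_left_cancel₀ hv (by linarith)

lemma dot_lineAt {v : ℝ × ℝ} {e : (ℝ × ℝ) × (ℝ × ℝ)} (hlt : e.1.1 < e.2.1)
    (h : dot v e.1 = dot v e.2) (x : ℝ) : dot v (x, lineAt e x) = dot v e.1 := by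
  have h0 : e.2.1 - e.1.1 ≠ 0 := by linarith
  simp only [dot, lineAt, slopeOf] at h ⊢
  field_simp
  linear_combination (-(x - e.1.1)) * h

lemma consecEdges_isGeomGraph {V P : Finset (ℝ × ℝ)} : IsGeomGraph P (consecEdges V P) := by
  refine ⟨?_, ?_, ?_, ?_⟩ <;> intro e he <;>
    simp only [consecEdges, Finset.mem_filter, Finset.mem_product] at he
  · exact he.1.1
  · exact he.1.2
  · exact he.2.1
  · obtain ⟨-, hlt, v, hv, h1, h2⟩ := he
    intro w hw h3 h4 h5
    have h6 := dot_lineAt hlt h1 w.1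
    rw [h5] at h6
    have := h2 w hw h6 h3
    linarith

/-- Every `p ∈ P` lies on one line for each `v ∈ V` and starts an edge of it unless it is the last
point there; at most `#V * #L` lines occur. -/
lemma card_consecEdges {V P : Finset (ℝ × ℝ)} {L : Finset ℝ} (hV : ∀ v ∈ V, v.2 ≠ 0)
    (hpar : ∀ v ∈ V, ∀ w ∈ V, v.1 * w.2 = v.2 * w.1 → v = w)
    (hL : ∀ v ∈ V, ∀ p ∈ P, dot v p ∈ L) : #V * #P ≤ #(consecEdges V P) + #V * #L := by
  classical
  set J := (V ×ˢ P).filter (fun a => ∃ q ∈ P, a.2.1 < q.1 ∧ dot a.1 q = dot a.1 a.2)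
  set J' := (V ×ˢ P).filter (fun a => ¬ ∃ q ∈ P, a.2.1 < q.1 ∧ dot a.1 q = dot a.1 a.2)
  have hJJ : #J + #J' = #V * #P := by
    rw [← Finset.card_product]; exact Finset.card_filter_add_card_filter_not _
  have h1 : #J ≤ #(consecEdges V P) := by
    have hex : ∀ a ∈ J, ∃ q ∈ P, a.2.1 < q.1 ∧ dot a.1 q = dot a.1 a.2 ∧
        ∀ r ∈ P, dot a.1 r = dot a.1 a.2 → a.2.1 < r.1 → q.1 ≤ r.1 := by
      intro a ha
      obtain ⟨ha1, q, hq, hq1, hq2⟩ := Finset.mem_filter.1 ha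
      obtain ⟨r, hr, hmin⟩ := Finset.exists_min_image
        (P.filter (fun q => a.2.1 < q.1 ∧ dot a.1 q = dot a.1 a.2)) (fun q => q.1)
        ⟨q, by simp [hq, hq1, hq2]⟩
      simp only [Finset.mem_filter] at hr hmin
      exact ⟨r, hr.1, hr.2.1, hr.2.2, fun s hs h1 h2 => hmin s ⟨hs, h2, h1⟩⟩
    choose! g hg using hex
    refine Finset.card_le_card_of_injOn (fun a => (a.2, g a)) ?_ ?_
    · intro a ha
      obtain ⟨k1, k2, k3, k4⟩ := hg a ha
      obtain ⟨ha1, -⟩ := Finset.mem_filter.1 ha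
      rw [Finset.mem_product] at ha1
      refine Finset.mem_coe.2 (Finset.mem_filter.2 ⟨Finset.mem_product.2 ⟨ha1.2, k1⟩, k2, ?_⟩)
      exact ⟨a.1, ha1.1, k3.symm, k4⟩
    · intro a ha b hb hab
      obtain ⟨-, k2, k3, -⟩ := hg a ha
      obtain ⟨-, l2, l3, -⟩ := hg b hb
      have ha1 := Finset.mem_product.1 (Finset.mem_filter.1 ha).1
      have hb1 := Finset.mem_product.1 (Finset.mem_filter.1 hb).1
      simp only [Prod.mk.injEq] at hab
      obtain ⟨e1, e2⟩ := hab
      refine Prod.ext (hpar _ ha1.1 _ hb1.1 ?_) e1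
      rw [← e1, ← e2] at l3
      simp only [dot] at k3 l3
      have h0 : (g a).1 - a.2.1 ≠ 0 := by linarith
      refine mul_left_cancel₀ h0 ?_
      linear_combination b.1.2 * k3 - a.1.2 * l3
  have h2 : #J' ≤ #V * #L := by
    rw [← Finset.card_product]
    refine Finset.card_le_card_of_injOn (fun a => (a.1, dot a.1 a.2)) ?_ ?_
    · intro a ha
      have ha1 := Finset.mem_product.1 (Finset.mem_filter.1 ha).1
      exact Finset.mem_coe.2 (Finset.mem_product.2 ⟨ha1.1, hL _ ha1.1 _ ha1.2⟩)
    · intro a ha b hb hab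
      obtain ⟨ha1, ha2⟩ := Finset.mem_filter.1 ha
      obtain ⟨hb1, hb2⟩ := Finset.mem_filter.1 hb
      rw [Finset.mem_product] at ha1 hb1
      simp only [Prod.mk.injEq] at hab
      obtain ⟨e1, e2⟩ := hab
      push Not at ha2 hb2
      rw [← e1] at e2 hb2
      refine Prod.ext e1 (eq_of_dot_eq (hV _ ha1.1) ?_ e2)
      rcases lt_trichotomy a.2.1 b.2.1 with h | h | h
      · exact absurd e2.symm (ha2 _ hb1.2 h)
      · exact h
      · exact absurd e2 (hb2 _ ha1.2 h)
  omega

/-- Two lines meet at most once, so crossings inject into pairs of lines. -/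
lemma card_crossPairs_consecEdges {V P : Finset (ℝ × ℝ)} {L : Finset ℝ} (hV : ∀ v ∈ V, v.2 ≠ 0)
    (hpar : ∀ v ∈ V, ∀ w ∈ V, v.1 * w.2 = v.2 * w.1 → v = w)
    (hL : ∀ v ∈ V, ∀ p ∈ P, dot v p ∈ L) :
    #(crossPairs (consecEdges V P)) ≤ (#V * #L) ^ 2 := by
  classical
  have hex : ∀ e ∈ consecEdges V P, e.1 ∈ P ∧ e.2 ∈ P ∧ e.1.1 < e.2.1 ∧ ∃ v ∈ V,
      dot v e.1 = dot v e.2 ∧ ∀ r ∈ P, dot v r = dot v e.1 → e.1.1 < r.1 → e.2.1 ≤ r.1 := by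
    intro e he
    simp only [consecEdges, Finset.mem_filter, Finset.mem_product] at he
    tauto
  choose! h1 h2 h3 g hgV hg hg' using hex
  -- a point of a line lies on at most one edge of that line
  have uniq : ∀ e ∈ consecEdges V P, ∀ f ∈ consecEdges V P, g e = g f →
      dot (g e) e.1 = dot (g f) f.1 → ∀ x, e.1.1 < x → x < e.2.1 → f.1.1 < x → x < f.2.1 →
      e = f := by
    have half : ∀ e ∈ consecEdges V P, ∀ f ∈ consecEdges V P, g e = g f →
        dot (g e) e.1 = dot (g f) f.1 → ∀ x, x < e.2.1 → f.1.1 < x → x < f.2.1 →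
        ¬ e.1.1 < f.1.1 := by
      intro e he f hf hgg hd x b c d hlt
      have := hg' e he f.1 (h1 f hf) (by rw [hd, hgg]) hlt
      linarith
    have half' : ∀ e ∈ consecEdges V P, ∀ f ∈ consecEdges V P, g e = g f →
        dot (g e) e.1 = dot (g f) f.1 → ∀ x, e.1.1 < x → f.1.1 < x → x < f.2.1 →
        ¬ f.2.1 < e.2.1 := by
      intro e he f hf hgg hd x b c d hlt
      have := hg' e he f.2 (h2 f hf) (by rw [hd, hgg, hg f hf]) (by linarith)
      linarith
    intro e he f hf hgg hd x a b c d
    have k1 := half e he f hf hgg hd x b c d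
    have k2 := half f hf e he hgg.symm hd.symm x d a b
    have k3 := half' e he f hf hgg hd x a c d
    have k4 := half' f hf e he hgg.symm hd.symm x c a b
    have hve := hV _ (hgV e he)
    refine Prod.ext (eq_of_dot_eq hve (by linarith) (by rw [hd, hgg]))
      (eq_of_dot_eq hve (by linarith) ?_)
    rw [← hg e he, hd, hgg, hg f hf]
  calc #(crossPairs (consecEdges V P)) ≤ #((V ×ˢ L) ×ˢ (V ×ˢ L)) := ?_
    _ = (#V * #L) ^ 2 := by simp only [Finset.card_product]; ring
  refine Finset.card_le_card_of_injOn
    (fun p => ((g p.1, dot (g p.1) p.1.1), (g p.2, dot (g p.2) p.2.1))) ?_ ?_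
  · intro p hp
    have hp' := Finset.mem_product.1 (Finset.mem_filter.1 hp).1
    simp only [Finset.coe_product, Set.mem_prod, Finset.mem_coe]
    exact ⟨⟨hgV _ hp'.1, hL _ (hgV _ hp'.1) _ (h1 _ hp'.1)⟩,
      ⟨hgV _ hp'.2, hL _ (hgV _ hp'.2) _ (h1 _ hp'.2)⟩⟩
  · rintro ⟨e, f⟩ hp ⟨e', f'⟩ hp' heq
    obtain ⟨hp, hcr⟩ := Finset.mem_filter.1 hp
    obtain ⟨hp', hcr'⟩ := Finset.mem_filter.1 hp'
    obtain ⟨he, hf⟩ := Finset.mem_product.1 hp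
    obtain ⟨he', hf'⟩ := Finset.mem_product.1 hp'
    simp only at he hf he' hf' hcr hcr' heq
    simp only [Prod.mk.injEq] at heq
    obtain ⟨⟨q1, q2⟩, ⟨q3, q4⟩⟩ := heq
    obtain ⟨hne, x, x1, x2, x3, x4, x5⟩ := hcr
    obtain ⟨hne', x', x1', x2', x3', x4', x5'⟩ := hcr'
    have d1 := dot_lineAt (h3 e he) (hg e he) x
    have d2 := dot_lineAt (h3 f hf) (hg f hf) x
    have d3 := dot_lineAt (h3 e' he') (hg e' he') x'
    have d4 := dot_lineAt (h3 f' hf') (hg f' hf') x'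
    rw [← x5] at d2
    rw [← x5'] at d4
    have hgne : g e ≠ g f := by
      intro hgg
      refine hne (uniq e he f hf hgg ?_ x x1 x2 x3 x4)
      rw [← d1, ← d2, hgg]
    have hdet : (g e).1 * (g f).2 - (g e).2 * (g f).1 ≠ 0 := by
      intro h
      exact hgne (hpar _ (hgV e he) _ (hgV f hf) (by linarith))
    have hxx : x = x' := by
      rw [← q2, ← q1] at d3
      rw [← q4, ← q3] at d4
      have r1 := d1.trans d3.symm
      have r2 := d2.trans d4.symm
      simp only [dot] at r1 r2
      refine mul_left_cancel₀ hdet ?_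
      linear_combination (g f).2 * r1 - (g e).2 * r2
    subst hxx
    exact Prod.ext (uniq e he e' he' q1 q2 x x1 x2 x1' x2')
      (uniq f hf f' hf' q3 q4 x x3 x4 x3' x4')

/-- Székely's argument: pairwise non-parallel normals `V` and points `P` with all dot products in
`L` satisfy `#V * #P ≪ #L ^ 2`, apart from degenerate cases. -/
theorem incidence_bound {V P : Finset (ℝ × ℝ)} {L : Finset ℝ} (hV : ∀ v ∈ V, v.2 ≠ 0)
    (hpar : ∀ v ∈ V, ∀ w ∈ V, v.1 * w.2 = v.2 * w.1 → v = w)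
    (hL : ∀ v ∈ V, ∀ p ∈ P, dot v p ∈ L) :
    #P < 2 * #L ∨ #V < 12 ∨ (#V : ℝ) * #P ≤ 2304 * (#L : ℝ) ^ 2 := by
  by_contra hcon
  push Not at hcon
  obtain ⟨a1, a2, a3⟩ := hcon
  have hP : 0 < #P := by
    rcases Nat.eq_zero_or_pos #P with h | h
    · rw [h] at a3
      have : (0 : ℝ) ≤ 2304 * (#L : ℝ) ^ 2 := by positivity
      simp at a3; linarith
    · exact h
  have b1 := card_consecEdges hV hpar hL
  have b2 := card_crossPairs_consecEdges hV hpar hL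
  have b3 : #V * #P ≤ 2 * #(consecEdges V P) := by nlinarith
  have b4 : 6 * #P ≤ #(consecEdges V P) := by nlinarith
  have b5 := crossing_lemma consecEdges_isGeomGraph b4 hP
  have b2' : (#(crossPairs (consecEdges V P)) : ℝ) ≤ ((#V : ℝ) * #L) ^ 2 := by exact_mod_cast b2
  have b3' : (#V : ℝ) * #P ≤ 2 * #(consecEdges V P) := by exact_mod_cast b3
  have hV' : (0 : ℝ) < #V := by
    have : 0 < #V := by omega
    exact_mod_cast this
  have hP' : (0 : ℝ) < #P := by exact_mod_cast hP
  have b6 : ((#V : ℝ) * #P) ^ 3 ≤ 8 * (288 * (#P : ℝ) ^ 2 * ((#V : ℝ) * #L) ^ 2) := by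
    calc ((#V : ℝ) * #P) ^ 3 ≤ (2 * #(consecEdges V P)) ^ 3 := by gcongr
      _ = 8 * (#(consecEdges V P) : ℝ) ^ 3 := by ring
      _ ≤ 8 * (288 * (#P : ℝ) ^ 2 * #(crossPairs (consecEdges V P))) := by gcongr
      _ ≤ _ := by gcongr
  have b7 : ((#V : ℝ) * #P) ^ 2 * ((#V : ℝ) * #P) ≤
      ((#V : ℝ) * #P) ^ 2 * (2304 * (#L : ℝ) ^ 2) := by
    calc _ = ((#V : ℝ) * #P) ^ 3 := by ring
      _ ≤ _ := b6
      _ = _ := by ring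
  have := le_of_mul_le_mul_left b7 (by positivity)
  linarith

/-! ### Superquadratic growth of cross ratios -/

lemma quadratic_coeffs_zero {c0 c1 c2 w1 w2 w3 : ℝ} (h12 : w1 ≠ w2) (h13 : w1 ≠ w3)
    (h23 : w2 ≠ w3) (h1 : c0 + c1 * w1 + c2 * w1 ^ 2 = 0) (h2 : c0 + c1 * w2 + c2 * w2 ^ 2 = 0)
    (h3 : c0 + c1 * w3 + c2 * w3 ^ 2 = 0) : c0 = 0 ∧ c1 = 0 ∧ c2 = 0 := by
  have e12 : c1 + c2 * (w1 + w2) = 0 :=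
    mul_left_cancel₀ (sub_ne_zero.2 h12) (by linear_combination h1 - h2)
  have e13 : c1 + c2 * (w1 + w3) = 0 :=
    mul_left_cancel₀ (sub_ne_zero.2 h13) (by linear_combination h1 - h3)
  have hc2 : c2 = 0 := mul_left_cancel₀ (sub_ne_zero.2 h23) (by linear_combination e12 - e13)
  have hc1 : c1 = 0 := by rw [hc2] at e12; linarith
  refine ⟨?_, hc1, hc2⟩
  rw [hc1, hc2] at h1; linarith

/-- The equation with parameters `a`, `b` says that `y` is the image of `w` under a Möbius map
depending on `a`, `b`. Two such maps agreeing at three points coincide, and the map determines `a`. -/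
lemma cross_ratio_rigid {q a b a' b' : ℝ} (hq : 1 < q) (hab : a < b)
    {w1 w2 w3 y1 y2 y3 : ℝ} (h12 : w1 ≠ w2) (h13 : w1 ≠ w3) (h23 : w2 ≠ w3)
    (e1 : (1 + b * y1) * (1 + a * w1) = q * ((1 + b * w1) * (1 + a * y1)))
    (e2 : (1 + b * y2) * (1 + a * w2) = q * ((1 + b * w2) * (1 + a * y2)))
    (e3 : (1 + b * y3) * (1 + a * w3) = q * ((1 + b * w3) * (1 + a * y3)))
    (f1 : (1 + b' * y1) * (1 + a' * w1) = q * ((1 + b' * w1) * (1 + a' * y1)))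
    (f2 : (1 + b' * y2) * (1 + a' * w2) = q * ((1 + b' * w2) * (1 + a' * y2)))
    (f3 : (1 + b' * y3) * (1 + a' * w3) = q * ((1 + b' * w3) * (1 + a' * y3))) : a = a' := by
  have key : ∀ w y : ℝ, (1 + b * y) * (1 + a * w) = q * ((1 + b * w) * (1 + a * y)) →
      (1 + b' * y) * (1 + a' * w) = q * ((1 + b' * w) * (1 + a' * y)) →
      (1 - q) * ((b' - q * a') - (b - q * a)) +
      ((1 - q) * (a' * b' * (1 - q)) + (a - q * b) * (b' - q * a') - (1 - q) * (a * b * (1 - q))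
        - (a' - q * b') * (b - q * a)) * w +
      ((a - q * b) * (a' * b' * (1 - q)) - (a' - q * b') * (a * b * (1 - q))) * w ^ 2 = 0 := by
    intro w y h h'
    linear_combination ((b' - q * a') + (a' * b' * (1 - q)) * w) * h -
      ((b - q * a) + (a * b * (1 - q)) * w) * h'
  obtain ⟨c0, c1, c2⟩ := quadratic_coeffs_zero h12 h13 h23 (key _ _ e1 f1) (key _ _ e2 f2)
    (key _ _ e3 f3)
  have hq1 : 1 - q ≠ 0 := by linarith
  have hγ : b' - q * a' = b - q * a := by
    have := mul_left_cancel₀ hq1 (c0.trans (mul_zero (1 - q)).symm); linarith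
  have hβ : a - q * b = a' - q * b' := by
    rw [hγ] at c1
    have hdet : q * (a - b) ^ 2 ≠ 0 := mul_ne_zero (by linarith) (pow_ne_zero _ (by linarith))
    have : (q * (a - b) ^ 2) * ((a - q * b) - (a' - q * b')) = 0 := by
      linear_combination (1 - q) * c2 - (a - q * b) * c1
    have := (mul_eq_zero.1 this).resolve_left hdet
    linarith
  have h1 : (1 - q) * ((a + b) - (a' + b')) = 0 := by linear_combination hβ - hγ
  have h2 : (1 + q) * ((a - b) - (a' - b')) = 0 := by linear_combination hβ + hγ
  have h1 := (mul_eq_zero.1 h1).resolve_left hq1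
  have h2 := (mul_eq_zero.1 h2).resolve_left (by linarith)
  linarith

/-- The cross ratio `t(x_{j+1}, x_{l+1}) t(x_j, x_l) / (t(x_{j+1}, x_l) t(x_j, x_{l+1}))`, where
`t(a, b) = 1 + a * b`. -/
noncomputable def crossRatio (x : ℕ → ℝ) (j l : ℕ) : ℝ :=
  (1 + x (j + 1) * x (l + 1)) * (1 + x j * x l) /
    ((1 + x (j + 1) * x l) * (1 + x j * x (l + 1)))

/-- The point `t(x_j, x_m) t(x_{j+1}, x_l) / (t(x_j, x_l) t(x_{j+1}, x_0))`, where
`t(a, b) = 1 + a * b`. For increasing positive `x` these points are ordered lexicographically in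
`(j, l)`, and the ratio of neighbours is `crossRatio x j l`. -/
noncomputable def gridPt (x : ℕ → ℝ) (m j l : ℕ) : ℝ :=
  (1 + x j * x m) * (1 + x (j + 1) * x l) / ((1 + x j * x l) * (1 + x (j + 1) * x 0))

lemma one_add_pos {x : ℕ → ℝ} {m : ℕ} (hpos : ∀ i ≤ m, 0 < x i)
    {i j : ℕ} (hi : i ≤ m) (hj : j ≤ m) : 0 < 1 + x i * x j := by
  have := mul_pos (hpos i hi) (hpos j hj)
  linarith

lemma gridPt_pos {x : ℕ → ℝ} {m : ℕ} (hpos : ∀ i ≤ m, 0 < x i)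
    {j l : ℕ} (hj : j < m) (hl : l ≤ m) : 0 < gridPt x m j l := by
  have h1 := one_add_pos hpos hj.le le_rfl
  have h2 := one_add_pos hpos (Nat.succ_le_of_lt hj) hl
  have h3 := one_add_pos hpos hj.le hl
  have h4 := one_add_pos hpos (Nat.succ_le_of_lt hj) (Nat.zero_le m)
  simp only [gridPt, Nat.succ_eq_add_one] at *
  positivity

lemma gridPt_succ {x : ℕ → ℝ} {m : ℕ} (hpos : ∀ i ≤ m, 0 < x i)
    {j l : ℕ} (hj : j < m) (hl : l < m) :
    gridPt x m j (l + 1) = gridPt x m j l * crossRatio x j l := by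
  have h2 := (one_add_pos hpos (Nat.succ_le_of_lt hj) hl.le).ne'
  have h3 := (one_add_pos hpos hj.le hl.le).ne'
  have h4 := (one_add_pos hpos (Nat.succ_le_of_lt hj) (Nat.zero_le m)).ne'
  have h5 := (one_add_pos hpos hj.le (Nat.succ_le_of_lt hl)).ne'
  simp only [gridPt, crossRatio, Nat.succ_eq_add_one] at *
  field_simp

lemma gridPt_zero {x : ℕ → ℝ} {m : ℕ} (hpos : ∀ i ≤ m, 0 < x i)
    {j : ℕ} (hj : j < m) :
    gridPt x m j 0 = (1 + x j * x m) / (1 + x j * x 0) := by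
  have h4 := (one_add_pos hpos (Nat.succ_le_of_lt hj) (Nat.zero_le m)).ne'
  simp only [gridPt, Nat.succ_eq_add_one] at *
  field_simp

lemma gridPt_last {x : ℕ → ℝ} {m : ℕ} (hpos : ∀ i ≤ m, 0 < x i)
    {j : ℕ} (hj : j < m) :
    gridPt x m j m = (1 + x (j + 1) * x m) / (1 + x (j + 1) * x 0) := by
  have h4 := (one_add_pos hpos hj.le le_rfl).ne'
  simp only [gridPt] at *
  field_simp

lemma one_lt_crossRatio {x : ℕ → ℝ} {m : ℕ} (hpos : ∀ i ≤ m, 0 < x i)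
    (hmono : ∀ i j, i < j → j ≤ m → x i < x j)
    {j l : ℕ} (hj : j < m) (hl : l < m) : 1 < crossRatio x j l := by
  have h2 := one_add_pos hpos (Nat.succ_le_of_lt hj) hl.le
  have h5 := one_add_pos hpos hj.le (Nat.succ_le_of_lt hl)
  have hx := hmono j (j + 1) (by omega) (by omega)
  have hy := hmono l (l + 1) (by omega) (by omega)
  simp only [crossRatio, Nat.succ_eq_add_one] at *
  rw [one_lt_div (mul_pos h2 h5)]
  nlinarith [mul_pos (sub_pos.2 hx) (sub_pos.2 hy)]

lemma gridPt_mono {x : ℕ → ℝ} {m : ℕ} (hpos : ∀ i ≤ m, 0 < x i)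
    (hmono : ∀ i j, i < j → j ≤ m → x i < x j)
    {j : ℕ} (hj : j < m) {l l' : ℕ} (hl : l ≤ l') (hl' : l' ≤ m) :
    gridPt x m j l ≤ gridPt x m j l' := by
  induction l', hl using Nat.le_induction with
  | base => exact le_rfl
  | succ k hk ih =>
    refine (ih (by omega)).trans ?_
    rw [gridPt_succ hpos hj (by omega)]
    have := one_lt_crossRatio hpos hmono hj (show k < m by omega)
    have := gridPt_pos hpos hj (show k ≤ m by omega)
    nlinarith

/-- The multiplicative intervals `[gridPt j l, gridPt j (l + 1)]` are ordered lexicographically. -/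
lemma gridPt_lex {x : ℕ → ℝ} {m : ℕ} (hpos : ∀ i ≤ m, 0 < x i)
    (hmono : ∀ i j, i < j → j ≤ m → x i < x j)
    {j l j' l' : ℕ} (hj : j < m) (hj' : j' < m) (hl : l < m) (hl' : l' < m)
    (h : j < j' ∨ j = j' ∧ l < l') : gridPt x m j (l + 1) ≤ gridPt x m j' l' := by
  rcases h with h | ⟨rfl, h⟩
  · refine (gridPt_mono hpos hmono hj (show l + 1 ≤ m by omega) le_rfl).trans ?_
    refine le_trans ?_ (gridPt_mono hpos hmono hj' (Nat.zero_le l') hl'.le)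
    rw [gridPt_last hpos hj, gridPt_zero hpos hj']
    have h1 := one_add_pos hpos (Nat.succ_le_of_lt hj) (Nat.zero_le m)
    have h2 := one_add_pos hpos hj'.le (Nat.zero_le m)
    have hx : x (j + 1) ≤ x j' := by
      rcases Nat.lt_or_eq_of_le (Nat.succ_le_of_lt h) with h' | h'
      · exact (hmono _ _ h' hj'.le).le
      · simp only [Nat.succ_eq_add_one] at h'; rw [h']
    have hm0 := hmono 0 m (by omega) le_rfl
    simp only [Nat.succ_eq_add_one] at *
    rw [div_le_div_iff₀ h1 h2]
    nlinarith [mul_nonneg (sub_nonneg.2 hx) (sub_nonneg.2 hm0.le)]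
  · exact gridPt_mono hpos hmono hj (by omega) hl'.le

/-- Consequence of `cross_ratio_rigid`: a value is shared by two rows of cross ratios in at most two
columns. -/
lemma common_le_two {x : ℕ → ℝ} {m : ℕ} (hpos : ∀ i ≤ m, 0 < x i)
    (hmono : ∀ i j, i < j → j ≤ m → x i < x j)
    {j j' : ℕ} (hj : j < m) (hj' : j' < m) (hne : j ≠ j') (v : ℝ) :
    #{l ∈ range m | crossRatio x j l = v ∧ crossRatio x j' l = v} ≤ 2 := by
  by_contra hcon
  push Not at hcon
  obtain ⟨l1, h1, l2, h2, l3, h3, n12, n13, n23⟩ := Finset.two_lt_card.1 hcon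
  simp only [Finset.mem_filter, Finset.mem_range] at h1 h2 h3
  have hv : 1 < v := by rw [← h1.2.1]; exact one_lt_crossRatio hpos hmono hj h1.1
  have inj : ∀ {a b : ℕ}, a < m → b < m → a ≠ b → x a ≠ x b := by
    intro a b ha hb hab
    rcases Nat.lt_or_gt_of_ne hab with h | h
    · exact (hmono _ _ h hb.le).ne
    · exact (hmono _ _ h ha.le).ne'
  have eqn : ∀ {i l : ℕ}, i < m → l < m → crossRatio x i l = v →
      (1 + x (i + 1) * x (l + 1)) * (1 + x i * x l) =
        v * ((1 + x (i + 1) * x l) * (1 + x i * x (l + 1))) := by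
    intro i l hi hl h
    have h2 := one_add_pos hpos (Nat.succ_le_of_lt hi) hl.le
    have h5 := one_add_pos hpos hi.le (Nat.succ_le_of_lt hl)
    simp only [crossRatio, Nat.succ_eq_add_one] at *
    rwa [div_eq_iff (mul_pos h2 h5).ne'] at h
  exact inj hj hj' hne (cross_ratio_rigid hv (hmono j (j + 1) (by omega) (by omega))
    (inj h1.1 h2.1 n12) (inj h1.1 h3.1 n13) (inj h2.1 h3.1 n23)
    (eqn hj h1.1 h1.2.1) (eqn hj h2.1 h2.2.1) (eqn hj h3.1 h3.2.1)
    (eqn hj' h1.1 h1.2.2) (eqn hj' h2.1 h2.2.2) (eqn hj' h3.1 h3.2.2))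

/-- By `common_le_two` and Cauchy–Schwarz, no value is taken by more than `O(m ^ (3/2))` of the `m ^ 2`
cross ratios. -/
lemma multiplicity_bound {x : ℕ → ℝ} {m : ℕ} (hpos : ∀ i ≤ m, 0 < x i)
    (hmono : ∀ i j, i < j → j ≤ m → x i < x j)
    (v : ℝ) :
    #{p ∈ range m ×ˢ range m | crossRatio x p.1 p.2 = v} ^ 2 ≤ 3 * m ^ 3 := by
  classical
  have h1 : #{p ∈ range m ×ˢ range m | crossRatio x p.1 p.2 = v} =
      ∑ l ∈ range m, ∑ j ∈ range m, if crossRatio x j l = v then 1 else 0 := by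
    rw [Finset.card_filter, Finset.sum_product, Finset.sum_comm]
  have h2 : ∑ l ∈ range m, (∑ j ∈ range m, if crossRatio x j l = v then 1 else 0) ^ 2 =
      ∑ j ∈ range m, ∑ j' ∈ range m,
        #{l ∈ range m | crossRatio x j l = v ∧ crossRatio x j' l = v} := by
    simp only [sq, Finset.sum_mul_sum, Finset.card_filter]
    rw [Finset.sum_comm]
    refine Finset.sum_congr rfl fun j _ => ?_
    rw [Finset.sum_comm]
    refine Finset.sum_congr rfl fun j' _ => Finset.sum_congr rfl fun l _ => ?_
    by_cases a : crossRatio x j l = v <;> by_cases b : crossRatio x j' l = v <;> simp [a, b]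
  have h3 : ∀ j ∈ range m, ∑ j' ∈ range m,
      #{l ∈ range m | crossRatio x j l = v ∧ crossRatio x j' l = v} ≤ 3 * m := by
    intro j hj
    calc _ ≤ ∑ j' ∈ range m, (2 + if j = j' then m else 0) := by
          refine Finset.sum_le_sum fun j' hj' => ?_
          by_cases h : j = j'
          · simp only [h, if_true]
            have := Finset.card_filter_le (range m)
              (fun l => crossRatio x j' l = v ∧ crossRatio x j' l = v)
            rw [Finset.card_range] at this
            omega
          · simp only [h, if_false]
            exact common_le_two hpos hmono (Finset.mem_range.1 hj) (Finset.mem_range.1 hj') h v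
      _ = 3 * m := by
          rw [Finset.sum_add_distrib, Finset.sum_ite_eq, if_pos hj]
          simp; ring
  rw [h1]
  calc _ ≤ #(range m) * ∑ l ∈ range m, (∑ j ∈ range m, if crossRatio x j l = v then 1 else 0) ^ 2 :=
        sq_sum_le_card_mul_sum_sq
    _ ≤ m * (m * (3 * m)) := by
        rw [h2, Finset.card_range]
        gcongr
        refine (Finset.sum_le_sum h3).trans ?_
        simp
    _ = 3 * m ^ 3 := by ring

/-- The squeezing argument. The products of `gridPt x m j l` with the distinct cross ratios not
exceeding `crossRatio x j l` lie in disjoint intervals, so they are all distinct. At least half of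
the `m ^ 4` pairs of cross ratios are in the right order, and `multiplicity_bound` limits how many
give the same product, whence at least a constant times `m ^ (5/2)` products. -/
theorem superquadratic_growth {x : ℕ → ℝ} {m : ℕ} (hpos : ∀ i ≤ m, 0 < x i)
    (hmono : ∀ i j, i < j → j ≤ m → x i < x j)
    (hm : 0 < m) : ∃ T : Finset ℝ, m ^ 5 ≤ 12 * #T ^ 2 ∧
    ∀ τ ∈ T, ∃ j < m, ∃ l < m, ∃ j' < m, ∃ l' < m,
      τ = gridPt x m j l * crossRatio x j' l' := by
  classical
  set I := range m ×ˢ range m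
  let s : ℕ × ℕ → ℝ := fun p => crossRatio x p.1 p.2
  set T' := (I ×ˢ I.image s).filter (fun a => a.2 ≤ s a.1)
  set B := Nat.sqrt (3 * m ^ 3)
  have hI : #I = m ^ 2 := by simp [I, sq]
  have memI : ∀ p, p ∈ I ↔ p.1 < m ∧ p.2 < m := by intro p; simp [I]
  set R := (I ×ˢ I).filter (fun a => s a.2 ≤ s a.1)
  have hR : m ^ 4 ≤ 2 * #R := by
    have hcov : I ×ˢ I ⊆ R ∪ R.image Prod.swap := by
      intro a ha
      rcases le_total (s a.2) (s a.1) with h | h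
      · exact Finset.mem_union_left _ (Finset.mem_filter.2 ⟨ha, h⟩)
      · refine Finset.mem_union_right _ (Finset.mem_image.2 ⟨a.swap, ?_, Prod.swap_swap a⟩)
        rw [Finset.mem_product] at ha
        exact Finset.mem_filter.2 ⟨Finset.mem_product.2 ⟨ha.2, ha.1⟩, h⟩
    have h1 := (Finset.card_le_card hcov).trans (Finset.card_union_le _ _)
    have h2 : #(R.image Prod.swap) ≤ #R := Finset.card_image_le
    rw [Finset.card_product, hI] at h1
    calc m ^ 4 = m ^ 2 * m ^ 2 := by ring
      _ ≤ _ := by omega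
  have hRT : #R ≤ B * #T' := by
    refine Finset.card_le_mul_card_image_of_maps_to (f := fun a => (a.1, s a.2)) ?_ B ?_
    · intro a ha
      obtain ⟨ha, ha'⟩ := Finset.mem_filter.1 ha
      rw [Finset.mem_product] at ha
      exact Finset.mem_filter.2
        ⟨Finset.mem_product.2 ⟨ha.1, Finset.mem_image_of_mem s ha.2⟩, ha'⟩
    · rintro ⟨p, v⟩ -
      refine le_trans ?_ (Nat.le_sqrt'.2 (multiplicity_bound hpos hmono v))
      refine Finset.card_le_card_of_injOn Prod.snd ?_ ?_
      · intro a ha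
        obtain ⟨ha, ha'⟩ := Finset.mem_filter.1 ha
        have := (Finset.mem_product.1 (Finset.mem_filter.1 ha).1).2
        exact Finset.mem_coe.2 (Finset.mem_filter.2 ⟨this, (Prod.ext_iff.1 ha').2⟩)
      · intro a ha b hb hab
        have e1 := (Prod.ext_iff.1 (Finset.mem_filter.1 ha).2).1
        have e2 := (Prod.ext_iff.1 (Finset.mem_filter.1 hb).2).1
        exact Prod.ext (e1.trans e2.symm) hab
  let τ : (ℕ × ℕ) × ℝ → ℝ := fun a => gridPt x m a.1.1 a.1.2 * a.2
  have memT : ∀ a ∈ T', a.1.1 < m ∧ a.1.2 < m ∧ 1 < a.2 ∧ a.2 ≤ s a.1 := by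
    intro a ha
    obtain ⟨ha, ha'⟩ := Finset.mem_filter.1 ha
    obtain ⟨h1, h2⟩ := Finset.mem_product.1 ha
    obtain ⟨p, hp, hp'⟩ := Finset.mem_image.1 h2
    rw [memI] at h1 hp
    exact ⟨h1.1, h1.2, by rw [← hp']; exact one_lt_crossRatio hpos hmono hp.1 hp.2, ha'⟩
  have hlex : ∀ a ∈ T', ∀ b ∈ T', (a.1.1 < b.1.1 ∨ a.1.1 = b.1.1 ∧ a.1.2 < b.1.2) →
      τ a < τ b := by
    intro a ha b hb h
    obtain ⟨a1, a2, a3, a4⟩ := memT a ha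
    obtain ⟨b1, b2, b3, b4⟩ := memT b hb
    have h1 := gridPt_lex hpos hmono a1 b1 a2 b2 h
    rw [gridPt_succ hpos a1 a2] at h1
    have h2 := gridPt_pos hpos a1 a2.le
    have h3 := gridPt_pos hpos b1 b2.le
    calc τ a ≤ gridPt x m a.1.1 a.1.2 * crossRatio x a.1.1 a.1.2 :=
          mul_le_mul_of_nonneg_left a4 h2.le
      _ ≤ gridPt x m b.1.1 b.1.2 := h1
      _ < τ b := lt_mul_of_one_lt_right h3 b3
  have hinj : Set.InjOn τ T' := by
    intro a ha b hb hab
    have n1 : ¬ (a.1.1 < b.1.1 ∨ a.1.1 = b.1.1 ∧ a.1.2 < b.1.2) :=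
      fun h => (hlex a ha b hb h).ne hab
    have n2 : ¬ (b.1.1 < a.1.1 ∨ b.1.1 = a.1.1 ∧ b.1.2 < a.1.2) :=
      fun h => (hlex b hb a ha h).ne hab.symm
    have e1 : a.1 = b.1 := Prod.ext (by omega) (by omega)
    obtain ⟨a1, a2, -, -⟩ := memT a ha
    refine Prod.ext e1 ?_
    simp only [τ, ← e1] at hab
    exact mul_left_cancel₀ (gridPt_pos hpos a1 a2.le).ne' hab
  refine ⟨T'.image τ, ?_, ?_⟩
  · rw [Finset.card_image_of_injOn hinj]
    have hB : B ^ 2 ≤ 3 * m ^ 3 := Nat.sqrt_le' _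
    have h1 : m ^ 4 ≤ 2 * (B * #T') := hR.trans (by omega)
    have h2 : m ^ 3 * m ^ 5 ≤ m ^ 3 * (12 * #T' ^ 2) := by
      calc m ^ 3 * m ^ 5 = (m ^ 4) ^ 2 := by ring
        _ ≤ (2 * (B * #T')) ^ 2 := by gcongr
        _ = 4 * B ^ 2 * #T' ^ 2 := by ring
        _ ≤ 4 * (3 * m ^ 3) * #T' ^ 2 := by gcongr
        _ = _ := by ring
    exact Nat.le_of_mul_le_mul_left h2 (by positivity)
  · intro t ht
    obtain ⟨a, ha, rfl⟩ := Finset.mem_image.1 ht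
    obtain ⟨h1, h2⟩ := Finset.mem_product.1 (Finset.mem_filter.1 ha).1
    obtain ⟨p, hp, hp'⟩ := Finset.mem_image.1 h2
    rw [memI] at h1 hp
    exact ⟨a.1.1, h1.1, a.1.2, h1.2, p.1, hp.1, p.2, hp.2, by simp only [τ, ← hp', s]⟩

/-! ### Covering in commutative groups -/

/-- Ruzsa covering and the pigeonhole principle: some translate of `B / B` meets `A` in a
proportion `1 / K` of its elements. -/
lemma exists_dense_piece {G : Type*} [CommGroup G] [DecidableEq G] {A B : Finset G} {K : ℝ}
    (hA : A.Nonempty) (hB : B.Nonempty) (hK : (#(A * B) : ℝ) ≤ K * #B) :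
    ∃ f : G, (#A : ℝ) ≤ K * #((B / B).filter fun c => f * c ∈ A) := by
  obtain ⟨F, -, hFK, hAF⟩ := Finset.ruzsa_covering_mul hB hK
  by_contra! hcon
  have hFne : F.Nonempty := by
    rcases F.eq_empty_or_nonempty with rfl | h
    · simp at hAF; simp [hAF] at hA
    · exact h
  have hFpos : (0:ℝ) < #F := by exact_mod_cast hFne.card_pos
  have h1 : #A ≤ ∑ f ∈ F, #((B / B).filter fun c => f * c ∈ A) := by
    calc #A ≤ #(F.biUnion fun f => ((B / B).filter fun c => f * c ∈ A).image (f * ·)) := by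
          apply card_le_card
          intro a ha
          obtain ⟨f, hf, c, hc, rfl⟩ := mem_mul.1 (hAF ha)
          simp only [mem_biUnion, mem_image, mem_filter]
          exact ⟨f, hf, c, ⟨hc, ha⟩, rfl⟩
      _ ≤ _ := card_biUnion_le.trans (sum_le_sum fun f _ => card_image_le)
  have h2 : (#A : ℝ) ≤ ∑ f ∈ F, (#((B / B).filter fun c => f * c ∈ A) : ℝ) := by
    exact_mod_cast h1
  have hKpos : 0 < K := hFpos.trans_le hFK
  have h3 : K * ∑ f ∈ F, (#((B / B).filter fun c => f * c ∈ A) : ℝ) < ∑ f ∈ F, (#A : ℝ) := by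
    rw [mul_sum]
    exact sum_lt_sum_of_nonempty hFne fun f _ => hcon f
  rw [sum_const, nsmul_eq_mul] at h3
  have h4 : (#F : ℝ) * #A ≤ K * #A := by gcongr
  nlinarith

/-- A maximal disjoint family of the translates `θ i * D i` inside `Λ` is small, and every other
translate meets one of its members. -/
lemma exists_translate_cover {G ι : Type*} [CommGroup G] [DecidableEq G]
    (I : Finset ι) (θ : ι → G) (D : ι → Finset G) (E Λ : Finset G) (d : ℝ)
    (hE : ∀ i ∈ I, D i ⊆ E) (hΛ : ∀ i ∈ I, ∀ c ∈ D i, θ i * c ∈ Λ)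
    (hd0 : 0 < d) (hd : ∀ i ∈ I, d ≤ #(D i)) :
    ∃ F : Finset G, #F * d ≤ #Λ ∧ ∀ i ∈ I, θ i ∈ F * (E / E) := by
  classical
  let S : Finset (Finset ι) := I.powerset.filter fun J =>
    (J : Set ι).PairwiseDisjoint fun i => (D i).image (θ i * ·)
  have hS : S.Nonempty := ⟨∅, by simp [S]⟩
  obtain ⟨J, hJ, hmax⟩ := S.exists_max_image card hS
  simp only [S, mem_filter, mem_powerset] at hJ hmax
  refine ⟨J.image θ, ?_, ?_⟩
  · have h1 : #(J.biUnion fun i => (D i).image (θ i * ·)) ≤ #Λ := by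
      apply card_le_card
      intro g hg
      simp only [mem_biUnion, mem_image] at hg
      obtain ⟨i, hi, c, hc, rfl⟩ := hg
      exact hΛ i (hJ.1 hi) c hc
    rw [card_biUnion hJ.2] at h1
    have h2 : (#J : ℝ) * d ≤ ∑ i ∈ J, (#((D i).image (θ i * ·)) : ℝ) := by
      rw [← nsmul_eq_mul]
      apply card_nsmul_le_sum
      intro i hi
      rw [card_image_of_injective _ (mul_right_injective _)]
      exact hd i (hJ.1 hi)
    have h3 : (#(J.image θ) : ℝ) ≤ #J := by exact_mod_cast card_image_le
    calc (#(J.image θ) : ℝ) * d ≤ #J * d := by gcongr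
      _ ≤ _ := h2
      _ ≤ _ := by exact_mod_cast h1
  · intro i hi
    have key : ∃ j ∈ J, ∃ c ∈ D i, ∃ c' ∈ D j, θ i * c = θ j * c' := by
      by_cases hij : i ∈ J
      · obtain ⟨c, hc⟩ : (D i).Nonempty := by
          rw [← card_pos]; have := hd i hi; exact_mod_cast hd0.trans_le this
        exact ⟨i, hij, c, hc, c, hc, rfl⟩
      · by_contra! hcon
        have := hmax (insert i J) ⟨insert_subset hi hJ.1, by
          rw [coe_insert, Set.pairwiseDisjoint_insert]
          refine ⟨hJ.2, fun j hj _ => ?_⟩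
          rw [Finset.disjoint_left]
          intro g hg hg'
          simp only [mem_image] at hg hg'
          obtain ⟨c, hc, rfl⟩ := hg
          obtain ⟨c', hc', h⟩ := hg'
          exact hcon j hj c hc c' hc' h.symm⟩
        rw [card_insert_of_notMem hij] at this
        omega
    obtain ⟨j, hj, c, hc, c', hc', h⟩ := key
    have : θ i = θ j * (c' / c) := by
      rw [mul_div_assoc', ← h, mul_div_cancel_right]
    rw [this]
    exact mul_mem_mul (mem_image_of_mem _ hj) (div_mem_div (hE j (hJ.1 hj) hc') (hE i hi hc))

/-- If all weighted products `t x y * A x * A y` lie in a small set `Λ`, then after a rescaling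
`t x y * f x * f y` of the weights all of them lie in a set `Φ` with few quotients of fourfold
products. The set `Φ` is `O(K ^ 2)` translates of a quotient of products of copies of a single
`B = A x₀`, where `K = #Λ / h`, and `#(B * B) ≤ K * #B`, so the Plünnecke–Ruzsa inequality applies. -/
lemma covering {G ι : Type*} [CommGroup G] [DecidableEq G] (X : Finset ι) (hX : X.Nonempty)
    (A : ι → Finset G) (t : ι → ι → G) (Λ : Finset G) (h : ℝ) (hh : 0 < h)
    (hA : ∀ x ∈ X, h ≤ #(A x))
    (hΛ : ∀ x ∈ X, ∀ y ∈ X, ∀ a ∈ A x, ∀ b ∈ A y, t x y * a * b ∈ Λ) :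
    ∃ (f : ι → G) (Φ : Finset G), (∀ x ∈ X, ∀ y ∈ X, t x y * f x * f y ∈ Φ) ∧
      (#(Φ ^ 4 / Φ ^ 4) : ℝ) ≤ (#Λ / h) ^ 80 * #Λ := by
  have hne : ∀ x ∈ X, (A x).Nonempty := fun x hx => by
    rw [← card_pos]; exact_mod_cast hh.trans_le (hA x hx)
  have hAB : ∀ x ∈ X, ∀ y ∈ X, #(A x * A y) ≤ #Λ := by
    intro x hx y hy
    rw [← card_image_of_injective (A x * A y) (mul_right_injective (t x y))]
    apply card_le_card
    intro g hg
    simp only [mem_image] at hg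
    obtain ⟨c, hc, rfl⟩ := hg
    obtain ⟨a, ha, b, hb, rfl⟩ := mem_mul.1 hc
    rw [← mul_assoc]
    exact hΛ x hx y hy a ha b hb
  obtain ⟨x0, hx0⟩ := hX
  obtain ⟨B, hBdef⟩ : ∃ B, B = A x0 := ⟨_, rfl⟩
  have hB : B.Nonempty := hBdef ▸ hne x0 hx0
  have hBh : h ≤ #B := hBdef ▸ hA x0 hx0
  obtain ⟨K, hKdef⟩ : ∃ K : ℝ, K = #Λ / h := ⟨_, rfl⟩
  rw [← hKdef]
  have hAB0 : ∀ x ∈ X, #(A x * B) ≤ #Λ := fun x hx => hBdef ▸ hAB x hx x0 hx0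
  have hBM : #B ≤ #Λ := (card_le_card_mul_right hB).trans (hBdef ▸ hAB x0 hx0 x0 hx0)
  have hMh : (#Λ : ℝ) = K * h := by rw [hKdef]; field_simp
  have hK1 : 1 ≤ K := by
    rw [hKdef, le_div_iff₀ hh, one_mul]; exact hBh.trans (by exact_mod_cast hBM)
  clear hKdef
  have hABK : ∀ x ∈ X, (#(A x * B) : ℝ) ≤ K * #B := by
    intro x hx
    calc (#(A x * B) : ℝ) ≤ #Λ := by exact_mod_cast hAB0 x hx
      _ = K * h := hMh
      _ ≤ K * #B := by gcongr
  choose! f hf using fun x hx => exists_dense_piece (hne x hx) hB (hABK x hx)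
  let C : ι → Finset G := fun x => (B / B).filter fun c => f x * c ∈ A x
  have hC : ∀ x ∈ X, h / K ≤ #(C x) := by
    intro x hx
    rw [div_le_iff₀ (by linarith), mul_comm]
    exact (hA x hx).trans (hf x hx)
  obtain ⟨F, hFd, hF⟩ := exists_translate_cover (X ×ˢ X) (fun p => t p.1 p.2 * f p.1 * f p.2)
    (fun p => C p.1 * C p.2) ((B / B) * (B / B)) Λ (h / K)
    (fun p hp => mul_subset_mul (filter_subset _ _) (filter_subset _ _))
    (by
      rintro ⟨x, y⟩ hp c hc
      rw [mem_product] at hp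
      obtain ⟨a, ha, b, hb, rfl⟩ := mem_mul.1 hc
      have := hΛ x hp.1 y hp.2 _ (mem_filter.1 ha).2 _ (mem_filter.1 hb).2
      convert this using 1
      simp only
      ac_rfl) (by positivity)
    (by
      rintro ⟨x, y⟩ hp
      rw [mem_product] at hp
      refine (hC x hp.1).trans ?_
      have hy : (C y).Nonempty := by
        rw [← card_pos]
        exact_mod_cast (show (0:ℝ) < h / K by positivity).trans_le (hC y hp.2)
      exact_mod_cast card_le_card_mul_right hy)
  have hFK : (#F : ℝ) ≤ K ^ 2 := by
    rw [hMh] at hFd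
    have : (#F : ℝ) * (h / K) * (K / h) ≤ K * h * (K / h) := by gcongr
    have e1 : (#F : ℝ) * (h / K) * (K / h) = #F := by field_simp
    have e2 : K * h * (K / h) = K ^ 2 := by field_simp
    rwa [e1, e2] at this
  refine ⟨f, F * (((B / B) * (B / B)) / ((B / B) * (B / B))), fun x hx y hy =>
    hF (x, y) (mk_mem_product hx hy), ?_⟩
  have hset : (F * (((B / B) * (B / B)) / ((B / B) * (B / B)))) ^ 4 /
      (F * (((B / B) * (B / B)) / ((B / B) * (B / B)))) ^ 4 =
      (F ^ 4 / F ^ 4) * (B ^ 32 / B ^ 32) := by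
    rw [div_mul_div_comm, div_div_div_eq, mul_pow, mul_div_mul_comm, div_pow, div_div_div_eq]
    simp only [← pow_two, ← pow_mul]
    norm_num
  rw [hset]
  have h1 : (#(F ^ 4 / F ^ 4) : ℝ) ≤ K ^ 16 := by
    have : #(F ^ 4 / F ^ 4) ≤ #F ^ 4 * #F ^ 4 :=
      card_div_le.trans (Nat.mul_le_mul card_pow_le card_pow_le)
    calc (#(F ^ 4 / F ^ 4) : ℝ) ≤ (#F : ℝ) ^ 4 * #F ^ 4 := by exact_mod_cast this
      _ ≤ (K ^ 2) ^ 4 * (K ^ 2) ^ 4 := by gcongr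
      _ = K ^ 16 := by ring
  have h2 : (#(B ^ 32 / B ^ 32) : ℝ) ≤ K ^ 64 * #B := by
    have := Finset.pluennecke_ruzsa_inequality_pow_div_pow_mul hB B 32 32
    have h' : (#(B ^ 32 / B ^ 32) : ℝ) ≤ ((#(B * B) : ℝ) / #B) ^ 64 * #B := by
      have h'' := (NNRat.cast_le (K := ℝ)).2 this
      push_cast at h''
      exact h''
    refine h'.trans ?_
    have hb : (0:ℝ) < #B := hh.trans_le hBh
    have : (#(B * B) : ℝ) / #B ≤ K := by rw [div_le_iff₀ hb]; exact hBdef ▸ hABK x0 hx0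
    gcongr
  calc (#(F ^ 4 / F ^ 4 * (B ^ 32 / B ^ 32)) : ℝ)
      ≤ #(F ^ 4 / F ^ 4) * #(B ^ 32 / B ^ 32) := by exact_mod_cast card_mul_le
    _ ≤ K ^ 16 * (K ^ 64 * #B) := mul_le_mul h1 h2 (Nat.cast_nonneg _) (by positivity)
    _ = K ^ 80 * #B := by ring
    _ ≤ K ^ 80 * #Λ := by gcongr

/-! ### Growth against multiplicative structure -/

/-- The bound on the number of slopes. Each product in `superquadratic_growth` is a quotient of
fourfold products of values `1 + x i * x j`; in it the weights `f` of `covering` cancel up to the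
constant `f m / f 0`, so the number of these products is at most `#(Φ ^ 4 / Φ ^ 4)`. -/
lemma slopes_bound (X : Finset ℝ) (m : ℕ) (hm : 0 < m) (hX : #X = m + 1) (hXpos : ∀ x ∈ X, 0 < x)
    (A : ℝ → Finset ℝ) (Λ : Finset ℝ) (h : ℝ) (hh : 0 < h)
    (hA0 : ∀ x ∈ X, ∀ a ∈ A x, a ≠ 0) (hA : ∀ x ∈ X, h ≤ #(A x))
    (hΛ : ∀ x ∈ X, ∀ y ∈ X, ∀ a ∈ A x, ∀ b ∈ A y, (1 + x * y) * a * b ∈ Λ) :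
    (m : ℝ) ^ 5 ≤ 12 * ((#Λ / h) ^ 80 * #Λ) ^ 2 := by
  have hmon : ∀ a b : ℝ, 0 ≤ a → a ≤ b → (a / h) ^ 80 * a ≤ (b / h) ^ 80 * b := by
    intro a b ha hab
    gcongr
  obtain ⟨x, hxX, hmono⟩ : ∃ x : ℕ → ℝ, (∀ i ≤ m, x i ∈ X) ∧
      ∀ i j, i < j → j ≤ m → x i < x j := by
    refine ⟨fun i => if hi : i < m + 1 then X.orderEmbOfFin hX ⟨i, hi⟩ else 0, ?_, ?_⟩
    · intro i hi
      simp only [Nat.lt_succ_of_le hi, dif_pos]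
      exact orderEmbOfFin_mem _ _ _
    · intro i j hij hj
      simp only [Nat.lt_succ_of_le hj, Nat.lt_succ_of_le (hij.le.trans hj), dif_pos]
      exact (X.orderEmbOfFin hX).strictMono hij
  have hpos : ∀ i ≤ m, 0 < x i := fun i hi => hXpos _ (hxX i hi)
  have htpos : ∀ i ≤ m, ∀ j ≤ m, 1 + x i * x j ≠ 0 := fun i hi j hj => by
    have := mul_pos (hpos i hi) (hpos j hj); positivity
  obtain ⟨t, ht⟩ : ∃ t : ℕ → ℕ → ℝˣ, ∀ i ≤ m, ∀ j ≤ m, ((t i j : ℝˣ) : ℝ) = 1 + x i * x j := by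
    refine ⟨fun i j => if hij : 1 + x i * x j ≠ 0 then Units.mk0 _ hij else 1, fun i hi j hj => ?_⟩
    simp only [dif_pos (htpos i hi j hj), Units.val_mk0]
  have hinj : ∀ s : Set ℝˣ, Set.InjOn (Units.val : ℝˣ → ℝ) s := fun s => Units.val_injective.injOn
  let U : Finset ℝ → Finset ℝˣ := fun S => S.preimage Units.val (hinj _)
  have hUle : ∀ S, #(U S) ≤ #S := fun S =>
    card_le_card_of_injOn Units.val (fun u hu => by simpa [U] using hu) (hinj _)
  have hmr : ∀ i, i ∈ range (m + 1) ↔ i ≤ m := fun i => by rw [mem_range]; omega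
  obtain ⟨f, Φ, hΦ, hcard⟩ := covering (range (m + 1)) ⟨0, by simp⟩ (fun i => U (A (x i))) t (U Λ)
    h hh
    (by
      intro i hi
      rw [hmr] at hi
      refine (hA _ (hxX i hi)).trans ?_
      have : A (x i) ⊆ (U (A (x i))).image Units.val := by
        intro a ha
        rw [mem_image]
        exact ⟨Units.mk0 a (hA0 _ (hxX i hi) a ha), by simpa [U] using ha, rfl⟩
      exact_mod_cast (card_le_card this).trans card_image_le)
    (by
      intro i hi j hj a ha b hb
      rw [hmr] at hi hj
      simp only [U, mem_preimage] at ha hb ⊢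
      rw [Units.val_mul, Units.val_mul, ht i hi j hj]
      exact hΛ _ (hxX i hi) _ (hxX j hj) _ ha _ hb)
  obtain ⟨T, hT5, hT⟩ := superquadratic_growth hpos hmono hm
  have hTcard : #T ≤ #(Φ ^ 4 / Φ ^ 4) := by
    have hsub : T.image (fun τ => τ * ((f m : ℝ) / (f 0 : ℝ))) ⊆ (Φ ^ 4 / Φ ^ 4).image Units.val := by
      intro z hz
      obtain ⟨τ, hτ, rfl⟩ := mem_image.1 hz
      obtain ⟨j, hj, l, hl, j', hj', l', hl', rfl⟩ := hT τ hτ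
      have hθ : ∀ i ≤ m, ∀ k ≤ m, t i k * f i * f k ∈ Φ := fun i hi k hk =>
        hΦ i ((hmr i).2 hi) k ((hmr k).2 hk)
      have h4 : ∀ {a b c d : ℝˣ}, a ∈ Φ → b ∈ Φ → c ∈ Φ → d ∈ Φ → a * b * c * d ∈ Φ ^ 4 := by
        intro a b c d ha hb hc hd
        rw [pow_succ, pow_succ, pow_two]
        exact mul_mem_mul (mul_mem_mul (mul_mem_mul ha hb) hc) hd
      rw [mem_image]
      refine ⟨_, div_mem_div
        (h4 (hθ j hj.le m le_rfl) (hθ (j + 1) hj l hl.le) (hθ (j' + 1) hj' (l' + 1) hl')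
          (hθ j' hj'.le l' hl'.le))
        (h4 (hθ j hj.le l hl.le) (hθ (j + 1) hj 0 (Nat.zero_le m)) (hθ (j' + 1) hj' l' hl'.le)
          (hθ j' hj'.le (l' + 1) hl')), ?_⟩
      have n1 := htpos j hj.le l hl.le
      have n2 := htpos (j + 1) hj 0 (Nat.zero_le m)
      have n3 := htpos (j' + 1) hj' l' hl'.le
      have n4 := htpos j' hj'.le (l' + 1) hl'
      simp only [Units.val_div_eq_div_val, Units.val_mul, ht j hj.le m le_rfl,
        ht (j + 1) hj l hl.le, ht (j' + 1) hj' (l' + 1) hl', ht j' hj'.le l' hl'.le,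
        ht j hj.le l hl.le, ht (j + 1) hj 0 (Nat.zero_le m), ht (j' + 1) hj' l' hl'.le,
        ht j' hj'.le (l' + 1) hl', gridPt, crossRatio]
      have f1 := (f j).ne_zero
      have f2 := (f (j + 1)).ne_zero
      have f3 := (f l).ne_zero
      have f4 := (f 0).ne_zero
      have f5 := (f j').ne_zero
      have f6 := (f (j' + 1)).ne_zero
      have f7 := (f l').ne_zero
      have f8 := (f (l' + 1)).ne_zero
      field_simp
    have hne : ((f m : ℝ) / (f 0 : ℝ)) ≠ 0 := div_ne_zero (f m).ne_zero (f 0).ne_zero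
    rw [← card_image_of_injective T (mul_left_injective₀ hne)]
    exact (card_le_card hsub).trans card_image_le
  have hUΛ : (#(U Λ) : ℝ) ≤ #Λ := by exact_mod_cast hUle Λ
  have hT' : (#T : ℝ) ≤ (#Λ / h) ^ 80 * #Λ :=
    calc (#T : ℝ) ≤ #(Φ ^ 4 / Φ ^ 4) := by exact_mod_cast hTcard
      _ ≤ (#(U Λ) / h) ^ 80 * #(U Λ) := hcard
      _ ≤ _ := hmon _ _ (Nat.cast_nonneg _) hUΛ
  calc (m : ℝ) ^ 5 ≤ 12 * (#T : ℝ) ^ 2 := by exact_mod_cast hT5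
    _ ≤ _ := by gcongr

/-! ### Rich lines and the final bound -/

lemma dot_mem {P : Finset (ℝ × ℝ)} {p q : ℝ × ℝ} (hp : p ∈ P) (hq : q ∈ P) :
    p.1 * q.1 + p.2 * q.2 ∈ dotProdSet P :=
  mem_image₂_of_mem hp hq

/-- A line through the origin contains at most `#(dotProdSet P)` points of `P`. -/
lemma card_collinear_le {P Q : Finset (ℝ × ℝ)} (hQ : Q ⊆ P)
    (hpar : ∀ p ∈ Q, ∀ q ∈ Q, p.1 * q.2 = p.2 * q.1) : #Q ≤ #(dotProdSet P) := by
  by_cases hz : ∃ p ∈ Q, p ≠ 0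
  · obtain ⟨p, hp, hp0⟩ := hz
    have hn : 0 < p.1 ^ 2 + p.2 ^ 2 := by
      by_contra hcon
      apply hp0
      have h1 : p.1 = 0 := by nlinarith [sq_nonneg p.1, sq_nonneg p.2]
      have h2 : p.2 = 0 := by nlinarith [sq_nonneg p.1, sq_nonneg p.2]
      exact Prod.ext h1 h2
    refine card_le_card_of_injOn (fun q => p.1 * q.1 + p.2 * q.2)
      (fun q hq => dot_mem (hQ hp) (hQ hq)) ?_
    intro q hq r hr hqr
    have e1 := hpar p hp q hq
    have e2 := hpar p hp r hr
    simp only at hqr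
    -- a vector both orthogonal and parallel to `p ≠ 0` vanishes
    have g1 : (p.1 ^ 2 + p.2 ^ 2) * (q.1 - r.1) = 0 := by
      linear_combination p.1 * hqr - p.2 * e1 + p.2 * e2
    have g2 : (p.1 ^ 2 + p.2 ^ 2) * (q.2 - r.2) = 0 := by
      linear_combination p.2 * hqr + p.1 * e1 - p.1 * e2
    rcases mul_eq_zero.1 g1 with g | g
    · exact absurd g hn.ne'
    rcases mul_eq_zero.1 g2 with g' | g'
    · exact absurd g' hn.ne'
    exact Prod.ext (sub_eq_zero.1 g) (sub_eq_zero.1 g')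
  · push Not at hz
    rcases Q.eq_empty_or_nonempty with rfl | ⟨p, hp⟩
    · simp
    · have : #Q ≤ 1 := card_le_one.2 fun a ha b hb => (hz a ha).trans (hz b hb).symm
      exact this.trans (card_pos.2 ⟨_, dot_mem (hQ hp) (hQ hp)⟩)

/-- The points of `P` off the coordinate axes that lie on the line through the origin of
slope `σ`. -/
noncomputable def onSlope (P : Finset (ℝ × ℝ)) (σ : ℝ) : Finset (ℝ × ℝ) :=
  P.filter fun p => p.1 ≠ 0 ∧ p.2 ≠ 0 ∧ p.2 / p.1 = σ

lemma mem_onSlope {P : Finset (ℝ × ℝ)} {σ : ℝ} {p : ℝ × ℝ} :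
    p ∈ onSlope P σ ↔ p ∈ P ∧ p.1 ≠ 0 ∧ p.2 ≠ 0 ∧ p.2 = σ * p.1 := by
  unfold onSlope
  rw [mem_filter]
  constructor
  · rintro ⟨h, h1, h2, h3⟩; exact ⟨h, h1, h2, by rw [← h3]; field_simp⟩
  · rintro ⟨h, h1, h2, h3⟩; exact ⟨h, h1, h2, by rw [h3]; field_simp⟩

lemma card_onSlope_le (P : Finset (ℝ × ℝ)) (σ : ℝ) : #(onSlope P σ) ≤ #(dotProdSet P) := by
  refine card_collinear_le (filter_subset _ _) fun p hp q hq => ?_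
  rw [(mem_onSlope.1 hp).2.2.2, (mem_onSlope.1 hq).2.2.2]; ring

/-- Few points lie on poor lines through the origin: one point of `P` on each such line serves as
a normal vector in `incidence_bound`. -/
lemma card_poor_le {P : Finset (ℝ × ℝ)} {S : Finset ℝ} {h : ℝ} (hh : 0 ≤ h)
    (hS0 : ∀ σ ∈ S, (onSlope P σ).Nonempty) (hS : ∀ σ ∈ S, (#(onSlope P σ) : ℝ) ≤ h) :
    ((∑ σ ∈ S, #(onSlope P σ) : ℕ) : ℝ) ≤ 12 * #(dotProdSet P) ∨
    ((∑ σ ∈ S, #(onSlope P σ) : ℕ) : ℝ) ^ 2 ≤ 2304 * h * (#(dotProdSet P) : ℝ) ^ 2 := by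
  classical
  choose! r hr using hS0
  have hr' := fun σ hσ => mem_onSlope.1 (hr σ hσ)
  have hrinj : Set.InjOn r S := by
    intro σ hσ τ hτ hst
    have e1 := (hr' σ hσ).2.2.2
    have e2 := (hr' τ hτ).2.2.2
    rw [hst, e2] at e1
    exact (mul_right_cancel₀ (hr' τ hτ).2.1 e1).symm
  set V := S.image r with hVdef
  have hVcard : #V = #S := card_image_of_injOn hrinj
  set Q := S.biUnion (onSlope P) with hQdef
  have hQcard : #Q = ∑ σ ∈ S, #(onSlope P σ) := by
    apply card_biUnion
    intro σ _ τ _ hne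
    refine Finset.disjoint_left.2 ?_
    intro p hp hp'
    have e1 := (mem_onSlope.1 hp)
    have e2 := (mem_onSlope.1 hp')
    exact hne (mul_right_cancel₀ e1.2.1 (e1.2.2.2.symm.trans e2.2.2.2))
  have hQP : Q ⊆ P := biUnion_subset.2 fun σ _ => filter_subset _ _
  have hinc := incidence_bound (V := V) (P := Q) (L := dotProdSet P)
    (by
      intro v hv
      obtain ⟨σ, hσ, rfl⟩ := mem_image.1 hv
      exact (hr' σ hσ).2.2.1)
    (by
      intro v hv w hw hvw
      obtain ⟨σ, hσ, rfl⟩ := mem_image.1 hv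
      obtain ⟨τ, hτ, rfl⟩ := mem_image.1 hw
      congr 1
      rw [(hr' σ hσ).2.2.2, (hr' τ hτ).2.2.2] at hvw
      have n1 := (hr' σ hσ).2.1
      have n2 := (hr' τ hτ).2.1
      apply mul_right_cancel₀ (mul_ne_zero n1 n2)
      linear_combination -hvw)
    (by
      intro v hv p hp
      obtain ⟨σ, hσ, rfl⟩ := mem_image.1 hv
      exact dot_mem (hr' σ hσ).1 (hQP hp))
  rw [← hQcard]
  have hM : ∀ σ, (#(onSlope P σ) : ℝ) ≤ #(dotProdSet P) := fun σ => by
    exact_mod_cast card_onSlope_le P σ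
  have hM0 : (0 : ℝ) ≤ #(dotProdSet P) := Nat.cast_nonneg _
  rcases hinc with h1 | h1 | h1
  · left
    have : (#Q : ℝ) < 2 * #(dotProdSet P) := by exact_mod_cast h1
    linarith
  · left
    have : (#Q : ℝ) ≤ #S * #(dotProdSet P) := by
      rw [hQcard]; push_cast
      rw [← nsmul_eq_mul]
      exact sum_le_card_nsmul _ _ _ fun σ _ => hM σ
    have h2 : (#S : ℝ) ≤ 12 := by rw [← hVcard]; exact_mod_cast h1.le
    nlinarith
  · right
    have h2 : (#Q : ℝ) ≤ #S * h := by
      rw [hQcard]; push_cast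
      rw [← nsmul_eq_mul]
      exact sum_le_card_nsmul _ _ _ hS
    rw [hVcard] at h1
    calc (#Q : ℝ) ^ 2 = #Q * #Q := by ring
      _ ≤ (#S * h) * #Q := by gcongr
      _ = h * (#S * #Q) := by ring
      _ ≤ h * (2304 * (#(dotProdSet P) : ℝ) ^ 2) := by gcongr
      _ = _ := by ring

/-- Many lines through the origin, off the axes, are rich. The constant `36864 = 16 * 2304` makes the
points on poor lines at most a quarter of `P`. -/
lemma rich_slopes (P : Finset (ℝ × ℝ)) (hP : P.Nonempty)
    (hN : (56 : ℝ) * #(dotProdSet P) ≤ #P) :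
    ∃ S : Finset ℝ, (#P : ℝ) ≤ 2 * #S * #(dotProdSet P) ∧ ∀ σ ∈ S, σ ≠ 0 ∧
      (#P : ℝ) ^ 2 / (36864 * (#(dotProdSet P) : ℝ) ^ 2) ≤ #(onSlope P σ) := by
  classical
  have hMpos : (0 : ℝ) < #(dotProdSet P) := by
    obtain ⟨p, hp⟩ := hP
    exact_mod_cast card_pos.2 ⟨_, dot_mem hp hp⟩
  set M : ℝ := (#(dotProdSet P) : ℝ) with hM
  set N : ℝ := (#P : ℝ) with hNdef
  set h : ℝ := N ^ 2 / (36864 * M ^ 2) with hh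
  have hh0 : 0 ≤ h := by positivity
  let Q := P.filter fun p => p.1 ≠ 0 ∧ p.2 ≠ 0
  let S := Q.image fun p => p.2 / p.1
  have hS : ∀ σ ∈ S, σ ≠ 0 ∧ (onSlope P σ).Nonempty := by
    intro σ hσ
    obtain ⟨p, hp, rfl⟩ := mem_image.1 hσ
    obtain ⟨hp, h1, h2⟩ := mem_filter.1 hp
    exact ⟨div_ne_zero h2 h1, p, mem_filter.2 ⟨hp, h1, h2, rfl⟩⟩
  have hQ : N ≤ 2 * M + #Q := by
    have h1 : #(P.filter fun p => p.1 = 0) ≤ #(dotProdSet P) :=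
      card_collinear_le (filter_subset _ _) fun p hp q hq => by
        rw [(mem_filter.1 hp).2, (mem_filter.1 hq).2]; ring
    have h2 : #(P.filter fun p => p.2 = 0) ≤ #(dotProdSet P) :=
      card_collinear_le (filter_subset _ _) fun p hp q hq => by
        rw [(mem_filter.1 hp).2, (mem_filter.1 hq).2]; ring
    have h3 : P ⊆ (P.filter fun p => p.1 = 0) ∪ (P.filter fun p => p.2 = 0) ∪ Q := by
      intro p hp
      simp only [Q, mem_union, mem_filter]
      tauto
    have h4 : #P ≤ #(dotProdSet P) + #(dotProdSet P) + #Q :=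
      (card_le_card h3).trans ((card_union_le _ _).trans
        (Nat.add_le_add_right ((card_union_le _ _).trans (Nat.add_le_add h1 h2)) _))
    have h5 : N ≤ M + M + #Q := by rw [hNdef, hM]; exact_mod_cast h4
    linarith
  have hQS : #Q = ∑ σ ∈ S, #(onSlope P σ) := by
    rw [card_eq_sum_card_image (fun p => p.2 / p.1) Q]
    refine sum_congr rfl fun σ _ => ?_
    congr 1
    ext p
    simp only [Q, onSlope, mem_filter, and_assoc]
  refine ⟨S.filter fun σ => h ≤ #(onSlope P σ), ?_, fun σ hσ =>
    ⟨(hS σ (mem_filter.1 hσ).1).1, (mem_filter.1 hσ).2⟩⟩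
  rw [← sum_filter_add_sum_filter_not S (fun σ => h ≤ #(onSlope P σ))] at hQS
  have hrich : ((∑ σ ∈ S.filter (fun σ => h ≤ #(onSlope P σ)), #(onSlope P σ) : ℕ) : ℝ) ≤
      #(S.filter (fun σ => h ≤ #(onSlope P σ))) * M := by
    push_cast
    rw [← nsmul_eq_mul]
    refine sum_le_card_nsmul _ _ _ fun σ _ => ?_
    rw [hM]; exact_mod_cast card_onSlope_le P σ
  have hpoor := card_poor_le (P := P) (S := S.filter (fun σ => ¬ h ≤ #(onSlope P σ))) hh0
    (fun σ hσ => (hS σ (mem_filter.1 hσ).1).2) (fun σ hσ => (not_le.1 (mem_filter.1 hσ).2).le)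
  have hQS' : (#Q : ℝ) =
      ((∑ σ ∈ S.filter (fun σ => h ≤ #(onSlope P σ)), #(onSlope P σ) : ℕ) : ℝ) +
      ((∑ σ ∈ S.filter (fun σ => ¬ h ≤ #(onSlope P σ)), #(onSlope P σ) : ℕ) : ℝ) := by
    exact_mod_cast hQS
  set Z : ℝ := ((∑ σ ∈ S.filter (fun σ => ¬ h ≤ #(onSlope P σ)), #(onSlope P σ) : ℕ) : ℝ)
  have hZ : Z ≤ N / 4 := by
    rcases hpoor with h1 | h1
    · linarith
    · have : 2304 * h * M ^ 2 = (N / 4) ^ 2 := by rw [hh]; field_simp; ring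
      rw [← hM, this] at h1
      exact le_of_sq_le_sq h1 (by positivity)
  nlinarith

/-- `slopes_bound` for slopes of one sign `s = ±1`: the product of two slopes equals that of their
absolute values. -/
lemma sign_bound (P : Finset (ℝ × ℝ)) (s : ℝ) (hs : s * s = 1) (X : Finset ℝ) (m : ℕ) (hm : 0 < m)
    (hX : m + 1 ≤ #X) (h : ℝ) (hh : 0 < h)
    (hXs : ∀ σ ∈ X, 0 < s * σ ∧ h ≤ #(onSlope P σ)) :
    (m : ℝ) ^ 5 ≤ 12 * ((#(dotProdSet P) / h) ^ 80 * #(dotProdSet P)) ^ 2 := by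
  classical
  have hs0 : s ≠ 0 := by rintro rfl; simp at hs
  have hcard : m + 1 ≤ #(X.image (s * ·)) := by
    rwa [card_image_of_injective _ (mul_right_injective₀ hs0)]
  obtain ⟨Y, hYX, hY⟩ := exists_subset_card_eq hcard
  have hY' : ∀ y ∈ Y, 0 < y ∧ h ≤ #(onSlope P (s * y)) := by
    intro y hy
    obtain ⟨σ, hσ, rfl⟩ := mem_image.1 (hYX hy)
    rw [← mul_assoc, hs, one_mul]
    exact hXs σ hσ
  refine slopes_bound Y m hm hY (fun y hy => (hY' y hy).1)
    (fun y => (onSlope P (s * y)).image Prod.fst) (dotProdSet P) h hh ?_ ?_ ?_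
  · intro y _ a ha
    obtain ⟨p, hp, rfl⟩ := mem_image.1 ha
    exact (mem_onSlope.1 hp).2.1
  · intro y hy
    rw [card_image_of_injOn]
    · exact (hY' y hy).2
    · intro p hp q hq hpq
      refine Prod.ext hpq ?_
      rw [(mem_onSlope.1 hp).2.2.2, (mem_onSlope.1 hq).2.2.2, hpq]
  · intro x _ y _ a ha b hb
    obtain ⟨p, hp, rfl⟩ := mem_image.1 ha
    obtain ⟨q, hq, rfl⟩ := mem_image.1 hb
    have hp := mem_onSlope.1 hp
    have hq := mem_onSlope.1 hq
    have := dot_mem hp.1 hq.1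
    rw [hp.2.2.2, hq.2.2.2] at this
    convert this using 1
    linear_combination (-(x * y * p.1 * q.1)) * hs

/-- The polynomial form of the main bound when there are few dot products. With `N = #P`,
`M = #(dotProdSet P)`, `K = 36864 * M ^ 3 / N ^ 2` and at least `N / (8 * M)` slopes of one sign,
`slopes_bound` reads `(N / (8 * M)) ^ 5 ≤ 12 * (K ^ 80 * M) ^ 2`. -/
lemma poly_bound_of_small (P : Finset (ℝ × ℝ)) (hP : P.Nonempty)
    (hN : (56 : ℝ) * #(dotProdSet P) ≤ #P) :
    (#P : ℝ) ^ 325 ≤ (12 * 8 ^ 5 * 36864 ^ 160) * (#(dotProdSet P) : ℝ) ^ 487 := by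
  classical
  obtain ⟨S, hS1, hS2⟩ := rich_slopes P hP hN
  have hMpos : (0 : ℝ) < #(dotProdSet P) := by
    obtain ⟨p, hp⟩ := hP
    exact_mod_cast card_pos.2 ⟨_, dot_mem hp hp⟩
  have hNpos : (0 : ℝ) < #P := by exact_mod_cast hP.card_pos
  have hsplit : S = S.filter (fun σ => 0 < (1 : ℝ) * σ) ∪ S.filter (fun σ => 0 < (-1 : ℝ) * σ) := by
    ext σ
    simp only [mem_union, mem_filter, ← and_or_left]
    refine ⟨fun hσ => ⟨hσ, ?_⟩, fun hσ => hσ.1⟩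
    rcases lt_or_gt_of_ne (hS2 σ hσ).1 with h | h
    · right; linarith
    · left; linarith
  obtain ⟨s, hs, hcard⟩ : ∃ s : ℝ, s * s = 1 ∧ #S ≤ 2 * #(S.filter fun σ => 0 < s * σ) := by
    have h1 : #S ≤ #(S.filter (fun σ => 0 < (1 : ℝ) * σ)) +
        #(S.filter (fun σ => 0 < (-1 : ℝ) * σ)) := by
      conv_lhs => rw [hsplit]
      exact card_union_le _ _
    rcases le_total #(S.filter (fun σ => 0 < (1 : ℝ) * σ))
      #(S.filter (fun σ => 0 < (-1 : ℝ) * σ)) with h | h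
    · exact ⟨-1, by norm_num, by omega⟩
    · exact ⟨1, by norm_num, by omega⟩
  set X := S.filter fun σ => 0 < s * σ with hXdef
  obtain ⟨M, hM⟩ : ∃ M : ℝ, M = #(dotProdSet P) := ⟨_, rfl⟩
  obtain ⟨N, hNdef⟩ : ∃ N : ℝ, N = #P := ⟨_, rfl⟩
  have hX4 : N ≤ 4 * #X * M := by
    have : (#S : ℝ) ≤ 2 * #X := by exact_mod_cast hcard
    rw [← hM, ← hNdef] at hS1
    rw [← hM] at hMpos
    nlinarith
  rw [← hM] at hMpos hN hS2
  rw [← hNdef] at hNpos hN hS2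
  have hX14 : (14 : ℝ) ≤ #X := by nlinarith
  have hX14' : 14 ≤ #X := by exact_mod_cast hX14
  have hmcast : ((#X - 1 : ℕ) : ℝ) = #X - 1 := by
    rw [Nat.cast_sub (by omega)]; simp
  have hmain := sign_bound P s hs X (#X - 1) (by omega) (by omega) (N ^ 2 / (36864 * M ^ 2))
    (by positivity) (fun σ hσ => ⟨(mem_filter.1 hσ).2, (hS2 σ (mem_filter.1 hσ).1).2⟩)
  rw [← hM, hmcast] at hmain
  rw [← hM, ← hNdef]
  have hm8 : N / (8 * M) ≤ #X - 1 := by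
    rw [div_le_iff₀ (by positivity)]
    nlinarith
  have h5 : (N / (8 * M)) ^ 5 ≤ 12 * ((M / (N ^ 2 / (36864 * M ^ 2))) ^ 80 * M) ^ 2 :=
    (pow_le_pow_left₀ (by positivity) hm8 5).trans hmain
  -- an abstract letter keeps the large power of 36864 unevaluated
  generalize (36864 : ℝ) = q at h5 ⊢
  have e : 12 * ((M / (N ^ 2 / (q * M ^ 2))) ^ 80 * M) ^ 2 = 12 * q ^ 160 * M ^ 482 / N ^ 320 := by
    have : M / (N ^ 2 / (q * M ^ 2)) = q * M ^ 3 / N ^ 2 := by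
      rw [div_div_eq_mul_div]; ring
    rw [this, div_pow, div_mul_eq_mul_div, div_pow, ← pow_mul, ← pow_mul]
    ring
  rw [e, div_pow, div_le_div_iff₀ (by positivity) (by positivity)] at h5
  calc N ^ 325 = N ^ 5 * N ^ 320 := by ring
    _ ≤ _ := h5
    _ = _ := by ring

lemma poly_bound : ∃ Q : ℝ, 0 < Q ∧ ∀ P : Finset (ℝ × ℝ), P.Nonempty →
    (#P : ℝ) ^ 325 ≤ Q * (#(dotProdSet P) : ℝ) ^ 487 := by
  refine ⟨56 ^ 325 + 12 * 8 ^ 5 * 36864 ^ 160, by positivity, fun P hP => ?_⟩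
  have hM1 : (1 : ℝ) ≤ #(dotProdSet P) := by
    obtain ⟨p, hp⟩ := hP
    exact_mod_cast card_pos.2 ⟨_, dot_mem hp hp⟩
  rw [add_mul]
  rcases le_total ((56 : ℝ) * #(dotProdSet P)) #P with h | h
  · exact (poly_bound_of_small P hP h).trans (le_add_of_nonneg_left (by positivity))
  · refine le_trans ?_ (le_add_of_nonneg_right (by positivity))
    calc (#P : ℝ) ^ 325 ≤ (56 * #(dotProdSet P)) ^ 325 := by gcongr
      _ = 56 ^ 325 * (#(dotProdSet P) : ℝ) ^ 325 := mul_pow _ _ _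
      _ ≤ _ := by
        refine mul_le_mul_of_nonneg_left ?_ (by positivity)
        exact pow_le_pow_right₀ hM1 (by norm_num)

theorem dot_products_lower_bound :
    ∃ c C : ℝ, 0 < c ∧ 0 < C ∧
      ∀ P : Finset (ℝ × ℝ), 2 ≤ P.card →
        c * (P.card : ℝ) ^ ((2 : ℝ) / 3 + 1 / 3057) / (Real.log P.card) ^ C ≤
          ((dotProdSet P).card : ℝ) := by
  obtain ⟨Q, hQ, hbound⟩ := poly_bound
  have hlog2 : 0 < Real.log 2 := Real.log_pos (by norm_num)
  refine ⟨Real.log 2 * (Q⁻¹) ^ ((1 : ℝ) / 487), 1, by positivity, one_pos, fun P hP => ?_⟩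
  have hN : (2 : ℝ) ≤ #P := by exact_mod_cast hP
  have hN0 : (0 : ℝ) < #P := by linarith
  have hlog : Real.log 2 ≤ Real.log #P := Real.log_le_log (by norm_num) hN
  have hM0 : (0 : ℝ) ≤ #(dotProdSet P) := Nat.cast_nonneg _
  have hb := hbound P (card_pos.1 (by omega))
  have h1 : (Q⁻¹) ^ ((1 : ℝ) / 487) * (#P : ℝ) ^ ((325 : ℝ) / 487) ≤ #(dotProdSet P) := by
    have h2 : Q⁻¹ * (#P : ℝ) ^ 325 ≤ (#(dotProdSet P) : ℝ) ^ 487 := by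
      rw [inv_mul_le_iff₀ hQ]; exact hb
    have h3 := Real.rpow_le_rpow (by positivity) h2 (show (0 : ℝ) ≤ 1 / 487 by norm_num)
    rw [Real.mul_rpow (by positivity) (by positivity), ← Real.rpow_natCast, ← Real.rpow_mul hN0.le,
      ← Real.rpow_natCast, ← Real.rpow_mul hM0] at h3
    norm_num at h3 ⊢
    exact h3
  rw [Real.rpow_one, div_le_iff₀ (hlog2.trans_le hlog)]
  have h4 : (#P : ℝ) ^ ((2 : ℝ) / 3 + 1 / 3057) ≤ (#P : ℝ) ^ ((325 : ℝ) / 487) :=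
    Real.rpow_le_rpow_of_exponent_le (by linarith) (by norm_num)
  calc Real.log 2 * (Q⁻¹) ^ ((1 : ℝ) / 487) * (#P : ℝ) ^ ((2 : ℝ) / 3 + 1 / 3057)
      ≤ Real.log 2 * ((Q⁻¹) ^ ((1 : ℝ) / 487) * (#P : ℝ) ^ ((325 : ℝ) / 487)) := by
        rw [mul_assoc]; gcongr
    _ ≤ Real.log 2 * #(dotProdSet P) := by gcongr
    _ ≤ #(dotProdSet P) * Real.log #P := by rw [mul_comm]; gcongr
end

section
/- There exist absolute constants c > 0 and C > 0 such that for every finite set X of positive reals with |X| ≥ 2, there exist z, z' ∈ X such that the ratio set (zX+1)^{(2)}(z'X+1)^{(2)} / ((zX+1)^{(2)}(z'X+1)) has cardinality at least c · |X|^{5/2} / (log |X|)^C. -/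
/-!
The bound proved is cubic, `|X| ^ 3 ≪ |ratio set|`, which is stronger than needed. Enumerate `X`
increasingly as `x_0 < x_1 < ⋯ < x_n` and, for a suitable `k`, take `z = x_k`, `z' = x_{k+1}`.
The ratio set contains all products `(x_k x_j + 1) · g(l) · m(i)`, where
`g(l) = (x_{k+1} x_l + 1) / (x_k x_l + 1)` (`gapRatio x k l`) is increasing in `l` and
`m(i) = g(i+1) / g(i) > 1` (`mixedRatio x i k`). The argument is a two-level squeeze: if
`m(i) ≤ m(l)`, then `g(l) m(i)` lies in `(g(l), g(l+1)]`; if moreover `l < k` and the `j`-th ratio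
of consecutive elements of `x_k X + 1` is at least the `k`-th one, which is `g(k)`, then the whole
product lies in `(x_k x_j + 1, x_k x_{j+1} + 1]`. Hence the product determines `j`, then `l`, then
the value `m(i)` (`card_ratio_set_ge`).

It remains to choose `k` so that each of these parameters has `≫ n` values (`exists_good_index`).
* By Cauchy–Schwarz, for all `j, k`, either `j` is admissible for `k` or `k` is admissible for `j`
  (`gapRatio_total`), so as in a tournament most `k` have `≫ n` admissible `j`.
* For `i ≠ i'`, the equation `m(i) = m(i')` holds for at most two `k`
  (`card_mixedRatio_collisions`), so most `k` have `O(n)` coincidences among the `m(i)`, and thus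
  `≫ n` distinct values of `m`.
-/

open Finset Pointwise

/-- For `z : ℝ` and a finite set `X ⊆ ℝ`, the set `zX + 1 = {z * x + 1 : x ∈ X}`. -/
noncomputable def pshift (z : ℝ) (X : Finset ℝ) : Finset ℝ := X.image fun x => z * x + 1

/-- `gapRatio x j k = (x_k x_{j+1} + 1) / (x_k x_j + 1)`, the multiplicative gap between
consecutive elements of `x_k X + 1`. -/
noncomputable def gapRatio (x : ℕ → ℝ) (j k : ℕ) : ℝ :=
  (x k * x (j + 1) + 1) / (x k * x j + 1)

/-- The mixed ratio
`(x_{i+1} x_{k+1} + 1)(x_i x_k + 1) / ((x_{i+1} x_k + 1)(x_i x_{k+1} + 1))`, a multiplicative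
second difference of `(s, t) ↦ st + 1`. -/
noncomputable def mixedRatio (x : ℕ → ℝ) (i k : ℕ) : ℝ :=
  gapRatio x k (i + 1) / gapRatio x k i

/-! ### Ratios of shifted products -/

section Ratios

variable {x : ℕ → ℝ}

lemma gapRatio_pos (hpos : ∀ k, 0 < x k) (j k : ℕ) : 0 < gapRatio x j k := by
  have h1 := hpos k; have h2 := hpos j; have h3 := hpos (j + 1)
  unfold gapRatio; positivity

lemma one_lt_gapRatio (hpos : ∀ k, 0 < x k) (hx : StrictMono x) (j k : ℕ) :
    1 < gapRatio x j k := by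
  have h1 := hpos k; have h2 := hpos j
  have h3 : x j < x (j + 1) := hx (Nat.lt_succ_self j)
  unfold gapRatio
  rw [one_lt_div (by positivity)]
  nlinarith

lemma gapRatio_strictMono (hpos : ∀ k, 0 < x k) (hx : StrictMono x) (k : ℕ) :
    StrictMono (gapRatio x k) := by
  intro l m hlm
  have h1 := hpos l; have h2 := hpos m; have h4 := hpos k; have h5 := hpos (k + 1)
  have h3 : x k < x (k + 1) := hx (Nat.lt_succ_self k)
  have h6 := hx hlm
  unfold gapRatio
  rw [div_lt_div_iff₀ (by positivity) (by positivity)]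
  nlinarith [mul_pos (sub_pos.2 h3) (sub_pos.2 h6)]

lemma one_lt_mixedRatio (hpos : ∀ k, 0 < x k) (hx : StrictMono x) (i k : ℕ) :
    1 < mixedRatio x i k := by
  unfold mixedRatio
  rw [one_lt_div (gapRatio_pos hpos _ _)]
  exact gapRatio_strictMono hpos hx k (Nat.lt_succ_self i)

lemma gapRatio_mul_mixedRatio (hpos : ∀ k, 0 < x k) (i k : ℕ) :
    gapRatio x k i * mixedRatio x i k = gapRatio x k (i + 1) := by
  unfold mixedRatio
  exact mul_div_cancel₀ _ (gapRatio_pos hpos _ _).ne'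

/-- If both alternatives failed, multiplying the two inequalities would give
`(x_j² + 1)(x_k² + 1) < (x_j x_k + 1)²`, against Cauchy–Schwarz. -/
lemma gapRatio_total (hpos : ∀ k, 0 < x k) (hx : StrictMono x) (j k : ℕ) :
    gapRatio x k k ≤ gapRatio x j k ∨ gapRatio x j j ≤ gapRatio x k j := by
  by_contra! h
  obtain ⟨h1, h2⟩ := h
  have pj := hpos j; have pk := hpos k
  have dj : 0 < x (j + 1) - x j := sub_pos.2 (hx (Nat.lt_succ_self j))
  have dk : 0 < x (k + 1) - x k := sub_pos.2 (hx (Nat.lt_succ_self k))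
  unfold gapRatio at h1 h2
  rw [div_lt_div_iff₀ (by positivity) (by positivity)] at h1 h2
  have e1 : (x (j + 1) - x j) * (x k * x k + 1) < (x (k + 1) - x k) * (x k * x j + 1) := by
    refine lt_of_mul_lt_mul_left ?_ pk.le
    linarith
  have e2 : (x (k + 1) - x k) * (x j * x j + 1) < (x (j + 1) - x j) * (x k * x j + 1) := by
    refine lt_of_mul_lt_mul_left ?_ pj.le
    linarith
  have e3 := mul_lt_mul'' e1 e2 (by positivity) (by positivity)
  have e4 : (x k * x k + 1) * (x j * x j + 1) < (x k * x j + 1) * (x k * x j + 1) := by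
    refine lt_of_mul_lt_mul_left ?_ (mul_pos dj dk).le
    linarith
  nlinarith [sq_nonneg (x k - x j)]

/-- A symmetric bilinear relation `α + β (u + v) + γ u v = 0` that holds for three pairs `(u, v)`
spanning non-overlapping intervals is trivial: its determinant is positive. -/
lemma bilinear_relation_trivial {α β γ u₁ v₁ u₂ v₂ u₃ v₃ : ℝ}
    (h₁ : u₁ < v₁) (h₁₂ : v₁ ≤ u₂) (h₂ : u₂ < v₂) (h₂₃ : v₂ ≤ u₃) (h₃ : u₃ < v₃)
    (e₁ : α + β * (u₁ + v₁) + γ * (u₁ * v₁) = 0)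
    (e₂ : α + β * (u₂ + v₂) + γ * (u₂ * v₂) = 0)
    (e₃ : α + β * (u₃ + v₃) + γ * (u₃ * v₃) = 0) : α = 0 ∧ β = 0 ∧ γ = 0 := by
  obtain ⟨a, ha, rfl⟩ : ∃ a, 0 < a ∧ v₁ = u₁ + a := ⟨v₁ - u₁, by linarith, by ring⟩
  obtain ⟨b, hb, rfl⟩ : ∃ b, 0 ≤ b ∧ u₂ = u₁ + a + b := ⟨u₂ - (u₁ + a), by linarith, by ring⟩
  obtain ⟨c, hc, rfl⟩ : ∃ c, 0 < c ∧ v₂ = u₁ + a + b + c :=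
    ⟨v₂ - (u₁ + a + b), by linarith, by ring⟩
  obtain ⟨d, hd, rfl⟩ : ∃ d, 0 ≤ d ∧ u₃ = u₁ + a + b + c + d :=
    ⟨u₃ - (u₁ + a + b + c), by linarith, by ring⟩
  obtain ⟨e, he, rfl⟩ : ∃ e, 0 < e ∧ v₃ = u₁ + a + b + c + d + e :=
    ⟨v₃ - (u₁ + a + b + c + d), by linarith, by ring⟩
  -- The determinant of the three rows `(1, u + v, u v)`, written with manifestly positive terms.
  have hdet : 0 < (a + b + c) * ((c + d) * (c + d + e))
      + b * ((a + b) * (c + 2 * d + e) + (c + d) * (c + d + e)) := by positivity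
  have hγ : γ = 0 := by
    refine (mul_eq_zero.1 ?_).resolve_right hdet.ne'
    linear_combination (a + 2 * b + c) * (e₃ - e₁) - (a + 2 * b + 2 * c + 2 * d + e) * (e₂ - e₁)
  subst hγ
  have hβ : β = 0 := by
    have h : 0 < a + 2 * b + c := by positivity
    refine (mul_eq_zero.1 ?_).resolve_right h.ne'
    linear_combination e₂ - e₁
  subst hβ
  exact ⟨by linarith, rfl, rfl⟩

/-- For `i ≠ i'` the equation `mixedRatio x i k = mixedRatio x i' k` says that a nonconstant
rational function of degree two takes the same value at `x_k` and `x_{k+1}`. Dividing by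
`x_{k+1} - x_k` leaves a nontrivial symmetric bilinear relation between `x_k` and `x_{k+1}`, which
holds for at most two indices `k`. -/
lemma card_mixedRatio_collisions (hpos : ∀ k, 0 < x k) (hx : StrictMono x) {i i' : ℕ}
    (hne : i ≠ i') (n : ℕ) :
    #{k ∈ range n | mixedRatio x i k = mixedRatio x i' k} ≤ 2 := by
  set p := x i with hp
  set q := x (i + 1) with hq
  set p' := x i' with hp'
  set q' := x (i' + 1) with hq'
  have pp : 0 < p := hpos _
  have pq : 0 < q := hpos _
  have pp' : 0 < p' := hpos _
  have pq' : 0 < q' := hpos _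
  have hrel : ∀ k, mixedRatio x i k = mixedRatio x i' k →
      (q + p' - (p + q')) + (q * p' - p * q') * (x k + x (k + 1))
        + (q * p' * (p + q') - (q + p') * (p * q')) * (x k * x (k + 1)) = 0 := by
    intro k h
    have hu := hpos k
    have hv := hpos (k + 1)
    have huv : x (k + 1) - x k ≠ 0 := (sub_pos.2 (hx (Nat.lt_succ_self k))).ne'
    unfold mixedRatio gapRatio at h
    rw [← hp, ← hq, ← hp', ← hq'] at h
    rw [div_div_div_eq, div_div_div_eq, div_eq_div_iff (by positivity) (by positivity)] at h
    apply mul_left_cancel₀ huv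
    linear_combination h
  have key : ∀ a b c : ℕ, a < b → b < c → mixedRatio x i a = mixedRatio x i' a →
      mixedRatio x i b = mixedRatio x i' b → mixedRatio x i c = mixedRatio x i' c → False := by
    intro a b c hab hbc ea eb ec
    obtain ⟨h1, h2, -⟩ := bilinear_relation_trivial (hx (Nat.lt_succ_self a))
      (hx.monotone (Nat.succ_le_of_lt hab)) (hx (Nat.lt_succ_self b))
      (hx.monotone (Nat.succ_le_of_lt hbc)) (hx (Nat.lt_succ_self c))
      (hrel a ea) (hrel b eb) (hrel c ec)
    -- The pairs `{q, p'}` and `{p, q'}` have equal sums and products, and `q ≠ p`.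
    have h3 : (q - p) * (p' - p) = 0 := by linear_combination p * h1 * (-1) + h2
    have hqp : q - p ≠ 0 := (sub_pos.2 (hx (Nat.lt_succ_self i))).ne'
    have h4 : p' - p = 0 := (mul_eq_zero.1 h3).resolve_left hqp
    exact hne (hx.injective (by linarith))
  by_contra! hcard
  obtain ⟨a, b, c, ha, hb, hc, hab, hac, hbc⟩ := Finset.two_lt_card_iff.1 hcard
  simp only [mem_filter] at ha hb hc
  have ha := ha.2
  have hb := hb.2
  have hc := hc.2
  rcases lt_or_gt_of_ne hab with h1 | h1 <;> rcases lt_or_gt_of_ne hac with h2 | h2 <;>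
    rcases lt_or_gt_of_ne hbc with h3 | h3
  · exact key a b c h1 h3 ha hb hc
  · exact key a c b h2 h3 ha hc hb
  · omega
  · exact key c a b h2 h1 hc ha hb
  · exact key b a c h1 h2 hb ha hc
  · omega
  · exact key b c a h3 h2 hb hc ha
  · exact key c b a h3 h1 hc hb ha

end Ratios

/-! ### Counting pairs -/

lemma card_sq_le_of_total {ι : Type*} (S : Finset ι) (P : ι → ι → Prop)
    [DecidableRel P] (h : ∀ a ∈ S, ∀ b ∈ S, P a b ∨ P b a) :
    #S ^ 2 ≤ 2 * #{p ∈ S ×ˢ S | P p.1 p.2} := by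
  classical
  have hswap : #{p ∈ S ×ˢ S | P p.2 p.1} = #{p ∈ S ×ˢ S | P p.1 p.2} := by
    refine Finset.card_nbij' Prod.swap Prod.swap ?_ ?_ ?_ ?_ <;>
      (intro p hp; simp_all)
  have hU : S ×ˢ S ⊆ {p ∈ S ×ˢ S | P p.1 p.2} ∪ {p ∈ S ×ˢ S | P p.2 p.1} := by
    intro p hp
    have hp' := mem_product.1 hp
    rcases h _ hp'.1 _ hp'.2 with h1 | h1 <;> simp_all
  have h1 := (card_le_card hU).trans (card_union_le _ _)
  rw [card_product, hswap] at h1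
  nlinarith

/-- Cauchy–Schwarz: few collisions force a large image. -/
lemma card_sq_le_card_image_mul {ι : Type*} [DecidableEq ι] (S : Finset ι) (f : ι → ℝ) :
    #S ^ 2 ≤ #(S.image f) * (#S + #{p ∈ S ×ˢ S | p.1 ≠ p.2 ∧ f p.1 = f p.2}) := by
  have h1 : #S = ∑ v ∈ S.image f, #{a ∈ S | f a = v} :=
    card_eq_sum_card_image f S
  have h2 := sq_sum_le_card_mul_sum_sq (s := S.image f) (f := fun v => #{a ∈ S | f a = v})
  rw [← h1] at h2
  refine h2.trans (Nat.mul_le_mul_left _ ?_)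
  have h3 : ∑ v ∈ S.image f, #{a ∈ S | f a = v} ^ 2 = #{p ∈ S ×ˢ S | f p.1 = f p.2} := by
    rw [card_eq_sum_card_fiberwise (f := fun p : ι × ι => f p.1) (t := S.image f)]
    · refine sum_congr rfl fun v _ => ?_
      rw [sq, ← card_product]
      congr 1
      ext p
      simp only [mem_product, mem_filter]
      constructor
      · rintro ⟨⟨a, b⟩, c, d⟩
        exact ⟨⟨⟨a, c⟩, b.trans d.symm⟩, b⟩
      · rintro ⟨⟨⟨a, c⟩, b⟩, d⟩
        exact ⟨⟨a, d⟩, c, b ▸ d⟩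
    · intro p hp
      simp only [coe_filter, mem_product, Set.mem_ofPred_eq] at hp
      exact mem_coe.2 (mem_image_of_mem f hp.1.1)
  rw [h3]
  have hU : {p ∈ S ×ˢ S | f p.1 = f p.2} ⊆
      S.diag ∪ {p ∈ S ×ˢ S | p.1 ≠ p.2 ∧ f p.1 = f p.2} := by
    rintro ⟨a, b⟩ hp
    simp only [mem_filter, mem_product, mem_union, mem_diag] at hp ⊢
    by_cases hab : a = b
    · exact Or.inl ⟨hp.1.1, hab⟩
    · exact Or.inr ⟨hp.1, hab, hp.2⟩
  have := (card_le_card hU).trans (card_union_le _ _)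
  rwa [diag_card] at this

/-! ### Choice of the two shifts -/

/-- For some `k`, three things hold together: `k` is not small, a positive proportion of gaps of
`x_k X + 1` is at least as long as the `k`-th one, and the values `mixedRatio x i k` have few
coincidences. -/
lemma exists_good_index {x : ℕ → ℝ} (hpos : ∀ k, 0 < x k) (hx : StrictMono x) {n : ℕ}
    (hn : 4 ≤ n) :
    ∃ k < n, n ≤ 4 * k ∧ n ≤ 8 * #{j ∈ range n | gapRatio x k k ≤ gapRatio x j k} ∧
      #{p ∈ range n ×ˢ range n | p.1 ≠ p.2 ∧ mixedRatio x p.1 k = mixedRatio x p.2 k}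
        ≤ 8 * n := by
  classical
  set T : ℕ → ℕ := fun k => #{j ∈ range n | gapRatio x k k ≤ gapRatio x j k} with hT
  set E : ℕ → ℕ := fun k =>
    #{p ∈ range n ×ˢ range n | p.1 ≠ p.2 ∧ mixedRatio x p.1 k = mixedRatio x p.2 k} with hE
  set B₁ := {k ∈ range n | 4 * k < n} with hB₁
  set B₂ := {k ∈ range n | 8 * T k < n} with hB₂
  set B₃ := {k ∈ range n | 8 * n < E k} with hB₃
  have c₁ : 4 * #B₁ ≤ n + 3 := by
    have : B₁ ⊆ range ((n + 3) / 4) := by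
      intro k hk
      simp only [hB₁, mem_filter, mem_range] at hk ⊢
      omega
    have := card_le_card this
    rw [card_range] at this
    omega
  have c₂ : 4 * #B₂ ≤ n := by
    have h1 := card_sq_le_of_total B₂ (fun k j => gapRatio x k k ≤ gapRatio x j k)
      (fun a _ b _ => gapRatio_total hpos hx b a)
    have h2 : #{p ∈ B₂ ×ˢ B₂ | gapRatio x p.1 p.1 ≤ gapRatio x p.2 p.1} ≤ ∑ k ∈ B₂, T k := by
      rw [card_filter, sum_product]
      refine sum_le_sum fun k _ => ?_
      rw [← card_filter]
      exact card_le_card (filter_subset_filter _ (filter_subset _ _))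
    have h3 : ∑ k ∈ B₂, 8 * T k ≤ ∑ k ∈ B₂, n :=
      sum_le_sum fun k hk => (mem_filter.1 hk).2.le
    rw [← mul_sum, sum_const, smul_eq_mul] at h3
    by_contra! hcon
    have : 0 < #B₂ := by omega
    nlinarith
  have c₃ : 4 * #B₃ ≤ n := by
    have h1 : ∑ k ∈ range n, E k ≤ n * n * 2 := by
      have : ∑ k ∈ range n, E k = ∑ p ∈ range n ×ˢ range n,
          #{k ∈ range n | p.1 ≠ p.2 ∧ mixedRatio x p.1 k = mixedRatio x p.2 k} := by
        simp only [hE, card_filter]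
        exact sum_comm
      rw [this]
      refine (sum_le_card_nsmul _ _ 2 fun p _ => ?_).trans (by simp)
      by_cases hp : p.1 = p.2
      · simp [hp]
      · simpa [hp] using card_mixedRatio_collisions hpos hx hp n
    have h2 : ∑ k ∈ B₃, 8 * n ≤ ∑ k ∈ range n, E k :=
      (sum_le_sum fun k hk => (mem_filter.1 hk).2.le).trans
        (sum_le_sum_of_subset (filter_subset _ _))
    rw [sum_const, smul_eq_mul] at h2
    by_contra! hcon
    nlinarith
  have hlt : #(B₁ ∪ B₂ ∪ B₃) < #(range n) := by
    have := card_union_le (B₁ ∪ B₂) B₃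
    have := card_union_le B₁ B₂
    rw [card_range]
    omega
  obtain ⟨k, hk, hk'⟩ := exists_mem_notMem_of_card_lt_card hlt
  simp only [hB₁, hB₂, hB₃, mem_union, mem_filter, hk, true_and, not_or, not_lt] at hk'
  exact ⟨k, mem_range.1 hk, hk'.1.1, hk'.1.2, hk'.2⟩

/-! ### The squeeze and the lower bound -/

/-- With `z = x_k` and `z' = x_{k+1}`, the products
`(x_k x_j + 1) * gapRatio x k l * mixedRatio x i k` lie in the ratio set, and they determine first
`j`, then `l`, then the value of `mixedRatio x i k`, as long as
`gapRatio x k l * mixedRatio x i k ≤ gapRatio x k (l + 1) ≤ gapRatio x j k`. -/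
lemma card_ratio_set_ge {x : ℕ → ℝ} (hpos : ∀ k, 0 < x k) (hx : StrictMono x) {n k : ℕ}
    {X : Finset ℝ} (hX : ∀ i ≤ n, x i ∈ X) (hk : k < n) (J R : Finset ℕ)
    (hJ : ∀ j ∈ J, j < n ∧ gapRatio x k k ≤ gapRatio x j k)
    (hR : ∀ l ∈ R, l < k) (hinj : Set.InjOn (fun i => mixedRatio x i k) R) :
    #J * #{p ∈ R ×ˢ R | mixedRatio x p.1 k ≤ mixedRatio x p.2 k} ≤
      #((pshift (x k) X * pshift (x k) X * (pshift (x (k + 1)) X * pshift (x (k + 1)) X)) /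
        (pshift (x k) X * pshift (x k) X * pshift (x (k + 1)) X)) := by
  have hsh : ∀ a, ∀ i ≤ n, a * x i + 1 ∈ pshift a X := fun a i hi =>
    mem_image_of_mem (fun t => a * t + 1) (hX i hi)
  have hp1 : ∀ a b, 0 < x a * x b + 1 := fun a b => by
    have := hpos a; have := hpos b; positivity
  rw [← card_product]
  -- The product attached to `(j, (i, l))` is bounded below and above by consecutive elements of `x_k X + 1`,
  -- and its last two factors by consecutive values of `gapRatio x k`.
  have hb : ∀ t ∈ J ×ˢ {p ∈ R ×ˢ R | mixedRatio x p.1 k ≤ mixedRatio x p.2 k},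
      (gapRatio x k t.2.2 < gapRatio x k t.2.2 * mixedRatio x t.2.1 k ∧
        gapRatio x k t.2.2 * mixedRatio x t.2.1 k ≤ gapRatio x k (t.2.2 + 1)) ∧
      (x k * x t.1 + 1 < (x k * x t.1 + 1) * (gapRatio x k t.2.2 * mixedRatio x t.2.1 k) ∧
        (x k * x t.1 + 1) * (gapRatio x k t.2.2 * mixedRatio x t.2.1 k)
          ≤ x k * x (t.1 + 1) + 1) := by
    rintro ⟨j, i, l⟩ ht
    simp only [mem_product, mem_filter] at ht ⊢
    obtain ⟨hj, ⟨hi, hl⟩, hil⟩ := ht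
    have g0 := gapRatio_pos hpos k l
    have a1 : gapRatio x k l < gapRatio x k l * mixedRatio x i k :=
      lt_mul_of_one_lt_right g0 (one_lt_mixedRatio hpos hx i k)
    have a2 : gapRatio x k l * mixedRatio x i k ≤ gapRatio x k (l + 1) := by
      rw [← gapRatio_mul_mixedRatio hpos l k]
      exact mul_le_mul_of_nonneg_left hil g0.le
    refine ⟨⟨a1, a2⟩, ?_, ?_⟩
    · exact lt_mul_of_one_lt_right (hp1 k j) ((one_lt_gapRatio hpos hx k l).trans a1)
    · have a3 : gapRatio x k (l + 1) ≤ gapRatio x j k :=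
        ((gapRatio_strictMono hpos hx k).monotone (hR l hl)).trans (hJ j hj).2
      calc _ ≤ (x k * x j + 1) * gapRatio x j k :=
            mul_le_mul_of_nonneg_left (a2.trans a3) (hp1 k j).le
        _ = _ := mul_div_cancel₀ _ (hp1 k j).ne'
  refine card_le_card_of_injOn
    (fun t => (x k * x t.1 + 1) * (gapRatio x k t.2.2 * mixedRatio x t.2.1 k)) ?_ ?_
  · rintro ⟨j, i, l⟩ ht
    simp only [coe_product, coe_filter, Set.mem_prod, mem_coe, mem_product,
      Set.mem_ofPred_eq] at ht
    obtain ⟨hj, ⟨hi, hl⟩, -⟩ := ht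
    have bj := (hJ j hj).1
    have bi := hR i hi
    have bl := hR l hl
    rw [mem_coe, mem_div]
    refine ⟨(x k * x j + 1) * (x k * x i + 1) *
        ((x (k + 1) * x l + 1) * (x (k + 1) * x (i + 1) + 1)),
      mul_mem_mul (mul_mem_mul (hsh _ _ bj.le) (hsh _ _ (by omega)))
        (mul_mem_mul (hsh _ _ (by omega)) (hsh _ _ (by omega))),
      (x k * x l + 1) * (x k * x (i + 1) + 1) * (x (k + 1) * x i + 1),
      mul_mem_mul (mul_mem_mul (hsh _ _ (by omega)) (hsh _ _ (by omega)))
        (hsh _ _ (by omega)), ?_⟩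
    have e1 := (hp1 k l).ne'
    have e2 := (hp1 k (i + 1)).ne'
    have e3 := (hp1 (k + 1) i).ne'
    have e4 := (hp1 k i).ne'
    simp only [mixedRatio, gapRatio, mul_comm (x l), mul_comm (x i), mul_comm (x (i + 1))]
    field_simp
  · rintro ⟨j, i, l⟩ ht ⟨j', i', l'⟩ ht' heq
    have b := hb _ (mem_coe.1 ht)
    have b' := hb _ (mem_coe.1 ht')
    simp only at b b' heq
    obtain ⟨⟨b1, b2⟩, b3, b4⟩ := b
    obtain ⟨⟨b1', b2'⟩, b3', b4'⟩ := b'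
    have hmono : StrictMono fun j => x k * x j + 1 := fun a b hab => by
      have := mul_lt_mul_of_pos_left (hx hab) (hpos k)
      simpa using this
    have ej : j = j' := by
      have h1 : j < j' + 1 := hmono.lt_iff_lt.1 (by linarith)
      have h2 : j' < j + 1 := hmono.lt_iff_lt.1 (by linarith)
      omega
    subst ej
    have heq2 := mul_left_cancel₀ (hp1 k j).ne' heq
    have hg := gapRatio_strictMono hpos hx k
    have el : l = l' := by
      have h1 : l < l' + 1 := hg.lt_iff_lt.1 (by linarith)
      have h2 : l' < l + 1 := hg.lt_iff_lt.1 (by linarith)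
      omega
    subst el
    have heq3 := mul_left_cancel₀ (gapRatio_pos hpos k l).ne' heq2
    simp only [coe_product, coe_filter, Set.mem_prod, mem_coe, mem_product,
      Set.mem_ofPred_eq] at ht ht'
    have ei : i = i' := hinj ht.2.1.1 ht'.2.1.1 heq3
    rw [ei]

lemma exists_strictMono_enumeration (X : Finset ℝ) (hX : ∀ a ∈ X, 0 < a) (h2 : 2 ≤ #X) :
    ∃ x : ℕ → ℝ, (∀ k, 0 < x k) ∧ StrictMono x ∧ ∀ i ≤ #X - 1, x i ∈ X := by
  set e := X.orderEmbOfFin rfl with he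
  -- Past the last element the sequence continues with unit steps.
  have hl : #X - 1 < #X := by omega
  set x : ℕ → ℝ := fun i => if h : i < #X then e ⟨i, h⟩ else e ⟨#X - 1, hl⟩ + i with hxdef
  have hmem : ∀ i, e i ∈ X := fun i => X.orderEmbOfFin_mem rfl i
  refine ⟨x, fun k => ?_, strictMono_nat_of_lt_succ fun k => ?_, fun i hi => ?_⟩
  · simp only [hxdef]
    split_ifs with h
    · exact hX _ (hmem _)
    · have := hX _ (hmem ⟨#X - 1, hl⟩)
      positivity
  · simp only [hxdef]
    split_ifs with h h' h'
    · exact e.strictMono (Fin.mk_lt_mk.2 (Nat.lt_succ_self k))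
    · have : (⟨k, h⟩ : Fin #X) = ⟨#X - 1, hl⟩ := by
        ext; simp only; omega
      rw [this]
      push_cast
      have : (0 : ℝ) ≤ k := Nat.cast_nonneg k
      linarith
    · omega
    · push_cast; linarith
  · have h : i < #X := by omega
    simp only [hxdef, dif_pos h]
    exact hmem _

/-- The cubic lower bound behind the theorem; the constant is
`128 * 144 ^ 2`, from `8` for the long gaps, `144` for the distinct mixed ratios, and factors `2`
and `2 ^ 3` for ordering pairs and for passing from `|X| - 1` to `|X|`. -/
lemma cubic_bound (X : Finset ℝ) (hX : ∀ a ∈ X, 0 < a) (h2 : 2 ≤ #X) :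
    ∃ z ∈ X, ∃ z' ∈ X, #X ^ 3 ≤ 2654208 *
      #((pshift z X * pshift z X * (pshift z' X * pshift z' X)) /
        (pshift z X * pshift z X * pshift z' X)) := by
  classical
  obtain ⟨x, hpos, hx, hmem⟩ := exists_strictMono_enumeration X hX h2
  obtain hsmall | hn : #X ≤ 4 ∨ 4 ≤ #X - 1 := by omega
  · refine ⟨x 0, hmem 0 (by omega), x 0, hmem 0 (by omega), ?_⟩
    have hne : (pshift (x 0) X).Nonempty := ⟨_, mem_image_of_mem _ (hmem 0 (by omega))⟩
    have h1 := (((hne.mul hne).mul (hne.mul hne)).div ((hne.mul hne).mul hne)).card_pos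
    have h3 : #X ^ 3 ≤ 4 ^ 3 := Nat.pow_le_pow_left hsmall 3
    omega
  set n := #X - 1 with hndef
  obtain ⟨k, hk, hk4, hT, hE⟩ := exists_good_index hpos hx hn
  refine ⟨x k, hmem k hk.le, x (k + 1), hmem _ hk, ?_⟩
  obtain ⟨R, hRsub, hRbij⟩ : ∃ R ⊆ range k, Set.InjOn (fun i => mixedRatio x i k) R ∧
      R.image (fun i => mixedRatio x i k) = (range k).image fun i => mixedRatio x i k := by
    obtain ⟨R, h1, h2, h3⟩ := exists_subset_injOn_image_eq_of_surjOn (range k)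
      ((range k).image fun i => mixedRatio x i k) (f := fun i => mixedRatio x i k)
      (by rw [coe_image]; exact Set.surjOn_image _ _)
    exact ⟨R, by exact_mod_cast h1, h2, h3⟩
  have hmain := card_ratio_set_ge hpos hx hmem hk
    {j ∈ range n | gapRatio x k k ≤ gapRatio x j k} R
    (fun j hj => by simpa using hj) (fun l hl => mem_range.1 (hRsub hl)) hRbij.1
  have hQ := card_sq_le_of_total R (fun a b => mixedRatio x a k ≤ mixedRatio x b k)
    (fun a _ b _ => le_total _ _)
  have hV := card_sq_le_card_image_mul (range k) (fun i => mixedRatio x i k)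
  rw [← hRbij.2, card_image_of_injOn hRbij.1, card_range] at hV
  have hE' : #{p ∈ range k ×ˢ range k | p.1 ≠ p.2 ∧ mixedRatio x p.1 k = mixedRatio x p.2 k}
      ≤ 8 * n := by
    have hs := range_subset_range.2 hk.le
    exact (card_le_card (filter_subset_filter _ (product_subset_product hs hs))).trans hE
  have hR : n ≤ 144 * #R := by
    have h1 : k ^ 2 ≤ #R * (9 * n) := hV.trans (Nat.mul_le_mul_left _ (by omega))
    have h3 : n ^ 2 ≤ (4 * k) ^ 2 := Nat.pow_le_pow_left hk4 2
    by_contra! hcon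
    nlinarith
  have hX2 : #X ≤ 2 * n := by omega
  set J := #{j ∈ range n | gapRatio x k k ≤ gapRatio x j k}
  set Q := #{p ∈ R ×ˢ R | mixedRatio x p.1 k ≤ mixedRatio x p.2 k}
  calc #X ^ 3 ≤ (2 * n) ^ 3 := Nat.pow_le_pow_left hX2 3
    _ = 8 * (n * n ^ 2) := by ring
    _ ≤ 8 * ((8 * J) * (144 * #R) ^ 2) := by gcongr
    _ = 1327104 * (J * #R ^ 2) := by ring
    _ ≤ 1327104 * (J * (2 * Q)) := by gcongr
    _ = 2654208 * (J * Q) := by ring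
    _ ≤ _ := Nat.mul_le_mul_left _ hmain

theorem superquadratic_expander :
    ∃ c C : ℝ, 0 < c ∧ 0 < C ∧
      ∀ X : Finset ℝ, (∀ x ∈ X, 0 < x) → 2 ≤ X.card →
        ∃ z ∈ X, ∃ z' ∈ X,
          c * (X.card : ℝ) ^ ((5 : ℝ) / 2) / (Real.log X.card) ^ C ≤
            (((pshift z X * pshift z X * (pshift z' X * pshift z' X)) /
              (pshift z X * pshift z X * pshift z' X)).card : ℝ) := by
  refine ⟨1 / 2654208 / 2, 1, by norm_num, one_pos, fun X hX h2 => ?_⟩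
  obtain ⟨z, hz, z', hz', h⟩ := cubic_bound X hX h2
  refine ⟨z, hz, z', hz', ?_⟩
  have hN : (2 : ℝ) ≤ #X := by exact_mod_cast h2
  have hlog : 1 / 2 ≤ Real.log #X := by
    have h1 := Real.log_le_log (by norm_num) hN
    have h3 := Real.log_two_gt_d9
    linarith
  have hpow : (#X : ℝ) ^ ((5 : ℝ) / 2) ≤ (#X : ℝ) ^ 3 := by
    rw [← Real.rpow_natCast]
    exact Real.rpow_le_rpow_of_exponent_le (by linarith) (by norm_num)
  have hR : (#X : ℝ) ^ 3 ≤ 2654208 *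
      (#((pshift z X * pshift z X * (pshift z' X * pshift z' X)) /
        (pshift z X * pshift z X * pshift z' X)) : ℝ) := by exact_mod_cast h
  rw [Real.rpow_one, div_le_iff₀ (by linarith)]
  have h4 := mul_le_mul_of_nonneg_left hlog (Nat.cast_nonneg (α := ℝ)
    #((pshift z X * pshift z X * (pshift z' X * pshift z' X)) /
        (pshift z X * pshift z X * pshift z' X)))
  linarith
end

section
/- There exist absolute constants c > 0 and C > 0 such that for every finite set A ⊂ ℝ with |A| ≥ 2, there exist a, a' ∈ A such that |2(a+A)³ + 2(a'+A)³ − 2(a+A)³ − (a'+A)³| ≥ c · |A|^{5/2} / (log |A|)^C, where the left-hand side is the cardinality of the iterated sum/difference set S + S + T + T − S − S − T with S = (a+A)³ := {(a+x)³ : x ∈ A} and T = (a'+A)³ := {(a'+x)³ : x ∈ A}. -/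
/-!
Passing to the non-negative or the non-positive elements of `A` (and replacing `A` by `-A` in the
second case) leaves a set `0 ≤ b₀ < b₁ < ⋯` with at least `|A| / 2` elements. Choose *consecutive*
elements `a = b_k`, `a' = b_{k+1}`, and put `s i = (a + b_i)³ ∈ S` and
`g j = (a' + b_j)³ - (a + b_j)³ ∈ T - S`. The function `g` is increasing, and if the gap
`b_{i+1} - b_i` is at least `a' - a` and `j < i`, then convexity of the cube gives
`s i < s i + g j < s i + g (j + 1) ≤ s (i + 1)`. Hence the intervals `(s i + g j, s i + g (j + 1)]`
are pairwise disjoint. The elements `s i + g j + (g (j' + 1) - g j')` of `2S + 2T - 2S - T` for which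
`g (j' + 1) - g j' ≤ g (j + 1) - g j` lie in these intervals, so they are distinct as long as `j'`
is confined to a set on which the second difference `j' ↦ g (j' + 1) - g j'` is injective.

The second difference equals
`3 (b_{k+1} - b_k) (b_{j+1} - b_j) (b_{k+1} + b_k + b_{j+1} + b_j)`. For two distinct `j` these
values agree for at most one `k`, so averaging over the `k` with a small gap yields a `k` for which
the second difference is injective on a positive proportion of the `j`. In this way one obtains
`≫ |A|³` elements, which is more than required.
-/

open Finset Pointwise

/-- For `a : ℝ` and a finite set `A ⊆ ℝ`, the set `(a + A)³ = {(a + x)³ : x ∈ A}`. -/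
noncomputable def cubeShift (a : ℝ) (A : Finset ℝ) : Finset ℝ := A.image fun x => (a + x) ^ 3

/-- The second difference of the cube function over the gaps `[b k, b (k + 1)]` and
`[b j, b (j + 1)]`. -/
noncomputable def secondDiff (b : ℕ → ℝ) (k j : ℕ) : ℝ :=
  ((b (k + 1) + b (j + 1)) ^ 3 - (b k + b (j + 1)) ^ 3) -
    ((b (k + 1) + b j) ^ 3 - (b k + b j) ^ 3)

/-- The iterated sum and difference set `2S + 2T - 2S - T` with `S = (a + A)³`, `T = (a' + A)³`. -/
noncomputable def cubeSet (a a' : ℝ) (A : Finset ℝ) : Finset ℝ :=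
  cubeShift a A + cubeShift a A + cubeShift a' A + cubeShift a' A -
    cubeShift a A - cubeShift a A - cubeShift a' A

lemma mem_cubeSet {a a' : ℝ} {A : Finset ℝ} {x₁ x₂ x₃ x₄ x₅ x₆ x₇ : ℝ}
    (h₁ : x₁ ∈ A) (h₂ : x₂ ∈ A) (h₃ : x₃ ∈ A) (h₄ : x₄ ∈ A) (h₅ : x₅ ∈ A) (h₆ : x₆ ∈ A)
    (h₇ : x₇ ∈ A) :
    (a + x₁) ^ 3 + (a + x₂) ^ 3 + (a' + x₃) ^ 3 + (a' + x₄) ^ 3 - (a + x₅) ^ 3 - (a + x₆) ^ 3 -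
      (a' + x₇) ^ 3 ∈ cubeSet a a' A := by
  have key : ∀ (u : ℝ) {x : ℝ}, x ∈ A → (u + x) ^ 3 ∈ cubeShift u A := fun u x hx =>
    Finset.mem_image_of_mem (fun x => (u + x) ^ 3) hx
  exact Finset.sub_mem_sub (Finset.sub_mem_sub (Finset.sub_mem_sub (Finset.add_mem_add
    (Finset.add_mem_add (Finset.add_mem_add (key a h₁) (key a h₂)) (key a' h₃)) (key a' h₄))
    (key a h₅)) (key a h₆)) (key a' h₇)

lemma cubeSet_mono {a a' : ℝ} {A B : Finset ℝ} (h : A ⊆ B) : cubeSet a a' A ⊆ cubeSet a a' B := by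
  have key : ∀ u, cubeShift u A ⊆ cubeShift u B := fun u => Finset.image_subset_image h
  unfold cubeSet
  gcongr <;> exact key _

lemma cubeShift_neg (a : ℝ) (A : Finset ℝ) : cubeShift (-a) (-A) = -cubeShift a A := by
  ext y
  simp only [cubeShift, Finset.mem_image, Finset.mem_neg]
  constructor
  · rintro ⟨_, ⟨x, hx, rfl⟩, rfl⟩
    exact ⟨_, ⟨x, hx, rfl⟩, by ring⟩
  · rintro ⟨_, ⟨x, hx, rfl⟩, rfl⟩
    exact ⟨_, ⟨x, hx, rfl⟩, by ring⟩

lemma card_cubeSet_neg (a a' : ℝ) (A : Finset ℝ) :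
    (cubeSet (-a) (-a') (-A)).card = (cubeSet a a' A).card := by
  have : cubeSet (-a) (-a') (-A) = -cubeSet a a' A := by
    simp only [cubeSet, cubeShift_neg, sub_eq_add_neg, neg_add, neg_neg]
  rw [this, Finset.card_neg]

/-- A finite set can be split into a part of prescribed size `r` on which `h` is small and the
remainder, on which `h` is large. -/
lemma exists_low_part {α : Type*} [DecidableEq α] (s : Finset α) (h : α → ℝ) :
    ∀ r ≤ s.card, ∃ t ⊆ s, t.card = r ∧ ∀ x ∈ t, ∀ y ∈ s \ t, h x ≤ h y := by
  intro r
  induction r with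
  | zero => intro _; exact ⟨∅, by simp, by simp, by simp⟩
  | succ r ih =>
    intro hr
    obtain ⟨t, hts, htc, ht⟩ := ih (by omega)
    have hne : (s \ t).Nonempty := by
      rw [← Finset.card_pos, Finset.card_sdiff_of_subset hts]; omega
    obtain ⟨z, hz, hzmin⟩ := Finset.exists_min_image (s \ t) h hne
    have hz' := Finset.mem_sdiff.1 hz
    refine ⟨insert z t, ?_, ?_, ?_⟩
    · exact Finset.insert_subset hz'.1 hts
    · rw [Finset.card_insert_of_notMem hz'.2, htc]
    · intro x hx y hy
      have hy' : y ∈ s \ t := by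
        simp only [Finset.mem_sdiff, Finset.mem_insert, not_or] at hy ⊢
        exact ⟨hy.1, hy.2.2⟩
      rcases Finset.mem_insert.1 hx with rfl | hx
      · exact hzmin y hy'
      · exact ht x hx y hy'

/-- If every pair `j ≠ j'` in `[0, J)` has at most one `k ∈ K` with `M k j = M k j'` and
`2 J ≤ |K|`, then some `M k` is injective on at least half of `[0, J)`. -/
lemma exists_injOn (J : ℕ) (hJ : 0 < J) (K : Finset ℕ) (hK : 2 * J ≤ K.card) (M : ℕ → ℕ → ℝ)
    (hM : ∀ j < J, ∀ j' < J, j < j' → ∀ k ∈ K, ∀ k' ∈ K, M k j = M k j' → M k' j = M k' j' →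
      k = k') :
    ∃ k ∈ K, ∃ X ⊆ Finset.range J, J ≤ 2 * X.card ∧ Set.InjOn (M k) X := by
  classical
  let R : ℕ → ℕ × ℕ → Prop := fun k p => p.1 < p.2 ∧ M k p.1 = M k p.2
  let P := Finset.range J ×ˢ Finset.range J
  have hdc : ∑ k ∈ K, (P.bipartiteAbove R k).card = ∑ p ∈ P, (K.bipartiteBelow R p).card :=
    Finset.sum_card_bipartiteAbove_eq_sum_card_bipartiteBelow R
  have hle : ∑ p ∈ P, (K.bipartiteBelow R p).card ≤ J * J := by
    calc ∑ p ∈ P, (K.bipartiteBelow R p).card ≤ ∑ p ∈ P, 1 := by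
          refine Finset.sum_le_sum fun p hp => Finset.card_le_one.2 ?_
          intro k hk k' hk'
          simp only [P, Finset.mem_product, Finset.mem_range] at hp
          simp only [Finset.bipartiteBelow, Finset.mem_filter, R] at hk hk'
          exact hM p.1 hp.1 p.2 hp.2 hk.2.1 k hk.1 k' hk'.1 hk.2.2 hk'.2.2
      _ = J * J := by simp [P]
  obtain ⟨k, hkK, hk⟩ : ∃ k ∈ K, 2 * (P.bipartiteAbove R k).card ≤ J := by
    by_contra! hcon
    have h1 : ∑ k ∈ K, (J + 1) ≤ ∑ k ∈ K, 2 * (P.bipartiteAbove R k).card :=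
      Finset.sum_le_sum fun k hk => hcon k hk
    rw [← Finset.mul_sum, hdc, Finset.sum_const, smul_eq_mul] at h1
    nlinarith
  -- Keep the first index of every value; each discarded index has an earlier coincidence partner.
  let X := (Finset.range J).filter fun j => ∀ j' < j, M k j' ≠ M k j
  refine ⟨k, hkK, X, Finset.filter_subset _ _, ?_, ?_⟩
  · have hsub : Finset.range J \ X ⊆ (P.bipartiteAbove R k).image Prod.snd := by
      intro j hj
      simp only [X, Finset.mem_sdiff, Finset.mem_filter, not_and, not_forall, not_not,
        Finset.mem_range] at hj
      obtain ⟨hjJ, hj⟩ := hj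
      obtain ⟨j', hj', he⟩ := hj hjJ
      refine Finset.mem_image.2 ⟨(j', j), ?_, rfl⟩
      simp only [Finset.bipartiteAbove, Finset.mem_filter, P, R, Finset.mem_product,
        Finset.mem_range]
      exact ⟨⟨by omega, hjJ⟩, hj', he⟩
    have h1 := (Finset.card_le_card hsub).trans Finset.card_image_le
    have h2 : (Finset.range J \ X).card = J - X.card := by
      rw [Finset.card_sdiff_of_subset (Finset.filter_subset _ _), Finset.card_range]
    omega
  · intro x hx y hy hxy
    simp only [X, Finset.coe_filter, Set.mem_ofPred_eq] at hx hy
    rcases lt_trichotomy x y with h | h | h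
    · exact absurd hxy (hy.2 x h)
    · exact h
    · exact absurd hxy.symm (hx.2 y h)

/-- For distinct gaps `j < j'`, the second differences agree for at most one `k`: up to a positive
factor they are affine functions of `b k + b (k + 1)`, and two distinct affine functions meet at
most once. -/
lemma secondDiff_coincidence {b : ℕ → ℝ} {m : ℕ} (hb : ∀ i j, i < j → j ≤ m → b i < b j)
    {j j' k k' : ℕ} (hj : j < j') (hj' : j' < m) (hk : k < m) (hk' : k' < m)
    (h : secondDiff b k j = secondDiff b k j') (h' : secondDiff b k' j = secondDiff b k' j') :
    k = k' := by
  have form : ∀ k j, secondDiff b k j =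
      3 * (b (k + 1) - b k) * ((b (j + 1) - b j) * (b (j + 1) + b j + (b (k + 1) + b k))) := by
    intro k j; unfold secondDiff; ring
  have red : ∀ k < m, secondDiff b k j = secondDiff b k j' →
      (b (j + 1) - b j) * (b (j + 1) + b j + (b (k + 1) + b k)) =
        (b (j' + 1) - b j') * (b (j' + 1) + b j' + (b (k + 1) + b k)) := by
    intro k hk h
    rw [form, form] at h
    have : b k < b (k + 1) := hb _ _ (by omega) (by omega)
    exact mul_left_cancel₀ (by linarith) h
  have e := red k hk h
  have e' := red k' hk' h'
  have hjj : b j < b j' := hb _ _ hj (by omega)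
  have hjj1 : b (j + 1) < b (j' + 1) := hb _ _ (by omega) (by omega)
  have hj1 : b j < b (j + 1) := hb _ _ (by omega) (by omega)
  have hprod : ((b (j + 1) - b j) - (b (j' + 1) - b j')) *
      ((b (k + 1) + b k) - (b (k' + 1) + b k')) = 0 := by linarith
  rcases mul_eq_zero.1 hprod with h0 | h0
  · exfalso
    rw [← sub_eq_zero.1 h0] at e
    have := mul_left_cancel₀ (by linarith) e
    linarith
  · by_contra hne
    rcases lt_or_gt_of_ne hne with hlt | hlt
    · have h1 : b k < b k' := hb _ _ hlt (by omega)
      have h2 : b (k + 1) < b (k' + 1) := hb _ _ (by omega) (by omega)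
      linarith
    · have h1 : b k' < b k := hb _ _ hlt (by omega)
      have h2 : b (k' + 1) < b (k + 1) := hb _ _ (by omega) (by omega)
      linarith

/-- Left endpoints of half-open intervals `(s i, s (i + 1)]` are determined by any of their
points. -/
lemma index_unique {s : ℕ → ℝ} {m : ℕ} (hs : ∀ i j, i ≤ j → j ≤ m → s i ≤ s j) {i i' : ℕ}
    (hi : i < m) (hi' : i' < m) {e : ℝ} (h1 : s i < e) (h2 : e ≤ s (i + 1)) (h1' : s i' < e)
    (h2' : e ≤ s (i' + 1)) : i = i' := by
  by_contra hne
  rcases lt_or_gt_of_ne hne with hlt | hlt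
  · have := hs (i + 1) i' (by omega) (by omega)
    linarith
  · have := hs (i' + 1) i (by omega) (by omega)
    linarith

/-- The squeezing argument: for an increasing sequence of `4 J + 1` non-negative elements of `A`,
suitable consecutive terms `a, a'` produce at least `J³ / 8` elements. -/
lemma card_cubeSet_of_seq (A : Finset ℝ) (b : ℕ → ℝ) (J : ℕ) (hJ : 0 < J)
    (hb : ∀ i j, i < j → j ≤ 4 * J → b i < b j) (h0 : 0 ≤ b 0) (hA : ∀ i ≤ 4 * J, b i ∈ A) :
    ∃ a ∈ A, ∃ a' ∈ A, J ^ 3 ≤ 8 * (cubeSet a a' A).card := by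
  classical
  have hnn : ∀ i ≤ 4 * J, 0 ≤ b i := by
    intro i hi
    rcases Nat.eq_zero_or_pos i with rfl | hpos
    · exact h0
    · exact h0.trans (hb 0 i hpos hi).le
  -- Among the gaps with index in `[J, 4 J)`, take the `2 J` shortest as candidates for `k`; the
  -- remaining `J` gaps serve as the outer intervals.
  obtain ⟨K, hKs, hKc, hKh⟩ := exists_low_part (Finset.Ico J (4 * J))
    (fun i => b (i + 1) - b i) (2 * J) (by rw [Nat.card_Ico]; omega)
  set I := Finset.Ico J (4 * J) \ K with hI
  have hIc : I.card = J := by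
    rw [hI, Finset.card_sdiff_of_subset hKs, Nat.card_Ico]; omega
  have hKm : ∀ k ∈ K, k < 4 * J := fun k hk => (Finset.mem_Ico.1 (hKs hk)).2
  obtain ⟨k, hk, X, hXs, hXc, hXinj⟩ := exists_injOn J hJ K hKc.ge (secondDiff b) (by
    intro j hj j' hj' hlt k hk k' hk' e e'
    exact secondDiff_coincidence hb hlt (by omega) (hKm k hk) (hKm k' hk') e e')
  have hk4 := hKm k hk
  refine ⟨b k, hA k hk4.le, b (k + 1), hA (k + 1) hk4, ?_⟩
  let s : ℕ → ℝ := fun i => (b k + b i) ^ 3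
  let g : ℕ → ℝ := fun j => (b (k + 1) + b j) ^ 3 - (b k + b j) ^ 3
  have hM : ∀ j, secondDiff b k j = g (j + 1) - g j := fun j => rfl
  have hbk : b k < b (k + 1) := hb _ _ (by omega) (by omega)
  have hbk0 := hnn k hk4.le
  have hle : ∀ i j, i ≤ j → j ≤ 4 * J → b i ≤ b j := by
    intro i j hij hj
    rcases hij.eq_or_lt with rfl | h
    · exact le_rfl
    · exact (hb i j h hj).le
  have hs : ∀ i j, i ≤ j → j ≤ 4 * J → s i ≤ s j := by
    intro i j hij hj
    have h1 := hle i j hij hj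
    have h2 := hnn i (by omega)
    exact pow_le_pow_left₀ (by linarith) (by linarith) 3
  have hg : ∀ i j, i < j → j ≤ 4 * J → g i < g j := by
    intro i j hij hj
    have h1 := hb i j hij hj
    have h2 := hnn i (by omega)
    have : g j - g i = 3 * (b (k + 1) - b k) * (b j - b i) * (b (k + 1) + b k + b j + b i) := by
      simp only [g]; ring
    have : 0 < g j - g i := by
      rw [this]
      have : 0 < b (k + 1) - b k := by linarith
      have : 0 < b j - b i := by linarith
      have : 0 < b (k + 1) + b k + b j + b i := by linarith
      positivity
    linarith
  have hg' : ∀ i j, i ≤ j → j ≤ 4 * J → g i ≤ g j := by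
    intro i j hij hj
    rcases hij.eq_or_lt with rfl | h
    · exact le_rfl
    · exact (hg i j h hj).le
  have hg0 : ∀ j ≤ 4 * J, 0 ≤ g j := by
    intro j hj
    have h2 := hnn j hj
    have : (b k + b j) ^ 3 ≤ (b (k + 1) + b j) ^ 3 :=
      pow_le_pow_left₀ (by linarith) (by linarith) 3
    simp only [g]; linarith
  have hgap : ∀ i ∈ I, g i ≤ s (i + 1) - s i := by
    intro i hi
    have h1 := hKh k hk i hi
    have hi4 := (Finset.mem_Ico.1 (Finset.mem_sdiff.1 hi).1).2
    have h2 := hnn i hi4.le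
    have : (b (k + 1) + b i) ^ 3 ≤ (b k + b (i + 1)) ^ 3 :=
      pow_le_pow_left₀ (by linarith) (by linarith) 3
    simp only [g, s]; linarith
  let Q := (X ×ˢ X).filter fun p => g (p.2 + 1) - g p.2 ≤ g (p.1 + 1) - g p.1
  have hQc : X.card * X.card ≤ 2 * Q.card := by
    have hsub : X ×ˢ X ⊆ Q ∪ Q.image Prod.swap := by
      rintro ⟨x, y⟩ hp
      have hp' := Finset.mem_product.1 hp
      rcases le_total (g (y + 1) - g y) (g (x + 1) - g x) with h | h
      · exact Finset.mem_union_left _ (Finset.mem_filter.2 ⟨hp, h⟩)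
      · refine Finset.mem_union_right _ (Finset.mem_image.2 ⟨(y, x), ?_, rfl⟩)
        exact Finset.mem_filter.2 ⟨Finset.mem_product.2 ⟨hp'.2, hp'.1⟩, h⟩
    have h1 := (Finset.card_le_card hsub).trans (Finset.card_union_le _ _)
    have h2 : (Q.image Prod.swap).card ≤ Q.card := Finset.card_image_le
    rw [Finset.card_product] at h1
    omega
  let F : ℕ × (ℕ × ℕ) → ℝ := fun q => s q.1 + (g q.2.1 + (g (q.2.2 + 1) - g q.2.2))
  have hdata : ∀ q ∈ I ×ˢ Q, (J ≤ q.1 ∧ q.1 < 4 * J) ∧ q.2.1 < J ∧ q.2.2 ∈ X ∧ q.2.2 < J ∧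
      (g q.2.1 < g q.2.1 + (g (q.2.2 + 1) - g q.2.2) ∧
        g q.2.1 + (g (q.2.2 + 1) - g q.2.2) ≤ g (q.2.1 + 1)) ∧
      (s q.1 < F q ∧ F q ≤ s (q.1 + 1)) := by
    rintro ⟨i, j, j'⟩ hq
    simp only [Finset.mem_product, Q, Finset.mem_filter] at hq
    obtain ⟨hi, ⟨hj, hj'⟩, hle⟩ := hq
    have hi4 := Finset.mem_Ico.1 (Finset.mem_sdiff.1 hi).1
    have hjJ := Finset.mem_range.1 (hXs hj)
    have hjJ' := Finset.mem_range.1 (hXs hj')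
    have h1 := hg j' (j' + 1) (by omega) (by omega)
    have h2 := hg0 j (by omega)
    have h3 := hg' (j + 1) i (by omega) (by omega)
    have h4 := hgap i hi
    refine ⟨hi4, hjJ, hj', hjJ', ⟨?_, ?_⟩, ?_, ?_⟩ <;> simp only [F] <;> linarith
  have hmaps : ∀ q ∈ I ×ˢ Q, F q ∈ cubeSet (b k) (b (k + 1)) A := by
    intro q hq
    obtain ⟨hi, hj, -, hj', -⟩ := hdata q hq
    have hmem := mem_cubeSet (a := b k) (a' := b (k + 1)) (hA q.1 (by omega))
      (hA q.2.2 (by omega)) (hA q.2.1 (by omega)) (hA (q.2.2 + 1) (by omega))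
      (hA q.2.1 (by omega)) (hA (q.2.2 + 1) (by omega)) (hA q.2.2 (by omega))
    convert hmem using 1
    simp only [F, s, g]; ring
  have hinj : Set.InjOn F (I ×ˢ Q : Finset _) := by
    rintro ⟨i, j, j'⟩ hq ⟨i₁, j₁, j₁'⟩ hq₁ he
    obtain ⟨hi, hj, hjX, hj', ⟨hw1, hw2⟩, hF1, hF2⟩ := hdata _ hq
    obtain ⟨hi₁, hj₁, hjX₁, hj₁', ⟨hv1, hv2⟩, hG1, hG2⟩ := hdata _ hq₁
    rw [← he] at hG1 hG2
    have hii : i = i₁ := index_unique hs hi.2 hi₁.2 hF1 hF2 hG1 hG2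
    subst hii
    have he' : g j + (g (j' + 1) - g j') = g j₁ + (g (j₁' + 1) - g j₁') := add_left_cancel he
    simp only at hw1 hw2 hv1 hv2 hj hj₁
    rw [← he'] at hv1 hv2
    have hjj : j = j₁ := index_unique hg' (by omega) (by omega) hw1 hw2 hv1 hv2
    subst hjj
    have hjj' : j' = j₁' := hXinj hjX hjX₁ (by rw [hM, hM]; exact add_left_cancel he')
    rw [hjj']
  have hcard := Finset.card_le_card_of_injOn F hmaps hinj
  rw [Finset.card_product, hIc] at hcard
  calc J ^ 3 = J * (J * J) := by ring
    _ ≤ J * ((2 * X.card) * (2 * X.card)) := by gcongr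
    _ = J * (4 * (X.card * X.card)) := by ring
    _ ≤ J * (4 * (2 * Q.card)) := by gcongr
    _ = 8 * (J * Q.card) := by ring
    _ ≤ _ := by gcongr

lemma card_cubeSet_of_nonneg (A : Finset ℝ) (h : ∀ x ∈ A, 0 ≤ x) (J : ℕ) (hJ : 0 < J)
    (hc : 4 * J + 1 ≤ A.card) :
    ∃ a ∈ A, ∃ a' ∈ A, J ^ 3 ≤ 8 * (cubeSet a a' A).card := by
  let e := A.orderEmbOfFin rfl
  let b : ℕ → ℝ := fun i => if hi : i < A.card then e ⟨i, hi⟩ else 0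
  have hbe : ∀ i (hi : i < A.card), b i = e ⟨i, hi⟩ := fun i hi => dif_pos hi
  have hbA : ∀ i ≤ 4 * J, b i ∈ A := by
    intro i hi
    rw [hbe i (by omega)]
    exact A.orderEmbOfFin_mem rfl _
  refine card_cubeSet_of_seq A b J hJ ?_ (h _ (hbA 0 (by omega))) hbA
  intro i j hij hj
  rw [hbe i (by omega), hbe j (by omega)]
  exact e.strictMono hij

/-- The sign reduction: one of the non-negative and the non-positive part of `A` contains at least
half of `A`. -/
lemma card_cubeSet_cubic (A : Finset ℝ) (hA : 16 ≤ A.card) :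
    ∃ a ∈ A, ∃ a' ∈ A, A.card ^ 3 ≤ 32768 * (cubeSet a a' A).card := by
  classical
  obtain ⟨J, hJ, hJ1, hJ2⟩ : ∃ J, 0 < J ∧ 2 * (4 * J + 1) ≤ A.card + 1 ∧ A.card ≤ 16 * J :=
    ⟨(A.card - 1) / 8, by omega, by omega, by omega⟩
  have fin : ∀ c, J ^ 3 ≤ 8 * c → A.card ^ 3 ≤ 32768 * c := by
    intro c hc
    calc A.card ^ 3 ≤ (16 * J) ^ 3 := Nat.pow_le_pow_left hJ2 3
      _ = 4096 * J ^ 3 := by ring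
      _ ≤ 4096 * (8 * c) := by gcongr
      _ = 32768 * c := by ring
  have hsplit := Finset.card_filter_add_card_filter_not (s := A) (fun x => 0 ≤ x)
  rcases le_or_gt (4 * J + 1) (A.filter fun x => 0 ≤ x).card with h | h
  · obtain ⟨a, ha, a', ha', hc⟩ := card_cubeSet_of_nonneg (A.filter fun x => 0 ≤ x)
      (fun x hx => (Finset.mem_filter.1 hx).2) J hJ h
    refine ⟨a, (Finset.mem_filter.1 ha).1, a', (Finset.mem_filter.1 ha').1, fin _ (hc.trans ?_)⟩
    gcongr
    exact cubeSet_mono (Finset.filter_subset _ _)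
  · set B := A.filter fun x => ¬ 0 ≤ x with hB
    obtain ⟨a, ha, a', ha', hc⟩ := card_cubeSet_of_nonneg (-B) (by
      intro x hx
      have := (Finset.mem_filter.1 (Finset.mem_neg'.1 hx)).2
      linarith) J hJ (by rw [Finset.card_neg]; omega)
    refine ⟨-a, (Finset.mem_filter.1 (Finset.mem_neg'.1 ha)).1, -a',
      (Finset.mem_filter.1 (Finset.mem_neg'.1 ha')).1, fin _ (hc.trans ?_)⟩
    have hsub : cubeSet a a' (-B) ⊆ cubeSet a a' (-A) :=
      cubeSet_mono (Finset.neg_subset_neg (Finset.filter_subset _ _))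
    have hneg := card_cubeSet_neg (-a) (-a') A
    rw [neg_neg, neg_neg] at hneg
    exact Nat.mul_le_mul_left 8 ((Finset.card_le_card hsub).trans hneg.le)

theorem cubes_of_shifts_superquadratic :
    ∃ c C : ℝ, 0 < c ∧ 0 < C ∧
      ∀ A : Finset ℝ, 2 ≤ A.card →
        ∃ a ∈ A, ∃ a' ∈ A,
          c * (A.card : ℝ) ^ ((5 : ℝ) / 2) / (Real.log A.card) ^ C ≤
            ((cubeShift a A + cubeShift a A + cubeShift a' A + cubeShift a' A -
              cubeShift a A - cubeShift a A - cubeShift a' A).card : ℝ) := by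
  refine ⟨1 / 65536, 1, by norm_num, by norm_num, fun A hA => ?_⟩
  have hA' : (2 : ℝ) ≤ A.card := by exact_mod_cast hA
  have hlog : 1 / 2 ≤ Real.log A.card := by
    have h1 := Real.log_le_log (by norm_num) hA'
    have h2 := Real.log_two_gt_d9
    linarith
  have hpow : (A.card : ℝ) ^ ((5 : ℝ) / 2) ≤ (A.card : ℝ) ^ 3 := by
    rw [← Real.rpow_natCast]
    exact Real.rpow_le_rpow_of_exponent_le (by linarith) (by norm_num)
  -- Since `log |A| ≥ log 2 > 1 / 2`, the bound asked for is at most `|A|³ / 32768`.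
  have hupper : 1 / 65536 * (A.card : ℝ) ^ ((5 : ℝ) / 2) / (Real.log A.card) ^ (1 : ℝ) ≤
      (A.card : ℝ) ^ 3 / 32768 := by
    rw [Real.rpow_one, div_le_iff₀ (by linarith)]
    have : 0 ≤ (A.card : ℝ) ^ 3 := by positivity
    nlinarith
  rcases le_or_gt 16 A.card with h16 | h16
  · obtain ⟨a, ha, a', ha', hc⟩ := card_cubeSet_cubic A h16
    refine ⟨a, ha, a', ha', hupper.trans ?_⟩
    have hc' : (A.card : ℝ) ^ 3 ≤ 32768 * ((cubeSet a a' A).card : ℝ) := by exact_mod_cast hc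
    change _ ≤ ((cubeSet a a' A).card : ℝ)
    linarith
  -- For `|A| < 16` the required bound is below `1`, and the set is non-empty.
  · obtain ⟨a, ha⟩ : A.Nonempty := Finset.card_pos.1 (by omega)
    refine ⟨a, ha, a, ha, hupper.trans ?_⟩
    change _ ≤ ((cubeSet a a A).card : ℝ)
    have h1 : 1 ≤ (cubeSet a a A).card :=
      Finset.card_pos.2 ⟨_, mem_cubeSet ha ha ha ha ha ha ha⟩
    have h1' : (1 : ℝ) ≤ (cubeSet a a A).card := by exact_mod_cast h1
    have h2 : (A.card : ℝ) ≤ 16 := by exact_mod_cast h16.le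
    have h3 : (A.card : ℝ) ^ 3 ≤ 16 ^ 3 := pow_le_pow_left₀ (by linarith) h2 3
    linarith
end

section
/- There exists an absolute constant c > 0 such that for every finite set A ⊂ ℝ with |A| ≥ 2 and every function f : ℝ → ℝ that is strictly convex or strictly concave, there exist a, a' ∈ A such that |f(a+A) + f(a'+A) − f(a+A)| ≥ c · |A|², where the left-hand side is the cardinality of the set {f(a+x) + f(a'+y) − f(a+z) : x, y, z ∈ A}. -/
/-!
The argument is a squeezing argument. For `f` strictly convex, let `a < a'` be elements of `A` at
minimal distance `d = a' - a`, and put `D y = f (a' + y) - f (a + y)`, which is strictly increasing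
in `y`. Let `Y` be the set of `y ∈ A` with `D y > 0`. For `y ≤ x < x'` with `y, x ∈ Y`, `x' ∈ A`,
convexity and `x' - x ≥ d` give `f (a + x') - f (a + x) ≥ D y > 0`. So the numbers
`f (a + x) + D y` with `y ≤ x` exceed `f (a + x)` but not `f (a + x')` for any larger `x' ∈ A`.
Values coming from different `x` are therefore distinct, and for one `x` they are distinct because
`D` is injective. This yields at least `|Y|² / 2` elements of `f(a+A) + f(a'+A) - f(a+A)`
(`card_sq_le_of_pos`).

Reflecting `x ↦ -x` exchanges the roles of `a` and `a'` and handles the `y` with `D y < 0`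
(`card_sq_le_of_neg`). As `D` vanishes at most once on `A`, one of the two sign classes has at least
`(|A| - 1) / 2` elements. The concave case follows by replacing `f` with `-f`.
-/

open Finset Pointwise

/-- For `f : ℝ → ℝ`, `t : ℝ` and a finite set `A ⊆ ℝ`, the set `f(t + A) = {f (t + x) : x ∈ A}`. -/
noncomputable def fShift (f : ℝ → ℝ) (t : ℝ) (A : Finset ℝ) : Finset ℝ := A.image fun x => f (t + x)

lemma slope_le_slope {f : ℝ → ℝ} (hf : StrictConvexOn ℝ Set.univ f) {u v d e : ℝ}
    (hd : 0 < d) (hde : d ≤ e) (huv : u ≤ v) :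
    (f (u + d) - f u) / d ≤ (f (v + e) - f v) / e := by
  have h1 := hf.convexOn.secant_mono (a := u) (x := u + d) (y := v + e) trivial trivial trivial
    (by linarith) (by linarith) (by linarith)
  have h2 := hf.convexOn.secant_mono (a := v + e) (x := u) (y := v) trivial trivial trivial
    (by linarith) (by linarith) huv
  rw [← neg_div_neg_eq (f u - f (v + e)), ← neg_div_neg_eq (f v - f (v + e))] at h2
  simp only [neg_sub, add_sub_cancel_left] at h1 h2
  exact h1.trans h2

lemma increment_strictMono {f : ℝ → ℝ} (hf : StrictConvexOn ℝ Set.univ f) {u v d : ℝ}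
    (hd : 0 < d) (huv : u < v) : f (u + d) - f u < f (v + d) - f v := by
  have h1 := hf.secant_strict_mono (a := u) (x := u + d) (y := v + d) trivial trivial trivial
    (by linarith) (by linarith) (by linarith)
  have h2 := hf.secant_strict_mono (a := v + d) (x := u) (y := v) trivial trivial trivial
    (by linarith) (by linarith) huv
  rw [← neg_div_neg_eq (f u - f (v + d)), ← neg_div_neg_eq (f v - f (v + d))] at h2
  simp only [neg_sub, add_sub_cancel_left] at h1 h2
  exact (div_lt_div_iff_of_pos_right hd).1 (h1.trans h2)

/-- A positive increment of a convex function does not shrink when the interval is moved to the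
right and lengthened. -/
lemma increment_le {f : ℝ → ℝ} (hf : StrictConvexOn ℝ Set.univ f) {u v d e : ℝ}
    (hd : 0 < d) (hde : d ≤ e) (huv : u ≤ v) (hpos : 0 < f (u + d) - f u) :
    f (u + d) - f u ≤ f (v + e) - f v := by
  have h := slope_le_slope hf hd hde huv
  have he : 0 < e := hd.trans_le hde
  rw [div_le_div_iff₀ hd he] at h
  have h2 : (f (u + d) - f u) * d ≤ (f (u + d) - f u) * e := by gcongr
  exact le_of_mul_le_mul_right (h2.trans h) hd

/-- At least half of the pairs in `Y × Y` are weakly ordered. -/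
lemma sq_card_le_ordered (Y : Finset ℝ) :
    Y.card ^ 2 ≤ 2 * ((Y ×ˢ Y).filter fun p => p.2 ≤ p.1).card := by
  set T := (Y ×ˢ Y).filter fun p => p.2 ≤ p.1 with hT
  have hsub : Y ×ˢ Y ⊆ T ∪ T.image Prod.swap := by
    rintro ⟨x, y⟩ h
    rw [Finset.mem_product] at h
    rcases le_total y x with hxy | hxy
    · exact Finset.mem_union_left _ (by simp [hT, h.1, h.2, hxy])
    · refine Finset.mem_union_right _ (Finset.mem_image.2 ⟨(y, x), ?_, rfl⟩)
      simp [hT, h.1, h.2, hxy]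
  have h1 := Finset.card_le_card hsub
  have h2 := Finset.card_union_le T (T.image Prod.swap)
  have h3 : (T.image Prod.swap).card ≤ T.card := Finset.card_image_le
  rw [Finset.card_product] at h1
  nlinarith

/-- The squeezing step: `(x, y) ↦ f (a + x) + f (a' + y) - f (a + y)` is injective on the pairs
`y ≤ x` in `Y`. -/
lemma card_sq_le_of_pos {f : ℝ → ℝ} (hf : StrictConvexOn ℝ Set.univ f) {A Y : Finset ℝ}
    (hY : Y ⊆ A) {a a' : ℝ} (haa : a < a')
    (hgap : ∀ x ∈ A, ∀ y ∈ A, x < y → a' - a ≤ y - x)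
    (hpos : ∀ y ∈ Y, f (a + y) < f (a' + y)) :
    Y.card ^ 2 ≤ 2 * (fShift f a A + fShift f a' A - fShift f a A).card := by
  refine (sq_card_le_ordered Y).trans (Nat.mul_le_mul_left 2 ?_)
  have hd : 0 < a' - a := sub_pos.2 haa
  have key : ∀ x ∈ Y, ∀ y ∈ Y, ∀ x' ∈ Y, ∀ y' ∈ Y, y ≤ x → x < x' →
      f (a + x) + f (a' + y) - f (a + y) < f (a + x') + f (a' + y') - f (a + y') := by
    intro x hx y hy x' hx' y' hy' hyx hxx
    have h1 := hpos y hy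
    have h2 := hpos y' hy'
    have h := increment_le hf (u := a + y) (v := a + x) hd (hgap x (hY hx) x' (hY hx') hxx)
      (by linarith) (by rw [show a + y + (a' - a) = a' + y by ring]; linarith)
    rw [show a + y + (a' - a) = a' + y by ring, show a + x + (x' - x) = a + x' by ring] at h
    linarith
  have mono : ∀ y y' : ℝ, y < y' → f (a' + y) - f (a + y) < f (a' + y') - f (a + y') := by
    intro y y' h
    have := increment_strictMono hf (u := a + y) (v := a + y') hd (by linarith)
    rwa [show a + y + (a' - a) = a' + y by ring, show a + y' + (a' - a) = a' + y' by ring] at this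
  refine Finset.card_le_card_of_injOn
    (fun p : ℝ × ℝ => f (a + p.1) + f (a' + p.2) - f (a + p.2)) ?_ ?_
  · rintro ⟨x, y⟩ h
    simp only [Finset.coe_filter, Finset.mem_product, Set.mem_ofPred_eq] at h
    obtain ⟨⟨hx, hy⟩, -⟩ := h
    exact Finset.sub_mem_sub
      (Finset.add_mem_add (Finset.mem_image_of_mem _ (hY hx)) (Finset.mem_image_of_mem _ (hY hy)))
      (Finset.mem_image_of_mem _ (hY hy))
  · rintro ⟨x, y⟩ h ⟨x', y'⟩ h' heq
    simp only [Finset.coe_filter, Finset.mem_product, Set.mem_ofPred_eq] at h h' heq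
    obtain ⟨⟨hx, hy⟩, hyx⟩ := h
    obtain ⟨⟨hx', hy'⟩, hyx'⟩ := h'
    rcases lt_trichotomy x x' with hlt | rfl | hlt
    · exact absurd heq (key x hx y hy x' hx' y' hy' hyx hlt).ne
    · rcases lt_trichotomy y y' with hlt | rfl | hlt
      · linarith [mono y y' hlt]
      · rfl
      · linarith [mono y' y hlt]
    · exact absurd heq (key x' hx' y' hy' x hx y hy hyx' hlt).ne'

lemma fShift_reflect (f : ℝ → ℝ) (t : ℝ) (A : Finset ℝ) :
    fShift (fun x => f (-x)) (-t) (-A) = fShift f t A := by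
  ext z
  simp only [fShift, Finset.mem_image, Finset.mem_neg']
  constructor
  · rintro ⟨x, hx, rfl⟩
    exact ⟨-x, hx, by congr 1; ring⟩
  · rintro ⟨x, hx, rfl⟩
    exact ⟨-x, by simpa using hx, by congr 1; ring⟩

lemma fShift_neg (f : ℝ → ℝ) (t : ℝ) (A : Finset ℝ) : fShift (-f) t A = -fShift f t A := by
  ext z
  simp [fShift, neg_eq_iff_eq_neg]

lemma strictConvexOn_reflect {f : ℝ → ℝ} (hf : StrictConvexOn ℝ Set.univ f) :
    StrictConvexOn ℝ Set.univ fun x => f (-x) := by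
  refine ⟨convex_univ, fun x _ y _ hxy p q hp hq hpq => ?_⟩
  have h := hf.2 (x := -x) trivial (y := -y) trivial (fun h => hxy (neg_injective h)) hp hq hpq
  simp only [smul_eq_mul] at h ⊢
  rwa [show -(p * x + q * y) = p * -x + q * -y by ring]

/-- The mirror image of `card_sq_le_of_pos`; the reflection exchanges `a` and `a'`. -/
lemma card_sq_le_of_neg {f : ℝ → ℝ} (hf : StrictConvexOn ℝ Set.univ f) {A Y : Finset ℝ}
    (hY : Y ⊆ A) {a a' : ℝ} (haa : a < a')
    (hgap : ∀ x ∈ A, ∀ y ∈ A, x < y → a' - a ≤ y - x)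
    (hneg : ∀ y ∈ Y, f (a' + y) < f (a + y)) :
    Y.card ^ 2 ≤ 2 * (fShift f a' A + fShift f a A - fShift f a' A).card := by
  have h := card_sq_le_of_pos (strictConvexOn_reflect hf) (A := -A) (Y := -Y)
    (Finset.neg_subset_neg hY) (a := -a') (a' := -a) (by linarith)
    (by
      intro x hx y hy hxy
      rw [Finset.mem_neg'] at hx hy
      linarith [hgap _ hy _ hx (by linarith)])
    (by
      intro y hy
      rw [Finset.mem_neg'] at hy
      have := hneg _ hy
      rwa [show -(-a' + y) = a' + -y by ring, show -(-a + y) = a + -y by ring])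
  rwa [fShift_reflect, fShift_reflect, Finset.card_neg] at h

lemma exists_min_gap {A : Finset ℝ} (hA : 2 ≤ A.card) :
    ∃ a ∈ A, ∃ a' ∈ A, a < a' ∧ ∀ x ∈ A, ∀ y ∈ A, x < y → a' - a ≤ y - x := by
  have hne : ((A ×ˢ A).filter fun p => p.1 < p.2).Nonempty := by
    obtain ⟨x, hx, y, hy, hxy⟩ := Finset.one_lt_card.1 hA
    rcases lt_or_gt_of_ne hxy with h | h
    · exact ⟨(x, y), by simp [hx, hy, h]⟩
    · exact ⟨(y, x), by simp [hx, hy, h]⟩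
  obtain ⟨⟨a, a'⟩, h, hmin⟩ := Finset.exists_min_image _ (fun p : ℝ × ℝ => p.2 - p.1) hne
  simp only [Finset.mem_filter, Finset.mem_product] at h
  exact ⟨a, h.1.1, a', h.1.2, h.2, fun x hx y hy hxy =>
    hmin (x, y) (by simp [hx, hy, hxy])⟩

lemma convex_case {f : ℝ → ℝ} (hf : StrictConvexOn ℝ Set.univ f) {A : Finset ℝ}
    (hA : 2 ≤ A.card) :
    ∃ a ∈ A, ∃ a' ∈ A, (1 / 32 : ℝ) * (A.card : ℝ) ^ 2 ≤
      ((fShift f a A + fShift f a' A - fShift f a A).card : ℝ) := by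
  obtain ⟨a, ha, a', ha', haa, hgap⟩ := exists_min_gap hA
  set P := A.filter fun y => f (a + y) < f (a' + y) with hP
  set N := A.filter fun y => f (a' + y) < f (a + y) with hN
  set Z := A.filter fun y => f (a' + y) = f (a + y) with hZ
  have hcover : A ⊆ P ∪ N ∪ Z := by
    intro y hy
    simp only [hP, hN, hZ, Finset.mem_union, Finset.mem_filter, hy, true_and]
    rcases lt_trichotomy (f (a + y)) (f (a' + y)) with h | h | h
    · exact Or.inl (Or.inl h)
    · exact Or.inr h.symm
    · exact Or.inl (Or.inr h)
  have mono : ∀ y y' : ℝ, y < y' → f (a' + y) - f (a + y) < f (a' + y') - f (a + y') := by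
    intro y y' h
    have := increment_strictMono hf (u := a + y) (v := a + y') (sub_pos.2 haa) (by linarith)
    rwa [show a + y + (a' - a) = a' + y by ring, show a + y' + (a' - a) = a' + y' by ring] at this
  have hZ1 : Z.card ≤ 1 := by
    refine Finset.card_le_one.2 fun y hy y' hy' => ?_
    have h1 := (Finset.mem_filter.1 hy).2
    have h2 := (Finset.mem_filter.1 hy').2
    rcases lt_trichotomy y y' with h | h | h
    · linarith [mono y y' h]
    · exact h
    · linarith [mono y' y h]
  have hcard : A.card ≤ P.card + N.card + 1 := by
    have h1 := Finset.card_le_card hcover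
    have h2 := Finset.card_union_le (P ∪ N) Z
    have h3 := Finset.card_union_le P N
    omega
  -- Since `|A| ≥ 2`, a class with `2k + 1 ≥ |A|` has `4k ≥ |A|`, whence the constant `1 / 32`.
  have fin : ∀ k m : ℕ, A.card ≤ 2 * k + 1 → k ^ 2 ≤ 2 * m →
      (1 / 32 : ℝ) * (A.card : ℝ) ^ 2 ≤ m := by
    intro k m h1 h2
    have h3 : A.card ≤ 4 * k := by omega
    have h4 : A.card ^ 2 ≤ 32 * m := by nlinarith [Nat.pow_le_pow_left h3 2]
    have h5 : (A.card : ℝ) ^ 2 ≤ 32 * m := by exact_mod_cast h4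
    linarith
  rcases le_total N.card P.card with h | h
  · exact ⟨a, ha, a', ha', fin P.card _ (by omega)
      (card_sq_le_of_pos hf (Finset.filter_subset _ _) haa hgap
        fun y hy => (Finset.mem_filter.1 hy).2)⟩
  · exact ⟨a', ha', a, ha, fin N.card _ (by omega)
      (card_sq_le_of_neg hf (Finset.filter_subset _ _) haa hgap
        fun y hy => (Finset.mem_filter.1 hy).2)⟩

theorem convex_quadratic_expander :
    ∃ c : ℝ, 0 < c ∧
      ∀ (A : Finset ℝ) (f : ℝ → ℝ), 2 ≤ A.card →
        (StrictConvexOn ℝ Set.univ f ∨ StrictConcaveOn ℝ Set.univ f) →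
        ∃ a ∈ A, ∃ a' ∈ A,
          c * (A.card : ℝ) ^ 2 ≤
            ((fShift f a A + fShift f a' A - fShift f a A).card : ℝ) := by
  refine ⟨1 / 32, by norm_num, fun A f hA hf => ?_⟩
  rcases hf with hf | hf
  · exact convex_case hf hA
  · obtain ⟨a, ha, a', ha', h⟩ := convex_case hf.neg hA
    refine ⟨a, ha, a', ha', ?_⟩
    have hset : fShift (-f) a A + fShift (-f) a' A - fShift (-f) a A
        = -(fShift f a A + fShift f a' A - fShift f a A) := by
      rw [fShift_neg, fShift_neg, sub_eq_add_neg, sub_eq_add_neg, neg_add, neg_add]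
    rwa [hset, Finset.card_neg] at h
end

section
/- There exists an absolute constant c > 0 such that the following holds. Let A = {b₁ < b₂ < … < b_N} be a finite set of N ≥ 2 real numbers, let f : ℝ → ℝ be strictly convex or strictly concave, and let h < h' be real numbers satisfying the spacing condition min{b_{i+1} − b_i : 1 ≤ i ≤ N−1} ≥ h' − h. Then |f(h+A) + f(h'+A) − f(h+A)| ≥ c · N², where the left-hand side is the cardinality of the set {f(h+x) + f(h'+y) − f(h+z) : x, y, z ∈ A}. -/
/-!
Let `f` be strictly convex (the concave case follows by passing to `-f`), and write
`F x = f (h + x)` and `g x = f (h' + x) - f (h + x)`. Every `F y + g x` with `x, y ∈ A` lies in the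
set to be counted. Strict convexity makes `g` strictly increasing, so it vanishes at most once on
`A`, and at least `(N - 1) / 2 ≥ N / 4` points of `A` have `g > 0` or that many have `g < 0`.

Suppose `g > 0` on `P ⊆ A`. For `y < y'` in `P` the spacing condition gives `h' + y ≤ h + y'`, and
`f` is increasing to the right of `h' + y`, so `F y + g y ≤ F y'`. Hence the intervals
`(F y, F y + g y]` for `y ∈ P` are pairwise disjoint, and the interval of `y` contains the distinct
values `F y + g x` for all `x` with `g x ≤ g y`. This produces at least `|P|² / 2` values
(`sq_card_le_of_squeeze`). Where `g < 0` the same argument applies to `-F` and `-g`.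
-/

open Finset Pointwise

/-- The squeezing argument: the values `F y + g x` with `g x ≤ g y` are pairwise distinct, because
they lie in the disjoint intervals `(F y, F y + g y]`. -/
lemma sq_card_le_of_squeeze (P T : Finset ℝ) (F g : ℝ → ℝ)
    (hinj : ∀ x ∈ P, ∀ y ∈ P, g x = g y → x = y)
    (hpos : ∀ x ∈ P, 0 < g x)
    (hgap : ∀ x ∈ P, ∀ y ∈ P, x < y → F x + g x ≤ F y)
    (hT : ∀ x ∈ P, ∀ y ∈ P, F y + g x ∈ T) :
    P.card ^ 2 ≤ 2 * T.card := by
  have hle : ((P ×ˢ P).filter fun p => g p.1 ≤ g p.2).card ≤ T.card := by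
    refine Finset.card_le_card_of_injOn (fun p => F p.2 + g p.1) ?_ ?_
    · intro p hp
      simp only [Finset.coe_filter, Finset.mem_product, Set.mem_ofPred_eq] at hp
      exact hT _ hp.1.1 _ hp.1.2
    · rintro ⟨x, y⟩ hp ⟨x', y'⟩ hp' heq
      simp only [Finset.coe_filter, Finset.mem_product, Set.mem_ofPred_eq] at hp hp' heq
      obtain ⟨⟨hx, hy⟩, hxy⟩ := hp
      obtain ⟨⟨hx', hy'⟩, hxy'⟩ := hp'
      have hyy : y = y' := by
        rcases lt_trichotomy y y' with hlt | heq' | hlt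
        · linarith [hgap y hy y' hy' hlt, hpos x' hx']
        · exact heq'
        · linarith [hgap y' hy' y hy hlt, hpos x hx]
      subst hyy
      rw [hinj x hx x' hx' (by linarith)]
  have hswap : ((P ×ˢ P).filter fun p => ¬ g p.1 ≤ g p.2).card ≤
      ((P ×ˢ P).filter fun p => g p.1 ≤ g p.2).card := by
    refine Finset.card_le_card_of_injOn Prod.swap ?_ Prod.swap_injective.injOn
    intro p hp
    simp only [Finset.coe_filter, Finset.mem_product, Set.mem_ofPred_eq, not_le] at hp
    simp only [Finset.coe_filter, Finset.mem_product, Set.mem_ofPred_eq, Prod.fst_swap,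
      Prod.snd_swap]
    exact ⟨⟨hp.1.2, hp.1.1⟩, hp.2.le⟩
  have hsum := Finset.card_filter_add_card_filter_not (s := P ×ˢ P)
    (fun p : ℝ × ℝ => g p.1 ≤ g p.2)
  rw [Finset.card_product] at hsum
  nlinarith

lemma StrictConvexOn.increment_lt {f : ℝ → ℝ} (hf : StrictConvexOn ℝ Set.univ f) {a b d : ℝ}
    (hd : 0 < d) (hab : a < b) : f (a + d) - f a < f (b + d) - f b := by
  -- `a + d` and `b` are complementary convex combinations of `a` and `b + d`.
  have hL : 0 < b + d - a := by linarith
  have ht : 0 < d / (b + d - a) := by positivity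
  have hs : 0 < (b - a) / (b + d - a) := div_pos (by linarith) hL
  have hst : (b - a) / (b + d - a) + d / (b + d - a) = 1 := by field_simp; ring
  have hne : a ≠ b + d := by linarith
  have h1 := hf.2 (Set.mem_univ a) (Set.mem_univ (b + d)) hne hs ht hst
  have h2 := hf.2 (Set.mem_univ a) (Set.mem_univ (b + d)) hne ht hs (by linarith)
  have e1 : (b - a) / (b + d - a) * a + d / (b + d - a) * (b + d) = a + d := by
    field_simp; ring
  have e2 : d / (b + d - a) * a + (b - a) / (b + d - a) * (b + d) = b := by
    field_simp; ring
  simp only [smul_eq_mul, e1, e2] at h1 h2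
  have e3 : (b - a) / (b + d - a) * f a + d / (b + d - a) * f a = f a := by
    rw [← add_mul, hst, one_mul]
  have e4 : (b - a) / (b + d - a) * f (b + d) + d / (b + d - a) * f (b + d) = f (b + d) := by
    rw [← add_mul, hst, one_mul]
  linarith

/-- The convex case, for any finite `T` containing `f(h+A) + f(h'+A) - f(h+A)`. -/
lemma sq_card_le_of_strictConvexOn (A T : Finset ℝ) (f : ℝ → ℝ) (h h' : ℝ) (hA : 2 ≤ A.card)
    (hf : StrictConvexOn ℝ Set.univ f) (hh : h < h')
    (hsp : ∀ x ∈ A, ∀ y ∈ A, x < y → h' - h ≤ y - x)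
    (hT : ∀ x ∈ A, ∀ y ∈ A, ∀ z ∈ A, f (h + x) + f (h' + y) - f (h + z) ∈ T) :
    A.card ^ 2 ≤ 32 * T.card := by
  set g : ℝ → ℝ := fun x => f (h' + x) - f (h + x) with hg
  have hmono : StrictMono g := by
    intro x y hxy
    have := hf.increment_lt (a := h + x) (b := h + y) (d := h' - h) (by linarith) (by linarith)
    rw [show h + x + (h' - h) = h' + x by ring, show h + y + (h' - h) = h' + y by ring] at this
    exact this
  have hmax : ∀ a b c : ℝ, a ≤ b → b ≤ c → f b ≤ max (f a) (f c) := fun a b c hab hbc =>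
    hf.convexOn.le_max_of_mem_Icc (Set.mem_univ a) (Set.mem_univ c) ⟨hab, hbc⟩
  have hP : (A.filter fun x => 0 < g x).card ^ 2 ≤ 2 * T.card := by
    refine sq_card_le_of_squeeze _ T (fun x => f (h + x)) g
      (fun x _ y _ hxy => hmono.injective hxy) (fun x hx => (Finset.mem_filter.1 hx).2) ?_ ?_
    · intro x hx y hy hxy
      obtain ⟨hx, hgx⟩ := Finset.mem_filter.1 hx
      obtain ⟨hy, -⟩ := Finset.mem_filter.1 hy
      have hs := hsp x hx y hy hxy
      simp only [hg] at hgx ⊢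
      rcases le_max_iff.1 (hmax (h + x) (h' + x) (h + y) (by linarith) (by linarith)) with h1 | h1
        <;> linarith
    · intro x hx y hy
      have := hT y (Finset.mem_filter.1 hy).1 x (Finset.mem_filter.1 hx).1
        x (Finset.mem_filter.1 hx).1
      simpa only [hg, add_sub_assoc] using this
  have hN : (A.filter fun x => g x < 0).card ^ 2 ≤ 2 * T.card := by
    rw [← Finset.card_neg T]
    refine sq_card_le_of_squeeze _ (-T) (fun x => - f (h + x)) (fun x => - g x)
      (fun x _ y _ hxy => hmono.injective (neg_injective hxy))
      (fun x hx => neg_pos.2 (Finset.mem_filter.1 hx).2) ?_ ?_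
    · intro x hx y hy hxy
      obtain ⟨hx, -⟩ := Finset.mem_filter.1 hx
      obtain ⟨hy, hgy⟩ := Finset.mem_filter.1 hy
      have hs := hsp x hx y hy hxy
      simp only [hg] at hgy ⊢
      rcases le_max_iff.1 (hmax (h' + x) (h + y) (h' + y) (by linarith) (by linarith)) with h1 | h1
        <;> linarith
    · intro x hx y hy
      have := hT y (Finset.mem_filter.1 hy).1 x (Finset.mem_filter.1 hx).1
        x (Finset.mem_filter.1 hx).1
      rw [Finset.mem_neg']
      simpa only [hg, add_sub_assoc, neg_add, neg_neg] using this
  have hZ : (A.filter fun x => g x = 0).card ≤ 1 :=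
    Finset.card_le_one.2 fun x hx y hy => hmono.injective
      ((Finset.mem_filter.1 hx).2.trans (Finset.mem_filter.1 hy).2.symm)
  have hcover : A ⊆ (A.filter fun x => 0 < g x) ∪ (A.filter fun x => g x < 0) ∪
      (A.filter fun x => g x = 0) := by
    intro x hx
    simp only [Finset.mem_union, Finset.mem_filter, hx, true_and]
    rcases lt_trichotomy (g x) 0 with h1 | h1 | h1 <;> simp [h1]
  have hcard := (Finset.card_le_card hcover).trans
    ((Finset.card_union_le _ _).trans (Nat.add_le_add_right (Finset.card_union_le _ _) _))
  generalize (A.filter fun x => 0 < g x).card = p at *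
  generalize (A.filter fun x => g x < 0).card = n at *
  rcases le_total p n with hpn | hpn
  · have : A.card ≤ 4 * n := by omega
    nlinarith
  · have : A.card ≤ 4 * p := by omega
    nlinarith

theorem convex_quadratic_expander_spacing :
    ∃ c : ℝ, 0 < c ∧
      ∀ (A : Finset ℝ) (f : ℝ → ℝ) (h h' : ℝ), 2 ≤ A.card →
        (StrictConvexOn ℝ Set.univ f ∨ StrictConcaveOn ℝ Set.univ f) →
        h < h' →
        (∀ x ∈ A, ∀ y ∈ A, x < y → h' - h ≤ y - x) →
        c * (A.card : ℝ) ^ 2 ≤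
          ((fShift f h A + fShift f h' A - fShift f h A).card : ℝ) := by
  refine ⟨1 / 32, by norm_num, ?_⟩
  intro A f h h' hA hf hh hsp
  have hmem : ∀ x ∈ A, ∀ y ∈ A, ∀ z ∈ A, f (h + x) + f (h' + y) - f (h + z) ∈
      fShift f h A + fShift f h' A - fShift f h A := fun x hx y hy z hz =>
    Finset.sub_mem_sub (Finset.add_mem_add (Finset.mem_image_of_mem _ hx)
      (Finset.mem_image_of_mem _ hy)) (Finset.mem_image_of_mem _ hz)
  have key : A.card ^ 2 ≤ 32 * (fShift f h A + fShift f h' A - fShift f h A).card := by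
    rcases hf with hf | hf
    · exact sq_card_le_of_strictConvexOn A _ f h h' hA hf hh hsp hmem
    · rw [← Finset.card_neg (fShift f h A + fShift f h' A - fShift f h A)]
      refine sq_card_le_of_strictConvexOn A _ (-f) h h' hA hf.neg hh hsp ?_
      intro x hx y hy z hz
      rw [Finset.mem_neg']
      convert hmem x hx y hy z hz using 1
      simp only [Pi.neg_apply]
      ring
  have key' : (A.card : ℝ) ^ 2 ≤
      32 * ((fShift f h A + fShift f h' A - fShift f h A).card : ℝ) := by exact_mod_cast key
  linarith
end
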